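/- For $\nu,\eta,\lambda>0$ the Matérn kernel of order $\nu$ on $\mathbb{R}^n$, with amplitude $\eta$ and lengthscale $\lambda$, is $$k_\nu(x,y)=\frac{\eta}{\Gamma(\nu)2^{\nu-1}}\Big(\frac{\sqrt{2\nu}\,\|x-y\|_2}{\lambda}\Big)^{\nu}K_\nu\Big(\frac{\sqrt{2\nu}\,\|x-y\|_2}{\lambda}\Big)\quad(x\neq y),\qquad k_\nu(x,x)=\eta,$$ where $K_\nu$ is the modified Bessel function of the second kind; the squared-exponential kernel is $k_{\mathrm{SE}}(x,y)=\eta\exp(-\|x-y\|_2^2/\lambda^2)$. Suppose: (i) the base space $U\subset\mathbb{R}^s$ is bounded, open, and convex; the data space $X$ is either all of $\mathbb{R}^d$ or a bounded, open, and convex subset of $\mathbb{R}^d$; the base probability measure $\mathbb{U}$ on $U$ has a density $f_{\mathbb{U}}:U\to[C_{\mathbb{U}},C'_{\mathbb{U}}]$ with $C_{\mathbb{U}},C'_{\mathbb{U}}>0$; and the pushforward $\mathbb{P}_\theta$ of $\mathbb{U}$ under a map $G_\theta:U\to X$ has a density (with respect to Lebesgue measure on $X$) that is bounded above; (ii) for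 some integer $l>s/2$, every partial derivative $\partial^\alpha G_{\theta,j}$ with $\alpha\in\mathbb{N}^s$, $|\alpha|\le l$, $j\in\{1,\dots,d\}$, exists on $U$ and is bounded; (iii) either $k$ is a Matérn kernel on $X$ of order $\nu_k$ with $\lfloor\nu_k+d/2\rfloor>s/2$, and $c$ is a Matérn kernel on $U$ of order $0<\nu_c\le\min(\lfloor\nu_k+d/2\rfloor,\,l)-s/2$; or $k$ is a squared-exponential kernel on $X$, and $c$ is a Matérn kernel on $U$ of order $0<\nu_c\le l-s/2$. Then for every $x\in X$ the function $u\mapsto k(x,G_\theta(u))$ on $U$ belongs to the reproducing kernel Hilbert space $\mathcal{H}_c$ of $c$. -/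

import Mathlib

open MeasureTheory

/-- The modified Bessel function of the second kind `K_ν`, for an argument `z > 0`, by its standard
integral representation `K_ν(z) = ∫_0^∞ exp(-z cosh t) cosh(ν t) dt`. -/
noncomputable def besselK (ν z : ℝ) : ℝ :=
  ∫ t in Set.Ioi (0 : ℝ), Real.exp (-(z * Real.cosh t)) * Real.cosh (ν * t)

open scoped Classical in
/-- The Matérn kernel of order `ν > 0` with amplitude `η > 0` and lengthscale `ℓ > 0`. On the
diagonal, where the formula reads `0 * ∞`, it is given its limit `η`. -/
noncomputable def maternKernel {n : ℕ} (ν η ℓ : ℝ) (x y : EuclideanSpace ℝ (Fin n)) : ℝ :=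
  if x = y then η
  else η / (Real.Gamma ν * (2 : ℝ) ^ (ν - 1)) *
    (Real.sqrt (2 * ν) * ‖x - y‖ / ℓ) ^ ν * besselK ν (Real.sqrt (2 * ν) * ‖x - y‖ / ℓ)

/-- The squared-exponential kernel with amplitude `η > 0` and lengthscale `ℓ > 0`. -/
noncomputable def seKernel {n : ℕ} (η ℓ : ℝ) (x y : EuclideanSpace ℝ (Fin n)) : ℝ :=
  η * Real.exp (-‖x - y‖ ^ 2 / ℓ ^ 2)

/-- `f ∈ H_c`: the function `f` belongs to the reproducing kernel Hilbert space of `c`, that is, to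
the Hilbert space of functions on `S` with continuous point evaluations whose reproducing kernel
is `c` (as a set of functions this space is determined by `c`). -/
def MemRKHS {S : Type} (c : S → S → ℝ) (f : S → ℝ) : Prop :=
  ∃ (H : Type) (_ : NormedAddCommGroup H) (_ : InnerProductSpace ℝ H) (_ : CompleteSpace H)
    (_ : RKHS ℝ H S ℝ),
    (∀ x y : S, RKHS.kernel H x y (1 : ℝ) = c x y) ∧ ∃ h : H, (h : S → ℝ) = f

/-- For every multi-index `α` with `|α| ≤ l`, the (classical, pointwise) partial derivative
`∂^α f = ∂_1^{α_1} ⋯ ∂_s^{α_s} f` exists everywhere on the open set `U` and is bounded on `U`.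
Here `D α` is `∂^α f`; the clause `∀ j < i, α j = 0` says that `∂_i` may be applied to `∂^α f`
without departing from the order of differentiation `∂_1^{α_1} ⋯ ∂_s^{α_s}`. -/
def HasBoundedPartials {s : ℕ} (U : Set (EuclideanSpace ℝ (Fin s))) (l : ℕ)
    (f : EuclideanSpace ℝ (Fin s) → ℝ) : Prop :=
  ∃ D : (Fin s → ℕ) → EuclideanSpace ℝ (Fin s) → ℝ,
    (∀ u ∈ U, D 0 u = f u) ∧
    (∀ (α : Fin s → ℕ) (i : Fin s), ∑ j, α j < l → (∀ j < i, α j = 0) →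
      ∀ u ∈ U, HasLineDerivAt ℝ (D α) (D (α + Pi.single i 1) u) u (EuclideanSpace.single i 1)) ∧
    (∀ α : Fin s → ℕ, ∑ j, α j ≤ l → ∃ C : ℝ, ∀ u ∈ U, |D α u| ≤ C)

section FeatureMap

variable {S F : Type} [NormedAddCommGroup F] [InnerProductSpace ℝ F] [CompleteSpace F]

/-- If `c` is the Gram kernel of a feature map `Φ`, then every function dominated by the features
on finite linear combinations lies in the reproducing kernel Hilbert space of `c`. -/
theorem memRKHS_of_feature (Φ : S → F) (c : S → S → ℝ)
    (hc : ∀ x y, c x y = inner ℝ (Φ x) (Φ y)) (f : S → ℝ) (M : ℝ)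
    (hM : ∀ a : S →₀ ℝ, |a.sum fun x r => r * f x| ≤ M * ‖a.sum fun x r => r • Φ x‖) :
    MemRKHS c f := by
  classical
  set Ψ : (S →₀ ℝ) →ₗ[ℝ] F := Finsupp.linearCombination ℝ Φ with hΨ
  set L : (S →₀ ℝ) →ₗ[ℝ] ℝ := Finsupp.linearCombination ℝ f with hL
  have hM' : ∀ a, |L a| ≤ M * ‖Ψ a‖ := hM
  obtain ⟨σ, hσ⟩ := Ψ.rangeRestrict.exists_rightInverse_of_surjective
    (LinearMap.range_eq_top.2 Ψ.surjective_rangeRestrict)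
  have hσ' : ∀ y : LinearMap.range Ψ, Ψ (σ y) = y := fun y =>
    congrArg Subtype.val (LinearMap.congr_fun hσ y)
  have hbound : ∀ y : LinearMap.range Ψ, ‖(L ∘ₗ σ) y‖ ≤ M * ‖y‖ := fun y => by
    have := hM' (σ y)
    rw [hσ'] at this
    simpa using this
  obtain ⟨g, hg, -⟩ := exists_extension_norm_eq (𝕜 := ℝ) (LinearMap.range Ψ)
    ((L ∘ₗ σ).mkContinuous M hbound)
  set h : F := (InnerProductSpace.toDual ℝ F).symm g with hh
  have hinner : ∀ x, inner ℝ h (Φ x) = f x := by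
    intro x
    rw [hh, InnerProductSpace.toDual_symm_apply]
    have hx : Ψ (Finsupp.single x 1) = Φ x := by simp [hΨ]
    have h1 := hg ⟨Ψ (Finsupp.single x 1), LinearMap.mem_range_self _ _⟩
    simp only [LinearMap.mkContinuous_apply, LinearMap.comp_apply] at h1
    rw [← hx, h1]
    have h2 := hM' (σ ⟨Ψ (Finsupp.single x 1), LinearMap.mem_range_self _ _⟩ - Finsupp.single x 1)
    rw [map_sub, map_sub, hσ', sub_self, norm_zero, mul_zero] at h2
    have h3 := sub_eq_zero.1 (abs_nonpos_iff.1 h2)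
    rw [h3]
    simp [hL]
  set V : Submodule ℝ F := (Submodule.span ℝ (Set.range Φ)).topologicalClosure with hV
  have hΦV : ∀ x, Φ x ∈ V := fun x =>
    Submodule.le_topologicalClosure _ (Submodule.subset_span ⟨x, rfl⟩)
  have : CompleteSpace V := (Submodule.isClosed_topologicalClosure _).completeSpace_coe
  let T : V →L[ℝ] (S → ℝ) :=
    ContinuousLinearMap.pi fun x => (innerSL ℝ (Φ x)).comp V.subtypeL
  have hT : ∀ v x, T v x = inner ℝ (Φ x) (v : F) := fun v x => rfl
  have hTinj : Function.Injective T := by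
    refine (injective_iff_map_eq_zero T).2 fun v hv => ?_
    have h1 : ∀ w ∈ V, inner ℝ w (v : F) = 0 := by
      have hcl : IsClosed {w : F | inner ℝ w (v : F) = 0} :=
        isClosed_eq (by fun_prop) continuous_const
      intro w hw
      refine (closure_minimal (fun w hw => ?_) hcl) hw
      refine Submodule.span_induction (p := fun w _ => inner ℝ w (v : F) = 0) ?_ ?_ ?_ ?_ hw
      · rintro _ ⟨x, rfl⟩
        rw [← hT, hv]; rfl
      · simp
      · intro a b _ _ ha hb
        rw [inner_add_left, ha, hb, add_zero]
      · intro r a _ ha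
        rw [inner_smul_left, ha, mul_zero]
    exact Subtype.ext (inner_self_eq_zero.1 (h1 v v.2))
  let R : RKHS ℝ V S ℝ := ⟨T, hTinj⟩
  have hcoe : ∀ (v : V) x, v x = inner ℝ (Φ x) (v : F) := fun v x => rfl
  have hker : ∀ x, RKHS.kerFun V x (1 : ℝ) = ⟨Φ x, hΦV x⟩ := by
    intro x
    refine ext_inner_right ℝ fun v => ?_
    rw [RKHS.kerFun_inner, hcoe]
    simp
  refine ⟨V, inferInstance, inferInstance, inferInstance, R, fun x y => ?_,
    V.orthogonalProjectionOnto h, ?_⟩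
  · rw [← RKHS.kerFun_apply, hker, hcoe, hc]
  · funext x
    rw [hcoe, ← hinner x, real_inner_comm _ h]
    exact V.inner_orthogonalProjectionOnto_eq_of_mem_left ⟨Φ x, hΦV x⟩ h

end FeatureMap

section Matern

open Real Set

/-- The Gamma-type weight times an inverse Gaussian factor is integrable on the half line. -/
theorem integrableOn_gamma_mul_exp_neg_div {ν : ℝ} (hν : 0 < ν) {b : ℝ} (hb : 0 ≤ b) :
    IntegrableOn (fun τ : ℝ => τ ^ (ν - 1) * exp (-τ) * exp (-(b / τ))) (Ioi 0) := by
  refine (Real.GammaIntegral_convergent hν).mono' (by fun_prop) ?_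
  filter_upwards [ae_restrict_mem measurableSet_Ioi] with τ hτ
  have hτ' : (0 : ℝ) < τ := hτ
  rw [norm_of_nonneg (by positivity), mul_comm (τ ^ (ν - 1))]
  exact mul_le_of_le_one_right (by positivity)
    (exp_le_one_iff.2 (neg_nonpos.2 (by positivity)))

/-- The modified Bessel function as a Gamma mixture. -/
theorem rpow_mul_besselK {ν z : ℝ} (hν : 0 < ν) (hz : 0 < z) :
    z ^ ν * besselK ν z =
      2 ^ (ν - 1) * ∫ τ in Ioi (0 : ℝ), τ ^ (ν - 1) * exp (-τ) * exp (-(z ^ 2 / 4 / τ)) := by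
  set g : ℝ → ℝ := fun τ => τ ^ (ν - 1) * exp (-τ) * exp (-(z ^ 2 / 4 / τ)) with hg
  set φ : ℝ → ℝ := fun t => z / 2 * exp t with hφ
  have hφd : ∀ t ∈ (univ : Set ℝ), HasDerivWithinAt φ (φ t) univ t := fun t _ =>
    ((Real.hasDerivAt_exp t).const_mul (z / 2)).hasDerivWithinAt
  have hφinj : InjOn φ univ := by
    intro a _ b _ hab
    exact exp_injective (mul_left_cancel₀ (by positivity) hab)
  have himg : φ '' univ = Ioi 0 := by
    ext y
    simp only [image_univ, mem_range, mem_Ioi]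
    constructor
    · rintro ⟨t, rfl⟩; simp only [hφ]; positivity
    · intro hy
      refine ⟨log (y / (z / 2)), ?_⟩
      simp only [hφ]
      rw [exp_log (by positivity)]
      field_simp
  set F : ℝ → ℝ := fun t => exp (ν * t) * exp (-(z * cosh t)) with hF
  have hgF : ∀ t, |φ t| • g (φ t) = (z / 2) ^ ν * F t := by
    intro t
    have hpos : 0 < φ t := by simp only [hφ]; positivity
    have h1 : φ t * φ t ^ (ν - 1) = (z / 2) ^ ν * exp (ν * t) := by
      rw [← rpow_one_add' hpos.le (by linarith), add_sub_cancel, hφ]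
      simp only
      rw [mul_rpow (by positivity) (by positivity), ← exp_mul, mul_comm t]
    have h2 : exp (-φ t) * exp (-(z ^ 2 / 4 / φ t)) = exp (-(z * cosh t)) := by
      rw [← exp_add]
      congr 1
      simp only [hφ]
      rw [cosh_eq, exp_neg]
      field_simp
      ring
    rw [abs_of_pos hpos, smul_eq_mul]
    simp only [hg, hF]
    rw [← mul_assoc, ← mul_assoc, h1, mul_assoc _ (exp (-φ t)), h2]
    ring
  have hint := integral_image_eq_integral_abs_deriv_smul MeasurableSet.univ hφd hφinj g
  have hiff := (integrableOn_image_iff_integrableOn_abs_deriv_smul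
    MeasurableSet.univ hφd hφinj g).1
      (by rw [himg]; exact integrableOn_gamma_mul_exp_neg_div hν (by positivity))
  rw [himg] at hint
  simp only [hgF, integrableOn_univ, setIntegral_univ] at hint hiff
  have hz2 : (z / 2) ^ ν ≠ 0 := by positivity
  have hFi : Integrable F := by
    have := hiff.const_mul (((z / 2) ^ ν)⁻¹)
    simpa [inv_mul_cancel_left₀ hz2] using this
  have hsplit : ∫ t, F t = 2 * besselK ν z := by
    rw [← intervalIntegral.integral_Iic_add_Ioi (b := 0) hFi.integrableOn hFi.integrableOn]
    have hneg := integral_comp_neg_Ioi (0 : ℝ) F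
    rw [neg_zero] at hneg
    rw [← hneg, ← integral_add _ hFi.integrableOn, besselK, ← integral_const_mul]
    · refine integral_congr_ae (Filter.Eventually.of_forall fun t => ?_)
      simp only [hF]
      rw [cosh_neg, cosh_eq (ν * t), mul_neg]
      ring
    · exact (hFi.comp_neg).integrableOn
  rw [hint, integral_const_mul, hsplit, div_rpow hz.le (by norm_num), rpow_sub (by norm_num),
    rpow_one]
  field_simp

/-- The Matérn kernel is a Gamma mixture of Gaussian kernels. -/
theorem maternKernel_eq_integral {n : ℕ} {ν η ℓ : ℝ} (hν : 0 < ν) (hℓ : 0 < ℓ)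
    (x y : EuclideanSpace ℝ (Fin n)) :
    maternKernel ν η ℓ x y = η / Gamma ν * ∫ τ in Ioi (0 : ℝ),
      τ ^ (ν - 1) * exp (-τ) * exp (-(ν / (2 * ℓ ^ 2) * ‖x - y‖ ^ 2 / τ)) := by
  have hΓ := Gamma_pos_of_pos hν
  rw [maternKernel]
  split_ifs with hxy
  · have : ∀ τ : ℝ, τ ^ (ν - 1) * exp (-τ) * exp (-(ν / (2 * ℓ ^ 2) * ‖x - y‖ ^ 2 / τ)) =
        exp (-τ) * τ ^ (ν - 1) := fun τ => by simp [hxy, mul_comm]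
    simp only [this]
    rw [← Gamma_eq_integral hν]
    field_simp
  · have hr : 0 < ‖x - y‖ := norm_pos_iff.2 (sub_ne_zero.2 hxy)
    have hz : 0 < √(2 * ν) * ‖x - y‖ / ℓ := by positivity
    rw [mul_assoc, rpow_mul_besselK hν hz]
    have : (√(2 * ν) * ‖x - y‖ / ℓ) ^ 2 / 4 = ν / (2 * ℓ ^ 2) * ‖x - y‖ ^ 2 := by
      rw [div_pow, mul_pow, sq_sqrt (by positivity)]
      field_simp
      ring
    rw [this]
    generalize (∫ τ in Ioi (0 : ℝ),
      τ ^ (ν - 1) * exp (-τ) * exp (-(ν / (2 * ℓ ^ 2) * ‖x - y‖ ^ 2 / τ))) = J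
    field_simp

open Complex in
/-- The spectral representation of the Matérn kernel. -/
theorem maternKernel_eq_integral_spectral (n : ℕ) {ν η ℓ : ℝ} (hν : 0 < ν) (hη : 0 < η)
    (hℓ : 0 < ℓ) :
    ∃ A b : ℝ, 0 < A ∧ 0 < b ∧
      Integrable (fun ξ : EuclideanSpace ℝ (Fin n) =>
        (1 + b * ‖ξ‖ ^ 2) ^ (-(ν + (n : ℝ) / 2))) ∧
      ∀ x y : EuclideanSpace ℝ (Fin n), (maternKernel ν η ℓ x y : ℂ) =
        ∫ ξ : EuclideanSpace ℝ (Fin n), cexp (↑(-2 * π * inner ℝ ξ (x - y)) * I) *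
          ((A * (1 + b * ‖ξ‖ ^ 2) ^ (-(ν + (n : ℝ) / 2)) : ℝ) : ℂ) := by
  set a : ℝ := ν / (2 * ℓ ^ 2) with ha
  have hapos : 0 < a := by positivity
  set p : ℝ := ν + (n : ℝ) / 2 with hp
  have hppos : 0 < p := by positivity
  set b : ℝ := π ^ 2 / a with hb
  have hbpos : 0 < b := by positivity
  have hΓ := Real.Gamma_pos_of_pos hν
  set B : ℝ := (π / a) ^ ((n : ℝ) / 2) with hB
  have hBpos : 0 < B := by positivity
  -- the joint weight
  set W : ℝ → EuclideanSpace ℝ (Fin n) → ℝ := fun τ ξ =>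
    B * τ ^ (p - 1) * Real.exp (-((1 + b * ‖ξ‖ ^ 2) * τ)) with hW
  have hWeq : ∀ τ ∈ Ioi (0 : ℝ), ∀ ξ, W τ ξ = τ ^ (ν - 1) * Real.exp (-τ) *
      ((π * τ / a) ^ ((n : ℝ) / 2) * Real.exp (-(b * τ) * ‖ξ‖ ^ 2)) := by
    intro τ hτ ξ
    have hτ : 0 < τ := hτ
    have h1 : (π * τ / a) ^ ((n : ℝ) / 2) = B * τ ^ ((n : ℝ) / 2) := by
      rw [hB, ← Real.mul_rpow (by positivity) hτ.le]; congr 1; ring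
    have h2 : τ ^ (p - 1) = τ ^ (ν - 1) * τ ^ ((n : ℝ) / 2) := by
      rw [← Real.rpow_add hτ]; congr 1; rw [hp]; ring
    have h3 : Real.exp (-((1 + b * ‖ξ‖ ^ 2) * τ)) =
        Real.exp (-τ) * Real.exp (-(b * τ) * ‖ξ‖ ^ 2) := by
      rw [← Real.exp_add]; congr 1; ring
    simp only [hW]
    rw [h1, h2, h3]; ring
  have hgauss : ∀ τ ∈ Ioi (0 : ℝ), (π * τ / a) ^ ((n : ℝ) / 2) *
      ∫ ξ : EuclideanSpace ℝ (Fin n), Real.exp (-(b * τ) * ‖ξ‖ ^ 2) = 1 := by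
    intro τ hτ
    have hτ : 0 < τ := hτ
    rw [GaussianFourier.integral_rexp_neg_mul_sq_norm (by positivity), finrank_euclideanSpace,
      Fintype.card_fin, ← Real.mul_rpow (by positivity) (by positivity)]
    have : π * τ / a * (π / (b * τ)) = 1 := by
      rw [hb]; field_simp
    rw [this, Real.one_rpow]
  have hgaussi : ∀ τ ∈ Ioi (0 : ℝ), Integrable
      (fun ξ : EuclideanSpace ℝ (Fin n) => Real.exp (-(b * τ) * ‖ξ‖ ^ 2)) := by
    intro τ hτ
    have hτ : 0 < τ := hτ
    by_contra hcon
    have := hgauss τ hτ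
    rw [integral_undef hcon, mul_zero] at this
    exact zero_ne_one this
  set e : EuclideanSpace ℝ (Fin n) → EuclideanSpace ℝ (Fin n) → ℂ := fun r ξ =>
    cexp (↑(-2 * π * inner ℝ ξ r) * I) with he
  have hen : ∀ r ξ, ‖e r ξ‖ = 1 := fun r ξ => norm_exp_ofReal_mul_I _
  have hjoint : ∀ r, Integrable (Function.uncurry fun τ ξ => e r ξ * (W τ ξ : ℂ))
      ((volume.restrict (Ioi (0 : ℝ))).prod volume) := by
    intro r
    have hmeas : AEStronglyMeasurable (Function.uncurry fun τ ξ => e r ξ * (W τ ξ : ℂ))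
        ((volume.restrict (Ioi (0 : ℝ))).prod volume) := by
      apply Measurable.aestronglyMeasurable
      simp only [he, hW, Function.uncurry_def]
      fun_prop
    rw [integrable_prod_iff hmeas]
    constructor
    · filter_upwards [ae_restrict_mem measurableSet_Ioi] with τ hτ
      have h1 : Integrable (fun ξ => (W τ ξ : ℂ)) := by
        simp only [hWeq τ hτ]
        exact (((hgaussi τ hτ).const_mul _).const_mul _).ofReal
      refine h1.bdd_mul (c := 1) ?_ (Filter.Eventually.of_forall fun ξ => (hen r ξ).le)
      apply Measurable.aestronglyMeasurable
      simp only [he]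
      fun_prop
    · refine (Real.GammaIntegral_convergent hν).congr ?_
      filter_upwards [ae_restrict_mem measurableSet_Ioi] with τ hτ
      have hτ' : 0 < τ := hτ
      have hnn : ∀ ξ, 0 ≤ W τ ξ := fun ξ => by simp only [hW]; positivity
      have : ∀ ξ, ‖Function.uncurry (fun τ ξ => e r ξ * (W τ ξ : ℂ)) (τ, ξ)‖ = W τ ξ := by
        intro ξ
        simp only [Function.uncurry_apply_pair, norm_mul, hen, one_mul, norm_real]
        exact Real.norm_of_nonneg (hnn ξ)
      simp only [this, hWeq τ hτ]
      rw [integral_const_mul, integral_const_mul, hgauss τ hτ]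
      ring
  have hinner : ∀ ξ : EuclideanSpace ℝ (Fin n), ∫ τ in Ioi (0 : ℝ), W τ ξ =
      B * Real.Gamma p * (1 + b * ‖ξ‖ ^ 2) ^ (-p) := by
    intro ξ
    have hpos : 0 < 1 + b * ‖ξ‖ ^ 2 := by positivity
    simp only [hW, mul_assoc]
    rw [integral_const_mul, Real.integral_rpow_mul_exp_neg_mul_Ioi hppos hpos, one_div,
      Real.inv_rpow hpos.le, Real.rpow_neg hpos.le]
    ring
  have hΓp := Real.Gamma_pos_of_pos hppos
  refine ⟨η / Real.Gamma ν * (B * Real.Gamma p), b, by positivity, hbpos, ?_, fun x y => ?_⟩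
  · have h0 := (hjoint 0).integral_prod_right
    have h1 : ∀ ξ : EuclideanSpace ℝ (Fin n),
        ∫ τ in Ioi (0 : ℝ), Function.uncurry (fun τ ξ => e 0 ξ * (W τ ξ : ℂ)) (τ, ξ) =
          ((B * Real.Gamma p * (1 + b * ‖ξ‖ ^ 2) ^ (-p) : ℝ) : ℂ) := by
      intro ξ
      rw [← hinner ξ, ← integral_complex_ofReal]
      simp [he, Function.uncurry]
    simp only [h1] at h0
    have h2 := (h0.re).const_mul ((B * Real.Gamma p)⁻¹)
    refine h2.congr (Filter.Eventually.of_forall fun ξ => ?_)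
    simp only [RCLike.re_eq_complex_re, ofReal_re]
    field_simp
  · have hτ : ∀ τ ∈ Ioi (0 : ℝ), ((τ ^ (ν - 1) * Real.exp (-τ) *
        Real.exp (-(a * ‖x - y‖ ^ 2 / τ)) : ℝ) : ℂ) = ∫ ξ, e (x - y) ξ * (W τ ξ : ℂ) := by
      intro τ hτ
      have hτ0 : 0 < τ := hτ
      have hre : 0 < ((b * τ : ℝ) : ℂ).re := by rw [ofReal_re]; positivity
      have h1 := fourier_gaussian_innerProductSpace hre (x - y)
      rw [Real.fourier_eq'] at h1
      have h2 : ∀ ξ, e (x - y) ξ * (W τ ξ : ℂ) = ((τ ^ (ν - 1) * Real.exp (-τ) *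
          (π * τ / a) ^ ((n : ℝ) / 2) : ℝ) : ℂ) *
          (cexp (↑(-2 * π * inner ℝ ξ (x - y)) * I) • cexp (-((b * τ : ℝ) : ℂ) * ↑‖ξ‖ ^ 2)) := by
        intro ξ
        rw [hWeq τ hτ]
        simp only [he, smul_eq_mul]
        push_cast
        ring
      simp only [h2]
      rw [integral_const_mul, h1, finrank_euclideanSpace, Fintype.card_fin]
      have h3 : ((π : ℂ) / ((b * τ : ℝ) : ℂ)) ^ ((n : ℂ) / 2) =
          (((π / (b * τ)) ^ ((n : ℝ) / 2) : ℝ) : ℂ) := by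
        rw [ofReal_cpow (by positivity)]
        push_cast
        rfl
      have h4 : cexp (-(π : ℂ) ^ 2 * (‖x - y‖ : ℂ) ^ 2 / ((b * τ : ℝ) : ℂ)) =
          ((Real.exp (-(a * ‖x - y‖ ^ 2 / τ)) : ℝ) : ℂ) := by
        rw [ofReal_exp]
        congr 1
        have : -(a * ‖x - y‖ ^ 2 / τ) = -π ^ 2 * ‖x - y‖ ^ 2 / (b * τ) := by
          rw [hb]; field_simp
        rw [this]
        push_cast
        rfl
      rw [h3, h4, ← ofReal_mul, ← ofReal_mul]
      congr 1
      have h5 : (π * τ / a) ^ ((n : ℝ) / 2) * (π / (b * τ)) ^ ((n : ℝ) / 2) = 1 := by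
        rw [← Real.mul_rpow (by positivity) (by positivity)]
        have : π * τ / a * (π / (b * τ)) = 1 := by
          rw [hb]; field_simp
        rw [this, Real.one_rpow]
      linear_combination (-(τ ^ (ν - 1) * Real.exp (-τ) *
        Real.exp (-(a * ‖x - y‖ ^ 2 / τ)))) * h5
    rw [maternKernel_eq_integral hν hℓ, ofReal_mul, ← integral_complex_ofReal,
      setIntegral_congr_fun measurableSet_Ioi hτ, integral_integral_swap (hjoint (x - y)),
      ← integral_const_mul]
    refine integral_congr_ae (Filter.Eventually.of_forall fun ξ => ?_)
    change _ = e (x - y) ξ * _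
    simp only
    rw [integral_const_mul, integral_complex_ofReal, hinner]
    generalize e (x - y) ξ = z
    push_cast
    ring

end Matern

section Sobolev

set_option linter.unusedSectionVars false
set_option linter.unusedVariables false

open Set Function Metric Filter
open scoped Topology ENNReal ContDiff Convolution

variable {E : Type*} [NormedAddCommGroup E] [InnerProductSpace ℝ E] [FiniteDimensional ℝ E]
  [MeasurableSpace E] [BorelSpace E]

/-- `h` is the weak derivative of `f` in the direction `v` on the open set `Ω`. -/
def HasWeakLineDeriv (Ω : Set E) (v : E) (f h : E → ℝ) : Prop :=
  ∀ ψ : E → ℝ, ContDiff ℝ ∞ ψ → HasCompactSupport ψ → tsupport ψ ⊆ Ω →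
    ∫ x, f x * fderiv ℝ ψ x v = -∫ x, h x * ψ x

/-- Functions vanishing off `K` whose weak derivatives on `Ω` up to order `n` are `p`-integrable
(and can be chosen to vanish off `K`). -/
def SobolevOn (p : ℝ≥0∞) (K Ω : Set E) : ℕ → (E → ℝ) → Prop
  | 0, f => MemLp f p volume ∧ support f ⊆ K
  | n + 1, f => (MemLp f p volume ∧ support f ⊆ K) ∧
      ∀ v, ∃ h, HasWeakLineDeriv Ω v f h ∧ SobolevOn p K Ω n h

/-- Convolution of a function with a scalar kernel. -/
noncomputable def mollify (κ f : E → ℝ) (x : E) : ℝ := ∫ y, κ (x - y) * f y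

theorem mollify_eq_convolution (κ f : E → ℝ) :
    mollify κ f = κ ⋆[ContinuousLinearMap.lsmul ℝ ℝ, volume] f := by
  funext x
  rw [convolution_eq_swap]
  rfl

theorem contDiff_mollify {κ f : E → ℝ} (hκ : ContDiff ℝ ∞ κ) (hκc : HasCompactSupport κ)
    (hf : LocallyIntegrable f) : ContDiff ℝ ∞ (mollify κ f) := by
  rw [mollify_eq_convolution]
  exact hκc.contDiff_convolution_left _ hκ hf

theorem hasCompactSupport_comp_const_sub {κ : E → ℝ} (hκc : HasCompactSupport κ) (x : E) :
    HasCompactSupport fun y => κ (x - y) :=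
  hκc.comp_homeomorph (Homeomorph.subLeft x)

/-- Mollification commutes with weak differentiation away from the boundary. -/
theorem fderiv_mollify {Ω : Set E} {v : E} {κ f h : E → ℝ} (hκ : ContDiff ℝ ∞ κ)
    (hκc : HasCompactSupport κ) (hf : LocallyIntegrable f) (hw : HasWeakLineDeriv Ω v f h)
    {x : E} (hx : tsupport (fun y => κ (x - y)) ⊆ Ω) :
    fderiv ℝ (mollify κ f) x v = mollify κ h x := by
  have hd : HasFDerivAt (mollify κ f)
      ((fderiv ℝ κ ⋆[(ContinuousLinearMap.lsmul ℝ ℝ).precompL E, volume] f) x) x := by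
    rw [mollify_eq_convolution]
    exact hκc.hasFDerivAt_convolution_left _ (hκ.of_le (by norm_cast)) hf x
  have hcd : Continuous (fderiv ℝ κ) := hκ.continuous_fderiv (by simp)
  have h1 : ((fderiv ℝ κ ⋆[(ContinuousLinearMap.lsmul ℝ ℝ).precompL E, volume] f) x) v =
      ∫ y, fderiv ℝ κ (x - y) v * f y := by
    rw [convolution_eq_swap, ContinuousLinearMap.integral_apply]
    · rfl
    · exact ((hκc.fderiv ℝ).convolutionExists_left _ hcd hf x).integrable_swap
  have h2 : ∀ y, fderiv ℝ (fun y => κ (x - y)) y v = -fderiv ℝ κ (x - y) v := by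
    intro y
    have : HasFDerivAt (fun y => κ (x - y))
        ((fderiv ℝ κ (x - y)).comp (-ContinuousLinearMap.id ℝ E)) y :=
      ((hκ.differentiable (by simp)) (x - y)).hasFDerivAt.comp y
        ((hasFDerivAt_id y).const_sub x)
    rw [this.fderiv]
    simp
  have h3 := hw (fun y => κ (x - y)) (hκ.comp (contDiff_const.sub contDiff_id))
    (hasCompactSupport_comp_const_sub hκc x) hx
  rw [hd.fderiv, h1]
  simp only [h2, mul_neg, integral_neg, neg_inj] at h3
  rw [mollify]
  simpa only [mul_comm] using h3

theorem integrable_mul_test {f ψ : E → ℝ} (hf : LocallyIntegrable f) (hψ : Continuous ψ)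
    (hc : HasCompactSupport ψ) : Integrable fun x => f x * ψ x := by
  simpa [mul_comm] using hf.integrable_smul_left_of_hasCompactSupport hψ hc

theorem continuous_fderiv_test {ψ : E → ℝ} (hψ : ContDiff ℝ ∞ ψ) (v : E) :
    Continuous fun x => fderiv ℝ ψ x v :=
  (hψ.continuous_fderiv (by simp)).clm_apply continuous_const

theorem contDiff_fderiv_test {ψ : E → ℝ} (hψ : ContDiff ℝ ∞ ψ) (v : E) :
    ContDiff ℝ ∞ fun x => fderiv ℝ ψ x v :=
  (hψ.fderiv_right (by simp)).clm_apply contDiff_const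

theorem tsupport_fderiv_apply_subset' {ψ : E → ℝ} (v : E) :
    tsupport (fun x => fderiv ℝ ψ x v) ⊆ tsupport ψ :=
  (closure_mono fun x hx => by
    intro h0
    exact hx (by simp [h0])).trans (tsupport_fderiv_subset ℝ)

namespace HasWeakLineDeriv

variable {Ω : Set E} {v : E} {f g h k : E → ℝ}

theorem add (hf : LocallyIntegrable f) (hg : LocallyIntegrable g) (hh : LocallyIntegrable h)
    (hk : LocallyIntegrable k) (h1 : HasWeakLineDeriv Ω v f h) (h2 : HasWeakLineDeriv Ω v g k) :
    HasWeakLineDeriv Ω v (fun x => f x + g x) (fun x => h x + k x) := by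
  intro ψ hψ hc hs
  have hd := continuous_fderiv_test hψ v
  have hdc := hc.fderiv_apply ℝ v
  simp only [add_mul]
  rw [integral_add (integrable_mul_test hf hd hdc) (integrable_mul_test hg hd hdc),
    integral_add (integrable_mul_test hh hψ.continuous hc)
      (integrable_mul_test hk hψ.continuous hc), h1 ψ hψ hc hs, h2 ψ hψ hc hs]
  ring

theorem const_mul (c : ℝ) (h1 : HasWeakLineDeriv Ω v f h) :
    HasWeakLineDeriv Ω v (fun x => c * f x) (fun x => c * h x) := by
  intro ψ hψ hc hs
  simp only [mul_assoc]
  rw [integral_const_mul, integral_const_mul, h1 ψ hψ hc hs]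
  ring

theorem const_smul_dir (c : ℝ) (h1 : HasWeakLineDeriv Ω v f h) :
    HasWeakLineDeriv Ω (c • v) f (fun x => c * h x) := by
  intro ψ hψ hc hs
  simp only [map_smul, smul_eq_mul, mul_assoc, mul_left_comm _ c]
  rw [integral_const_mul, integral_const_mul, h1 ψ hψ hc hs]
  ring

theorem add_dir {w : E} (hf : LocallyIntegrable f) (hh : LocallyIntegrable h)
    (hk : LocallyIntegrable k) (h1 : HasWeakLineDeriv Ω v f h)
    (h2 : HasWeakLineDeriv Ω w f k) :
    HasWeakLineDeriv Ω (v + w) f (fun x => h x + k x) := by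
  intro ψ hψ hc hs
  simp only [map_add, mul_add, add_mul]
  rw [integral_add (integrable_mul_test hf (continuous_fderiv_test hψ v) (hc.fderiv_apply ℝ v))
      (integrable_mul_test hf (continuous_fderiv_test hψ w) (hc.fderiv_apply ℝ w)),
    integral_add (integrable_mul_test hh hψ.continuous hc)
      (integrable_mul_test hk hψ.continuous hc), h1 ψ hψ hc hs, h2 ψ hψ hc hs]
  ring

theorem zero_dir : HasWeakLineDeriv Ω 0 f (fun _ => 0) := by
  intro ψ _ _ _
  simp

/-- Weak derivatives commute. -/
theorem comm {w : E} {hv hw hwv : E → ℝ} (h1 : HasWeakLineDeriv Ω v f hv)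
    (h2 : HasWeakLineDeriv Ω w f hw) (h3 : HasWeakLineDeriv Ω v hw hwv) :
    HasWeakLineDeriv Ω w hv hwv := by
  intro ψ hψ hc hs
  have a1 := h1 _ (contDiff_fderiv_test hψ w) (hc.fderiv_apply ℝ w)
    ((tsupport_fderiv_apply_subset' w).trans hs)
  have a2 := h2 _ (contDiff_fderiv_test hψ v) (hc.fderiv_apply ℝ v)
    ((tsupport_fderiv_apply_subset' v).trans hs)
  have a3 := h3 ψ hψ hc hs
  have hsymm : ∀ x, fderiv ℝ (fun y => fderiv ℝ ψ y w) x v =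
      fderiv ℝ (fun y => fderiv ℝ ψ y v) x w := by
    intro x
    have hd : DifferentiableAt ℝ (fderiv ℝ ψ) x :=
      (hψ.fderiv_right (m := ∞) (by simp)).differentiable (by simp) x
    have e : ∀ u, fderiv ℝ (fun y => fderiv ℝ ψ y u) x =
        (fderiv ℝ (fderiv ℝ ψ) x).flip u := by
      intro u
      rw [fderiv_clm_apply hd (differentiableAt_const u)]
      simp
    rw [e, e]
    exact (hψ.contDiffAt.isSymmSndFDerivAt (by simp; norm_cast)).eq v w
  simp only [hsymm] at a1
  linarith

end HasWeakLineDeriv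

theorem ae_norm_le_of_memLp_top {b : E → ℝ} (hb : MemLp b ∞ volume) :
    ∀ᵐ x, ‖b x‖ ≤ (eLpNorm b ∞ volume).toReal := by
  filter_upwards [ae_le_eLpNormEssSup (f := b) (μ := volume)] with x hx
  rw [eLpNorm_exponent_top, ← toReal_enorm]
  exact ENNReal.toReal_mono (by simpa using hb.2.ne) hx

/-- Mollification is symmetric with respect to the pairing of bounded and integrable functions. -/
theorem integral_mul_mollify {κ b f : E → ℝ} (hκ : Integrable κ) (hκe : ∀ x, κ (-x) = κ x)
    (hb : MemLp b ∞ volume) (hf : Integrable f) :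
    ∫ x, b x * mollify κ f x = ∫ x, mollify κ b x * f x := by
  have hconv := hf.convolution_integrand (ContinuousLinearMap.lsmul ℝ ℝ) (μ := volume) hκ
  have hint : Integrable (fun p : E × E => b p.1 * (κ (p.1 - p.2) * f p.2))
      (volume.prod volume) := by
    refine Integrable.bdd_mul (c := (eLpNorm b ∞ volume).toReal) ?_ ?_ ?_
    · refine hconv.congr (Eventually.of_forall fun p => ?_)
      simp [mul_comm]
    · exact hb.1.comp_fst
    · exact Measure.quasiMeasurePreserving_fst.ae (ae_norm_le_of_memLp_top hb)
  simp only [mollify, ← integral_const_mul, ← integral_mul_const]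
  rw [integral_integral_swap hint]
  refine integral_congr_ae (Eventually.of_forall fun y => ?_)
  refine integral_congr_ae (Eventually.of_forall fun x => ?_)
  simp only
  rw [← hκe (x - y), neg_sub]
  ring

theorem norm_mollify_le {κ b : E → ℝ} (hκ : Integrable κ) (hκ0 : ∀ x, 0 ≤ κ x)
    (hκ1 : ∫ x, κ x = 1) {C : ℝ} (hb : ∀ᵐ x, ‖b x‖ ≤ C) (x : E) :
    ‖mollify κ b x‖ ≤ C := by
  have h1 : ∫ y, κ (x - y) * C = C := by
    rw [integral_mul_const, integral_sub_left_eq_self κ volume x, hκ1, one_mul]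
  rw [mollify, ← h1]
  refine norm_integral_le_of_norm_le ((hκ.comp_sub_left x).mul_const C) ?_
  filter_upwards [hb] with y hy
  rw [norm_mul, Real.norm_of_nonneg (hκ0 _)]
  exact mul_le_mul_of_nonneg_left hy (hκ0 _)

/-- The standard sequence of shrinking bump functions. -/
noncomputable def shrinkingBump (n : ℕ) : ContDiffBump (0 : E) :=
  ⟨1 / (2 * (n + 1)), 1 / (n + 1), by positivity, by
    apply one_div_lt_one_div_of_lt <;> linarith [(Nat.cast_nonneg n : (0 : ℝ) ≤ n)]⟩

theorem tendsto_shrinkingBump_rOut :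
    Tendsto (fun n => (shrinkingBump (E := E) n).rOut) atTop (𝓝 0) :=
  tendsto_one_div_add_atTop_nhds_zero_nat

theorem tendsto_integral_mul_mollify {b f : E → ℝ} (hb : MemLp b ∞ volume)
    (hf : Integrable f) :
    Tendsto (fun n => ∫ x, b x * mollify ((shrinkingBump (E := E) n).normed volume) f x) atTop
      (𝓝 (∫ x, b x * f x)) := by
  have hκ : ∀ n, Integrable ((shrinkingBump (E := E) n).normed volume) := fun n =>
    (shrinkingBump n).integrable_normed
  have h1 : ∀ n, ∫ x, b x * mollify ((shrinkingBump (E := E) n).normed volume) f x =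
      ∫ x, mollify ((shrinkingBump (E := E) n).normed volume) b x * f x := fun n =>
    integral_mul_mollify (hκ n) (shrinkingBump n).normed_neg hb hf
  have hbl : LocallyIntegrable b := hb.locallyIntegrable le_top
  simp only [h1]
  refine tendsto_integral_of_dominated_convergence
    (fun x => (eLpNorm b ∞ volume).toReal * ‖f x‖) (fun n => ?_) (hf.norm.const_mul _)
    (fun n => Eventually.of_forall fun x => ?_) ?_
  · exact (contDiff_mollify (shrinkingBump n).contDiff_normed
      (shrinkingBump n).hasCompactSupport_normed hbl).continuous.aestronglyMeasurable.mul hf.1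
  · rw [norm_mul]
    exact mul_le_mul_of_nonneg_right (norm_mollify_le (hκ n)
      (fun x => (shrinkingBump n).nonneg_normed x) (shrinkingBump n).integral_normed
      (ae_norm_le_of_memLp_top hb) x) (norm_nonneg _)
  · have := ContDiffBump.ae_convolution_tendsto_right_of_locallyIntegrable (μ := volume)
      (φ := shrinkingBump (E := E)) (K := 2)
      tendsto_shrinkingBump_rOut (Eventually.of_forall fun n => by
        simp only [shrinkingBump]
        field_simp; exact le_rfl) hbl
    filter_upwards [this] with x hx
    simp only [mollify_eq_convolution]
    exact hx.mul_const _

/-- The product rule for weak derivatives. -/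
theorem HasWeakLineDeriv.mul {Ω : Set E} (hΩ : IsOpen Ω) {v : E} {f f' a a' : E → ℝ}
    (hf : Integrable f) (hf' : Integrable f') (ha : MemLp a ∞ volume) (ha' : MemLp a' ∞ volume)
    (h1 : HasWeakLineDeriv Ω v f f') (h2 : HasWeakLineDeriv Ω v a a') :
    HasWeakLineDeriv Ω v (fun x => f x * a x) (fun x => f' x * a x + f x * a' x) := by
  intro ψ hψ hc hs
  set κ : ℕ → E → ℝ := fun n => (shrinkingBump (E := E) n).normed volume with hκ
  have hψb : MemLp ψ ∞ volume := hψ.continuous.memLp_of_hasCompactSupport hc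
  have hdb : MemLp (fun x => fderiv ℝ ψ x v) ∞ volume :=
    (continuous_fderiv_test hψ v).memLp_of_hasCompactSupport (hc.fderiv_apply ℝ v)
  have hb1 : MemLp (fun x => a x * ψ x) ∞ volume := hψb.mul ha
  have hb2 : MemLp (fun x => a x * fderiv ℝ ψ x v) ∞ volume := hdb.mul ha
  have hb3 : MemLp (fun x => a' x * ψ x) ∞ volume := hψb.mul ha'
  obtain ⟨δ, hδ, hδΩ⟩ := hc.exists_cthickening_subset_open hΩ hs
  have key : ∀ᶠ n in atTop, (∫ x, a x * ψ x * mollify (κ n) f' x) +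
      (∫ x, a x * fderiv ℝ ψ x v * mollify (κ n) f x) =
      -∫ x, a' x * ψ x * mollify (κ n) f x := by
    filter_upwards [(tendsto_shrinkingBump_rOut (E := E)).eventually_lt_const hδ] with n hn
    have hκs : ContDiff ℝ ∞ (κ n) := (shrinkingBump n).contDiff_normed
    have hκc : HasCompactSupport (κ n) := (shrinkingBump n).hasCompactSupport_normed
    have hm : ContDiff ℝ ∞ (mollify (κ n) f) := contDiff_mollify hκs hκc hf.locallyIntegrable
    have hm' : ContDiff ℝ ∞ (mollify (κ n) f') := contDiff_mollify hκs hκc hf'.locallyIntegrable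
    have ht := h2 (fun x => ψ x * mollify (κ n) f x) (hψ.mul hm) (hc.mul_right)
      ((tsupport_mul_subset_left).trans hs)
    have hder : ∀ x, fderiv ℝ (fun x => ψ x * mollify (κ n) f x) x v =
        ψ x * mollify (κ n) f' x + fderiv ℝ ψ x v * mollify (κ n) f x := by
      intro x
      rw [fderiv_fun_mul (hψ.differentiable (by simp) x) (hm.differentiable (by simp) x)]
      simp only [add_apply, smul_apply, smul_eq_mul]
      by_cases hx : x ∈ tsupport ψ
      · rw [fderiv_mollify hκs hκc hf.locallyIntegrable h1]
        · ring
        · refine closure_minimal (fun y hy => ?_) isClosed_cthickening |>.trans hδΩ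
          have hy' : x - y ∈ support (κ n) := hy
          rw [(shrinkingBump n).support_normed_eq, mem_ball_zero_iff] at hy'
          refine mem_cthickening_of_dist_le y x δ _ hx ?_
          rw [dist_comm, dist_eq_norm]
          exact (hy'.trans hn).le
      · rw [image_eq_zero_of_notMem_tsupport hx]
        ring
    simp only [hder, mul_add] at ht
    rw [integral_add] at ht
    · simpa only [mul_assoc] using ht
    · exact integrable_mul_test (ha.locallyIntegrable le_top)
        (hψ.continuous.mul hm'.continuous) hc.mul_right
    · exact integrable_mul_test (ha.locallyIntegrable le_top)
        ((continuous_fderiv_test hψ v).mul hm.continuous) (hc.fderiv_apply ℝ v).mul_right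
  have hl := (tendsto_integral_mul_mollify hb1 hf').add (tendsto_integral_mul_mollify hb2 hf)
  have hr := (tendsto_integral_mul_mollify hb3 hf).neg
  have hlim := tendsto_nhds_unique (hl.congr' key) hr
  have i1 : Integrable fun x => a x * ψ x * f' x := hf'.bdd_mul hb1.1 (ae_norm_le_of_memLp_top hb1)
  have i2 : Integrable fun x => a' x * ψ x * f x := hf.bdd_mul hb3.1 (ae_norm_le_of_memLp_top hb3)
  have e1 : ∫ x, f x * a x * fderiv ℝ ψ x v = ∫ x, a x * fderiv ℝ ψ x v * f x :=
    integral_congr_ae (Eventually.of_forall fun x => by simp only; ring)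
  have e2 : ∫ x, (f' x * a x + f x * a' x) * ψ x =
      (∫ x, a x * ψ x * f' x) + ∫ x, a' x * ψ x * f x := by
    rw [← integral_add i1 i2]
    exact integral_congr_ae (Eventually.of_forall fun x => by simp only; ring)
  rw [e1, e2]
  linarith

namespace SobolevOn

variable {p : ℝ≥0∞} {K Ω : Set E}

theorem memLp : ∀ {n : ℕ} {f : E → ℝ}, SobolevOn p K Ω n f → MemLp f p volume
  | 0, _, h => h.1
  | _ + 1, _, h => h.1.1

theorem support_subset : ∀ {n : ℕ} {f : E → ℝ}, SobolevOn p K Ω n f → support f ⊆ K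
  | 0, _, h => h.2
  | _ + 1, _, h => h.1.2

theorem of_succ : ∀ {n : ℕ} {f : E → ℝ}, SobolevOn p K Ω (n + 1) f → SobolevOn p K Ω n f
  | 0, _, h => h.1
  | _ + 1, _, h => ⟨h.1, fun v => let ⟨g, hg, hg'⟩ := h.2 v; ⟨g, hg, hg'.of_succ⟩⟩

theorem of_le {n m : ℕ} (hnm : n ≤ m) {f : E → ℝ} (h : SobolevOn p K Ω m f) :
    SobolevOn p K Ω n f := by
  induction hnm with
  | refl => exact h
  | step _ ih => exact ih h.of_succ

theorem zero : ∀ {n : ℕ}, SobolevOn p K Ω n (fun _ => (0 : ℝ))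
  | 0 => ⟨MemLp.zero, by simp⟩
  | n + 1 => ⟨⟨MemLp.zero, by simp⟩, fun v => ⟨fun _ => 0, fun ψ _ _ _ => by simp, zero⟩⟩

theorem add (hp : 1 ≤ p) : ∀ {n : ℕ} {f g : E → ℝ}, SobolevOn p K Ω n f → SobolevOn p K Ω n g →
    SobolevOn p K Ω n (fun x => f x + g x)
  | 0, _, _, hf, hg => ⟨hf.1.add hg.1, (support_add _ _).trans (union_subset hf.2 hg.2)⟩
  | n + 1, f, g, hf, hg => by
      refine ⟨⟨hf.1.1.add hg.1.1, (support_add _ _).trans (union_subset hf.1.2 hg.1.2)⟩,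
        fun v => ?_⟩
      obtain ⟨h, h1, h2⟩ := hf.2 v
      obtain ⟨k, k1, k2⟩ := hg.2 v
      exact ⟨_, h1.add (hf.1.1.locallyIntegrable hp) (hg.1.1.locallyIntegrable hp)
        (h2.memLp.locallyIntegrable hp) (k2.memLp.locallyIntegrable hp) k1, h2.add hp k2⟩

theorem const_mul (c : ℝ) : ∀ {n : ℕ} {f : E → ℝ}, SobolevOn p K Ω n f →
    SobolevOn p K Ω n (fun x => c * f x)
  | 0, f, hf => ⟨hf.1.const_mul c, fun x hx => hf.2 (right_ne_zero_of_mul hx)⟩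
  | n + 1, f, hf => ⟨⟨hf.1.1.const_mul c, fun x hx => hf.1.2 (right_ne_zero_of_mul hx)⟩,
      fun v => let ⟨h, h1, h2⟩ := hf.2 v; ⟨_, h1.const_mul c, h2.const_mul c⟩⟩

theorem sum (hp : 1 ≤ p) {n : ℕ} {ι : Type*} (s : Finset ι) {f : ι → E → ℝ}
    (hf : ∀ i ∈ s, SobolevOn p K Ω n (f i)) : SobolevOn p K Ω n (fun x => ∑ i ∈ s, f i x) := by
  classical
  induction s using Finset.induction_on with
  | empty => simpa using zero
  | insert i s hi ih =>
    simp only [Finset.sum_insert hi]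
    exact (hf i (Finset.mem_insert_self i s)).add hp
      (ih fun j hj => hf j (Finset.mem_insert_of_mem hj))

theorem integrable (hp : 1 ≤ p) (hK : Bornology.IsBounded K) {n : ℕ} {f : E → ℝ}
    (hf : SobolevOn p K Ω n f) : Integrable f := by
  have hsub : support f ⊆ closure K := hf.support_subset.trans subset_closure
  rw [← integrableOn_iff_integrable_of_support_subset hsub]
  have : IsFiniteMeasure (volume.restrict (closure K)) :=
    ⟨by simpa using hK.isCompact_closure.measure_lt_top⟩
  exact (hf.memLp.restrict _).integrable hp

theorem mul (hΩ : IsOpen Ω) (hK : Bornology.IsBounded K) :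
    ∀ {n : ℕ} {f a : E → ℝ}, SobolevOn 2 K Ω n f → SobolevOn ∞ K Ω n a →
    SobolevOn 2 K Ω n (fun x => f x * a x)
  | 0, f, a, hf, ha => ⟨ha.1.mul hf.1, fun x hx => hf.2 (left_ne_zero_of_mul hx)⟩
  | n + 1, f, a, hf, ha => by
      refine ⟨⟨ha.1.1.mul hf.1.1, fun x hx => hf.1.2 (left_ne_zero_of_mul hx)⟩, fun v => ?_⟩
      obtain ⟨f', h1, h2⟩ := hf.2 v
      obtain ⟨a', k1, k2⟩ := ha.2 v
      exact ⟨_, HasWeakLineDeriv.mul hΩ (hf.integrable one_le_two hK)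
        (h2.integrable one_le_two hK) ha.memLp k2.memLp h1 k1,
        (h2.mul hΩ hK ha.of_succ).add one_le_two (hf.of_succ.mul hΩ hK k2)⟩

end SobolevOn

end Sobolev

section Partials

set_option linter.unusedSectionVars false

open Set Function Metric Filter
open scoped Topology ENNReal ContDiff

section LineDeriv

variable {E : Type*} [NormedAddCommGroup E] [InnerProductSpace ℝ E] [FiniteDimensional ℝ E]
  [MeasurableSpace E] [BorelSpace E] {U : Set E} {v : E} {f f' : E → ℝ}

theorem eventually_add_smul_mem (hU : IsOpen U) {u : E} (hu : u ∈ U) (v : E) :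
    ∀ᶠ t : ℝ in 𝓝 0, u + t • v ∈ U := by
  have hc : Continuous fun t : ℝ => u + t • v := by fun_prop
  exact hc.continuousAt.eventually_mem (by simpa using hU.mem_nhds hu)

theorem HasLineDerivAt.congr_of_eqOn {g : E → ℝ} (hU : IsOpen U) (hfg : EqOn f g U) {u : E}
    (hu : u ∈ U) {c : ℝ} (h : HasLineDerivAt ℝ f c u v) : HasLineDerivAt ℝ g c u v := by
  refine HasDerivAt.congr_of_eventuallyEq h ?_
  filter_upwards [eventually_add_smul_mem hU hu v] with t ht
  exact (hfg ht).symm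

theorem measurable_indicator_lineDeriv (hU : IsOpen U) (hf : Measurable (U.indicator f))
    (hd : ∀ u ∈ U, HasLineDerivAt ℝ f (f' u) u v) : Measurable (U.indicator f') := by
  have hlim : ∀ u, Tendsto (fun n : ℕ => U.indicator (fun x => (n + 1 : ℝ) *
      (U.indicator f (x + (1 / (n + 1) : ℝ) • v) - U.indicator f x)) u) atTop
      (𝓝 (U.indicator f' u)) := by
    intro u
    by_cases hu : u ∈ U
    · simp only [indicator_of_mem hu]
      have h1 := ((hd u hu).congr_of_eqOn hU (g := U.indicator f)
        (fun x hx => (indicator_of_mem hx f).symm) hu).tendsto_slope_zero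
      have h2 : Tendsto (fun n : ℕ => (1 / (n + 1) : ℝ)) atTop (𝓝[≠] 0) := by
        refine tendsto_nhdsWithin_iff.2 ⟨tendsto_one_div_add_atTop_nhds_zero_nat,
          Eventually.of_forall fun n => ?_⟩
        simp only [mem_compl_iff, mem_singleton_iff]
        positivity
      have h3 := h1.comp h2
      refine h3.congr fun n => ?_
      simp [indicator_of_mem hu]
    · simp [indicator_of_notMem hu]
  refine measurable_of_tendsto_metrizable (fun n => ?_) (tendsto_pi_nhds.2 hlim)
  refine Measurable.indicator ?_ hU.measurableSet
  exact ((hf.comp (measurable_add_const _)).sub hf).const_mul _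

/-- A bounded classical directional derivative is a weak derivative. -/
theorem hasWeakLineDeriv_of_hasLineDerivAt (hU : IsOpen U)
    (hd : ∀ u ∈ U, HasLineDerivAt ℝ f (f' u) u v)
    (hf : LocallyIntegrable (U.indicator f)) (hf' : LocallyIntegrable (U.indicator f')) :
    HasWeakLineDeriv U v (U.indicator f) (U.indicator f') := by
  intro ψ hψ hc hs
  refine integral_bilinear_hasLineDerivAt_right_eq_neg_left_of_integrable
    (B := ContinuousLinearMap.mul ℝ ℝ) (v := v)
    (integrable_mul_test hf' hψ.continuous hc)
    (integrable_mul_test hf (continuous_fderiv_test hψ v) (hc.fderiv_apply ℝ v))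
    (integrable_mul_test hf hψ.continuous hc) (fun x hx => ?_) (fun x _ => ?_)
  · have hx' := hs hx
    rw [indicator_of_mem hx']
    exact (hd x hx').congr_of_eqOn hU (fun y hy => (indicator_of_mem hy f).symm) hx'
  · exact (hψ.differentiable (by simp) x).hasFDerivAt.hasLineDerivAt v

theorem memLp_top_indicator (hm : Measurable (U.indicator f)) {C : ℝ} (hC : ∀ u ∈ U, |f u| ≤ C) :
    MemLp (U.indicator f) ∞ volume := by
  refine memLp_top_of_bound hm.aestronglyMeasurable |C| (Eventually.of_forall fun u => ?_)
  by_cases hu : u ∈ U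
  · rw [indicator_of_mem hu]
    exact (hC u hu).trans (le_abs_self C)
  · rw [indicator_of_notMem hu]
    simp

theorem HasWeakLineDeriv.sum_dir {ι : Type*} (t : Finset ι) {w : ι → E} {h : ι → E → ℝ} (c : ι → ℝ)
    (hf : LocallyIntegrable f) (hh : ∀ i, LocallyIntegrable (h i))
    (H : ∀ i, HasWeakLineDeriv U (w i) f (h i)) :
    HasWeakLineDeriv U (∑ i ∈ t, c i • w i) f (fun x => ∑ i ∈ t, c i * h i x) ∧
      LocallyIntegrable (fun x => ∑ i ∈ t, c i * h i x) := by
  classical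
  induction t using Finset.induction_on with
  | empty => simpa using ⟨HasWeakLineDeriv.zero_dir, locallyIntegrable_zero⟩
  | insert i t hi ih =>
    simp only [Finset.sum_insert hi]
    have hi' : LocallyIntegrable fun x => c i * h i x := (hh i).smul (c i)
    exact ⟨((H i).const_smul_dir (c i)).add_dir hf hi' ih.2 ih.1, hi'.add ih.2⟩

end LineDeriv

variable {s : ℕ} {U : Set (EuclideanSpace ℝ (Fin s))}

/-- A function with bounded partial derivatives on an open set is continuous there. -/
theorem continuousOn_of_bounded_partials (hU : IsOpen U) {f : EuclideanSpace ℝ (Fin s) → ℝ}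
    {P : Fin s → EuclideanSpace ℝ (Fin s) → ℝ} {C : ℝ}
    (hd : ∀ i, ∀ u ∈ U, HasLineDerivAt ℝ f (P i u) u (EuclideanSpace.single i 1))
    (hC : ∀ i, ∀ u ∈ U, |P i u| ≤ C) : ContinuousOn f U := by
  classical
  intro u hu
  refine ContinuousAt.continuousWithinAt ?_
  obtain ⟨r, hr, hrU⟩ := Metric.isOpen_iff.1 hU u hu
  have hmem : ∀ h w : EuclideanSpace ℝ (Fin s), ‖h‖ < r → (∀ i, |w i| ≤ |h i|) → u + w ∈ U := by
    intro h w hh hw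
    refine hrU ?_
    rw [mem_ball_iff_norm, add_sub_cancel_left]
    refine lt_of_le_of_lt ?_ hh
    rw [EuclideanSpace.norm_eq, EuclideanSpace.norm_eq]
    refine Real.sqrt_le_sqrt (Finset.sum_le_sum fun i _ => ?_)
    exact pow_le_pow_left₀ (norm_nonneg _) (hw i) 2
  have key : ∀ h : EuclideanSpace ℝ (Fin s), ‖h‖ < r → ∀ A : Finset (Fin s),
      |f (u + ∑ i ∈ A, h i • EuclideanSpace.single i (1 : ℝ)) - f u| ≤ ∑ i ∈ A, C * |h i| := by
    intro h hh A
    induction A using Finset.induction_on with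
    | empty => simp
    | insert i A hi ih =>
      rw [Finset.sum_insert hi, Finset.sum_insert hi]
      set y := ∑ i ∈ A, h i • EuclideanSpace.single i (1 : ℝ) with hy
      have hyc : ∀ j, y j = if j ∈ A then h j else 0 := by
        intro j
        rw [hy]
        simp [Pi.single_apply]
      have hseg : ∀ t ∈ Icc (0 : ℝ) 1,
          u + (y + (t * h i) • EuclideanSpace.single i (1 : ℝ)) ∈ U := by
        intro t ht
        refine hmem h _ hh fun j => ?_
        simp only [PiLp.add_apply, PiLp.smul_apply, PiLp.single_apply, hyc, smul_eq_mul]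
        by_cases hj : j = i
        · subst hj
          simp only [hi, if_false, zero_add, if_true, mul_one, abs_mul, abs_of_nonneg ht.1]
          exact mul_le_of_le_one_left (abs_nonneg _) ht.2
        · simp only [hj, if_false, mul_zero, add_zero]
          split_ifs
          · exact le_rfl
          · simp
      have hder : ∀ t ∈ Icc (0 : ℝ) 1, HasDerivWithinAt
          (fun t : ℝ => f (u + (y + (t * h i) • EuclideanSpace.single i (1 : ℝ))))
          (P i (u + (y + (t * h i) • EuclideanSpace.single i (1 : ℝ))) * h i) (Icc 0 1) t := by
        intro t ht
        have h1 := hd i _ (hseg t ht)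
        have h2 : HasDerivAt (fun t' : ℝ => (t' - t) * h i) (h i) t := by
          simpa using ((hasDerivAt_id t).sub_const t).mul_const (h i)
        have h3 := HasDerivAt.comp_of_eq (h₂ := fun τ : ℝ =>
          f (u + (y + (t * h i) • EuclideanSpace.single i (1 : ℝ)) +
            τ • EuclideanSpace.single i (1 : ℝ))) t h1 h2 (by simp)
        refine HasDerivAt.hasDerivWithinAt ?_
        refine h3.congr_of_eventuallyEq (Eventually.of_forall fun t' => ?_)
        simp only [comp_apply]
        congr 1
        module
      have hmv := norm_image_sub_le_of_norm_deriv_le_segment_01' hder (C := C * |h i|) (by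
        intro t ht
        rw [norm_mul]
        exact mul_le_mul_of_nonneg_right (hC i _ (hseg t ⟨ht.1, ht.2.le⟩)) (norm_nonneg _))
      simp only [one_mul, zero_mul, zero_smul, add_zero] at hmv
      rw [add_comm (h i • _) y]
      calc _ ≤ |f (u + (y + h i • EuclideanSpace.single i 1)) - f (u + y)| + |f (u + y) - f u| :=
            abs_sub_le _ _ _
        _ ≤ _ := add_le_add hmv ih
  have hsum : ∀ h : EuclideanSpace ℝ (Fin s),
      ∑ i, h i • EuclideanSpace.single i (1 : ℝ) = h := by
    intro h
    have := (EuclideanSpace.basisFun (Fin s) ℝ).sum_repr h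
    simpa using this
  rw [Metric.continuousAt_iff]
  intro ε hε
  have hcont : Tendsto (fun h : EuclideanSpace ℝ (Fin s) => ∑ i, C * |h i|) (𝓝 0) (𝓝 0) := by
    have : Continuous fun h : EuclideanSpace ℝ (Fin s) => ∑ i, C * |h i| := by fun_prop
    simpa using this.tendsto 0
  obtain ⟨δ, hδ, hδ'⟩ := Metric.eventually_nhds_iff.1 (hcont.eventually_lt_const hε)
  refine ⟨min δ r, lt_min hδ hr, fun {x} hx => ?_⟩
  rw [dist_eq_norm] at hx
  have h1 := key (x - u) (hx.trans_le (min_le_right _ _)) Finset.univ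
  rw [hsum, add_sub_cancel] at h1
  refine lt_of_le_of_lt h1 (hδ' ?_)
  rw [dist_zero_right]
  exact hx.trans_le (min_le_left _ _)

theorem exists_eq_add_single {α : Fin s → ℕ} (hα : α ≠ 0) :
    ∃ (i : Fin s) (β : Fin s → ℕ), α = β + Pi.single i 1 ∧ (∀ j < i, β j = 0) ∧
      ∑ j, α j = ∑ j, β j + 1 := by
  classical
  obtain ⟨i₀, hi₀⟩ := Function.ne_iff.1 hα
  set A : Finset (Fin s) := Finset.univ.filter fun i => α i ≠ 0 with hA
  have hne : A.Nonempty := ⟨i₀, by simpa [hA] using hi₀⟩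
  set i := A.min' hne with hi
  have hiα : α i ≠ 0 := by
    have := A.min'_mem hne
    simpa [hA] using this
  have hlt : ∀ j < i, α j = 0 := by
    intro j hj
    by_contra hcon
    exact absurd (A.min'_le j (by simpa [hA] using hcon)) (not_le.2 hj)
  have heq : α = (α - Pi.single i 1) + Pi.single i 1 := by
    funext j
    by_cases hj : j = i
    · subst hj
      simp only [Pi.add_apply, Pi.sub_apply, Pi.single_eq_same]
      omega
    · simp [hj]
  refine ⟨i, α - Pi.single i 1, heq, fun j hj => by simp [hlt j hj], ?_⟩
  conv_lhs => rw [heq]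
  simp [Finset.sum_add_distrib]

/-- Bounded classical partial derivatives give bounded weak derivatives in all directions. -/
theorem HasBoundedPartials.exists_partials (hU : IsOpen U) {l : ℕ} (hl : 1 ≤ l)
    {f : EuclideanSpace ℝ (Fin s) → ℝ} (h : HasBoundedPartials U l f) :
    ContinuousOn f U ∧ ∃ P : Fin s → EuclideanSpace ℝ (Fin s) → ℝ, ∀ i,
      (∀ u ∈ U, HasLineDerivAt ℝ f (P i u) u (EuclideanSpace.single i 1)) ∧
      (∃ C : ℝ, ∀ u ∈ U, |P i u| ≤ C) ∧
      SobolevOn ∞ U U (l - 1) (U.indicator (P i)) := by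
  classical
  obtain ⟨D, h0, hD, hB⟩ := h
  have h0' : EqOn (D 0) f U := h0
  have hsum1 : ∀ (α : Fin s → ℕ) (i : Fin s), ∑ j, (α + Pi.single i 1 : Fin s → ℕ) j = ∑ j, α j + 1 := by
    intro α i
    simp [Finset.sum_add_distrib]
  have hdf : ∀ i, ∀ u ∈ U, HasLineDerivAt ℝ (D 0) (D (0 + Pi.single i 1) u) u
      (EuclideanSpace.single i 1) := fun i u hu =>
    hD 0 i (by simp; omega) (fun _ _ => rfl) u hu
  have hcont0 : ContinuousOn (D 0) U := by
    choose C hC using fun i : Fin s => hB (0 + Pi.single i 1) (by rw [hsum1]; simpa using hl)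
    refine continuousOn_of_bounded_partials hU (C := ∑ i, |C i|) hdf fun i u hu => ?_
    exact (hC i u hu).trans ((le_abs_self _).trans
      (Finset.single_le_sum (f := fun i => |C i|) (fun _ _ => abs_nonneg _) (Finset.mem_univ i)))
  have hmeas : ∀ n, ∀ α : Fin s → ℕ, ∑ j, α j = n → n ≤ l → Measurable (U.indicator (D α)) := by
    intro n
    induction n with
    | zero =>
      intro α hα _
      have : α = 0 := by
        funext j
        simpa using (Finset.sum_eq_zero_iff.1 hα) j (Finset.mem_univ j)
      rw [this, ← piecewise_eq_indicator]
      exact hcont0.measurable_piecewise continuousOn_const hU.measurableSet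
    | succ n ih =>
      intro α hα hn
      obtain ⟨i, β, rfl, hβ, hs⟩ := exists_eq_add_single (α := α) (by
        rintro rfl; simp at hα)
      exact measurable_indicator_lineDeriv hU (ih β (by omega) (by omega))
        (hD β i (by omega) hβ)
  have hmem : ∀ α : Fin s → ℕ, ∑ j, α j ≤ l → MemLp (U.indicator (D α)) ∞ volume := by
    intro α hα
    obtain ⟨C, hC⟩ := hB α hα
    exact memLp_top_indicator (hmeas _ α rfl hα) hC
  have hloc : ∀ α : Fin s → ℕ, ∑ j, α j ≤ l → LocallyIntegrable (U.indicator (D α)) :=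
    fun α hα => (hmem α hα).locallyIntegrable le_top
  have hdirect : ∀ (α : Fin s → ℕ) (i : Fin s), ∑ j, α j < l → (∀ j < i, α j = 0) →
      HasWeakLineDeriv U (EuclideanSpace.single i 1) (U.indicator (D α))
        (U.indicator (D (α + Pi.single i 1))) := by
    intro α i hα hi
    exact hasWeakLineDeriv_of_hasLineDerivAt hU (hD α i hα hi) (hloc α hα.le)
      (hloc _ (by rw [hsum1]; omega))
  have hweak : ∀ n, ∀ α : Fin s → ℕ, ∑ j, α j = n → n < l → ∀ k,
      HasWeakLineDeriv U (EuclideanSpace.single k 1) (U.indicator (D α))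
        (U.indicator (D (α + Pi.single k 1))) := by
    intro n
    induction n with
    | zero =>
      intro α hα hn k
      refine hdirect α k (by omega) fun j _ => ?_
      simpa using (Finset.sum_eq_zero_iff.1 hα) j (Finset.mem_univ j)
    | succ n ih =>
      intro α hα hn k
      obtain ⟨i, β, rfl, hβ, hs⟩ := exists_eq_add_single (α := α) (by
        rintro rfl; simp at hα)
      rcases le_or_gt k i with hki | hki
      · refine hdirect _ k (by omega) fun j hj => ?_
        have hji : j < i := hj.trans_le hki
        simp [hβ j hji, hji.ne]
      · have h1 := hdirect β i (by omega) hβ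
        have h2 := ih β (by omega) (by omega) k
        have h3 := hdirect (β + Pi.single k 1) i (by rw [hsum1]; omega) (fun j hj => by
          simp [hβ j hj, (hj.trans hki).ne])
        have h4 := h1.comm h2 h3
        rwa [add_right_comm] at h4
  have hsob : ∀ n, ∀ α : Fin s → ℕ, ∑ j, α j + n ≤ l →
      SobolevOn ∞ U U n (U.indicator (D α)) := by
    intro n
    induction n with
    | zero => exact fun α hα => ⟨hmem α (by omega), support_indicator_subset⟩
    | succ n ih =>
      intro α hα
      refine ⟨⟨hmem α (by omega), support_indicator_subset⟩, fun v => ?_⟩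
      have hα1 : ∀ k, ∑ j, (α + Pi.single k 1 : Fin s → ℕ) j + n ≤ l := fun k => by rw [hsum1]; omega
      have h1 := (HasWeakLineDeriv.sum_dir Finset.univ (fun k => v k) (hloc α (by omega))
        (fun k => hloc _ (by have := hα1 k; omega))
        (fun k => hweak _ α rfl (by omega) k)).1
      have hv : ∑ i, v i • EuclideanSpace.single i (1 : ℝ) = v := by
        have := (EuclideanSpace.basisFun (Fin s) ℝ).sum_repr v
        simpa using this
      rw [hv] at h1
      exact ⟨_, h1, SobolevOn.sum le_top _ fun k _ => (ih _ (hα1 k)).const_mul _⟩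
  refine ⟨hcont0.congr h0'.symm, fun i => D (0 + Pi.single i 1), fun i => ⟨fun u hu => ?_, ?_, ?_⟩⟩
  · exact (hdf i u hu).congr_of_eqOn hU h0' hu
  · exact hB _ (by rw [hsum1]; simpa using hl)
  · exact hsob _ _ (by rw [hsum1]; simp; omega)

end Partials

section ScaleMixture

open Set Function Filter
open scoped Topology ENNReal SchwartzMap LineDeriv

/-- The Cauchy–Schwarz inequality for lower Lebesgue integrals. -/
theorem lintegral_mul_sq_le {α : Type*} [MeasurableSpace α] {μ : Measure α} {f g : α → ℝ≥0∞}
    (hf : AEMeasurable f μ) (hg : AEMeasurable g μ) :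
    (∫⁻ a, f a * g a ∂μ) ^ 2 ≤ (∫⁻ a, f a ^ 2 ∂μ) * ∫⁻ a, g a ^ 2 ∂μ := by
  have h := ENNReal.lintegral_mul_le_Lp_mul_Lq μ Real.HolderConjugate.two_two hf hg
  simp only [Pi.mul_apply, ENNReal.rpow_two] at h
  refine (pow_le_pow_left₀ zero_le h 2).trans (le_of_eq ?_)
  rw [mul_pow, ← ENNReal.rpow_natCast, ← ENNReal.rpow_natCast, ← ENNReal.rpow_mul,
    ← ENNReal.rpow_mul]
  norm_num

theorem lintegral_comp_inv_smul_sub {F : Type*} [NormedAddCommGroup F] [InnerProductSpace ℝ F]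
    [FiniteDimensional ℝ F] [MeasurableSpace F] [BorelSpace F] {f : F → ℝ≥0∞} (hf : Measurable f)
    {r : ℝ} (hr : 0 < r) (x₀ : F) :
    ∫⁻ y, f (r⁻¹ • (y - x₀)) = ENNReal.ofReal (r ^ Module.finrank ℝ F) * ∫⁻ y, f y := by
  rw [lintegral_sub_right_eq_self (fun y => f (r⁻¹ • y)) x₀]
  have h := Measure.map_addHaar_smul (volume : Measure F) (inv_ne_zero hr.ne')
  rw [← lintegral_map hf (measurable_const_smul r⁻¹), h, lintegral_smul_measure, inv_pow, inv_inv,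
    abs_of_pos (by positivity), smul_eq_mul]

/-- A mixture over scales of rescaled copies of a Schwartz function. -/
noncomputable def scaleMixture {F : Type*} [NormedAddCommGroup F] [InnerProductSpace ℝ F]
    (Λ : Measure ℝ) (x₀ : F) (H : 𝓢(F, ℝ)) (q : ℕ) (y : F) : ℝ :=
  ∫ τ, τ ^ (-(q : ℝ) / 2) * H ((√τ)⁻¹ • (y - x₀)) ∂Λ

variable {s d : ℕ} {U : Set (EuclideanSpace ℝ (Fin s))}
  {G : EuclideanSpace ℝ (Fin s) → EuclideanSpace ℝ (Fin d)}
  {Λ : Measure ℝ} [SFinite Λ] {ν : ℝ} {x₀ : EuclideanSpace ℝ (Fin d)} {Cp : ℝ≥0∞}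

theorem measurable_scaleMixture_integrand (hGm : Measurable G)
    (H : 𝓢(EuclideanSpace ℝ (Fin d), ℝ)) (q : ℕ) :
    Measurable (uncurry fun (u : EuclideanSpace ℝ (Fin s)) (τ : ℝ) =>
      τ ^ (-(q : ℝ) / 2) * H ((√τ)⁻¹ • (G u - x₀))) := by
  have hH := H.continuous.measurable
  simp only [uncurry_def]
  fun_prop

/-- The square of the mixture integral is integrable along a map whose image measure has a bounded
density. -/
theorem lintegral_scaleMixture_sq_lt_top (hGm : Measurable G)
    (hCp : Cp ≠ ∞)
    (hpush : ∀ φ : EuclideanSpace ℝ (Fin d) → ℝ≥0∞, Measurable φ →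
      ∫⁻ u in U, φ (G u) ≤ Cp * ∫⁻ y, φ y)
    (hΛ0 : ∀ᵐ τ ∂Λ, 0 < τ) (hΛ : ∀ p : ℝ, -(ν / 2) ≤ p → Integrable (fun τ : ℝ => τ ^ p) Λ)
    (H : 𝓢(EuclideanSpace ℝ (Fin d), ℝ)) {q : ℕ} (hq : (q : ℝ) ≤ ν + (d : ℝ) / 2) :
    ∫⁻ u in U, (∫⁻ τ, ‖τ ^ (-(q : ℝ) / 2) * H ((√τ)⁻¹ • (G u - x₀))‖ₑ ∂Λ) ^ 2 < ∞ := by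
  have hH := H.continuous.measurable
  set A : ℝ≥0∞ := ∫⁻ τ, ENNReal.ofReal (τ ^ (-(ν / 4))) ^ 2 ∂Λ with hA
  have hA' : A < ∞ := by
    have h1 : A = ∫⁻ τ, ENNReal.ofReal (τ ^ (-(ν / 2))) ∂Λ := by
      refine lintegral_congr_ae ?_
      filter_upwards [hΛ0] with τ hτ
      rw [← ENNReal.ofReal_pow (by positivity), ← Real.rpow_natCast, ← Real.rpow_mul hτ.le]
      congr 2
      push_cast; ring
    rw [h1]
    exact (hΛ _ le_rfl).lintegral_lt_top
  have h1 : ∀ u, (∫⁻ τ, ‖τ ^ (-(q : ℝ) / 2) * H ((√τ)⁻¹ • (G u - x₀))‖ₑ ∂Λ) ^ 2 ≤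
      A * ∫⁻ τ, ENNReal.ofReal (τ ^ (ν / 2 - q)) * ‖H ((√τ)⁻¹ • (G u - x₀))‖ₑ ^ 2 ∂Λ := by
    intro u
    have h2 : ∫⁻ τ, ‖τ ^ (-(q : ℝ) / 2) * H ((√τ)⁻¹ • (G u - x₀))‖ₑ ∂Λ =
        ∫⁻ τ, ENNReal.ofReal (τ ^ (-(ν / 4))) *
          (ENNReal.ofReal (τ ^ (ν / 4 - q / 2)) * ‖H ((√τ)⁻¹ • (G u - x₀))‖ₑ) ∂Λ := by
      refine lintegral_congr_ae ?_
      filter_upwards [hΛ0] with τ hτ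
      rw [enorm_mul, ← mul_assoc, ← ENNReal.ofReal_mul (by positivity), ← Real.rpow_add hτ,
        Real.enorm_of_nonneg (by positivity)]
      congr 3
      ring
    rw [h2]
    refine (lintegral_mul_sq_le (by fun_prop) (by fun_prop)).trans (le_of_eq ?_)
    congr 1
    refine lintegral_congr_ae ?_
    filter_upwards [hΛ0] with τ hτ
    rw [mul_pow, ← ENNReal.ofReal_pow (by positivity), ← Real.rpow_natCast, ← Real.rpow_mul hτ.le]
    congr 3
    push_cast; ring
  refine lt_of_le_of_lt (lintegral_mono h1) ?_
  rw [lintegral_const_mul' _ _ hA'.ne]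
  refine ENNReal.mul_lt_top hA' ?_
  rw [lintegral_lintegral_swap (by
    refine Measurable.aemeasurable ?_
    simp only [uncurry_def]
    fun_prop)]
  have hL : ∫⁻ y : EuclideanSpace ℝ (Fin d), ‖H y‖ₑ ^ 2 < ∞ := by
    have := (eLpNorm_lt_top_iff_lintegral_rpow_enorm_lt_top two_ne_zero ENNReal.ofNat_ne_top).1
      (H.memLp 2 volume).2
    simpa using this
  set L : ℝ≥0∞ := ∫⁻ y : EuclideanSpace ℝ (Fin d), ‖H y‖ₑ ^ 2 with hLdef
  have h3 : ∀ᵐ τ ∂Λ, ∫⁻ u in U, ENNReal.ofReal (τ ^ (ν / 2 - q)) *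
      ‖H ((√τ)⁻¹ • (G u - x₀))‖ₑ ^ 2 ≤
      ENNReal.ofReal (τ ^ (ν / 2 - q + (d : ℝ) / 2)) * (Cp * L) := by
    filter_upwards [hΛ0] with τ hτ
    rw [lintegral_const_mul' _ _ ENNReal.ofReal_ne_top]
    have h4 := hpush (fun y => ‖H ((√τ)⁻¹ • (y - x₀))‖ₑ ^ 2) (by fun_prop)
    rw [lintegral_comp_inv_smul_sub (f := fun y => ‖H y‖ₑ ^ 2) (by fun_prop)
      (Real.sqrt_pos.2 hτ) x₀, finrank_euclideanSpace, Fintype.card_fin] at h4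
    have h5 : √τ ^ d = τ ^ ((d : ℝ) / 2) := by
      rw [Real.sqrt_eq_rpow, ← Real.rpow_natCast, ← Real.rpow_mul hτ.le]
      congr 1; ring
    rw [h5] at h4
    refine (mul_le_mul_right h4 _).trans (le_of_eq ?_)
    rw [Real.rpow_add hτ, ENNReal.ofReal_mul (by positivity)]
    ring
  refine lt_of_le_of_lt (lintegral_mono_ae h3) ?_
  rw [lintegral_mul_const' _ _ (ENNReal.mul_ne_top hCp hL.ne)]
  exact ENNReal.mul_lt_top (hΛ _ (by linarith)).lintegral_lt_top
    (ENNReal.mul_lt_top hCp.lt_top hL)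

theorem integrable_scaleMixture_integrand
    (hUf : volume U ≠ ∞) (hGm : Measurable G) (hCp : Cp ≠ ∞)
    (hpush : ∀ φ : EuclideanSpace ℝ (Fin d) → ℝ≥0∞, Measurable φ →
      ∫⁻ u in U, φ (G u) ≤ Cp * ∫⁻ y, φ y)
    (hΛ0 : ∀ᵐ τ ∂Λ, 0 < τ) (hΛ : ∀ p : ℝ, -(ν / 2) ≤ p → Integrable (fun τ : ℝ => τ ^ p) Λ)
    (H : 𝓢(EuclideanSpace ℝ (Fin d), ℝ)) {q : ℕ} (hq : (q : ℝ) ≤ ν + (d : ℝ) / 2) :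
    Integrable (uncurry fun (u : EuclideanSpace ℝ (Fin s)) (τ : ℝ) =>
      τ ^ (-(q : ℝ) / 2) * H ((√τ)⁻¹ • (G u - x₀))) ((volume.restrict U).prod Λ) := by
  have hm := measurable_scaleMixture_integrand (x₀ := x₀) hGm H q
  refine ⟨hm.aestronglyMeasurable, ?_⟩
  rw [hasFiniteIntegral_iff_enorm, lintegral_prod _ hm.enorm.aemeasurable]
  have h1 : ∀ a : ℝ≥0∞, a ≤ 1 + a ^ 2 := by
    intro a
    rcases le_total a 1 with h | h
    · exact h.trans le_self_add
    · exact (le_self_pow h two_ne_zero).trans le_add_self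
  refine lt_of_le_of_lt (lintegral_mono fun u => h1 _) ?_
  rw [lintegral_add_left measurable_const]
  refine ENNReal.add_lt_top.2 ⟨by simpa using hUf.lt_top, ?_⟩
  exact lintegral_scaleMixture_sq_lt_top hGm hCp hpush hΛ0 hΛ H hq

theorem memLp_scaleMixture_comp (hU : MeasurableSet U) (hGm : Measurable G)
    (hCp : Cp ≠ ∞)
    (hpush : ∀ φ : EuclideanSpace ℝ (Fin d) → ℝ≥0∞, Measurable φ →
      ∫⁻ u in U, φ (G u) ≤ Cp * ∫⁻ y, φ y)
    (hΛ0 : ∀ᵐ τ ∂Λ, 0 < τ) (hΛ : ∀ p : ℝ, -(ν / 2) ≤ p → Integrable (fun τ : ℝ => τ ^ p) Λ)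
    (H : 𝓢(EuclideanSpace ℝ (Fin d), ℝ)) {q : ℕ} (hq : (q : ℝ) ≤ ν + (d : ℝ) / 2) :
    MemLp (U.indicator fun u => scaleMixture Λ x₀ H q (G u)) 2 volume := by
  rw [memLp_indicator_iff_restrict hU]
  have hm := measurable_scaleMixture_integrand (x₀ := x₀) hGm H q
  refine ⟨hm.stronglyMeasurable.integral_prod_right.aestronglyMeasurable, ?_⟩
  rw [eLpNorm_lt_top_iff_lintegral_rpow_enorm_lt_top two_ne_zero ENNReal.ofNat_ne_top]
  refine lt_of_le_of_lt (lintegral_mono fun u => ?_)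
    (lintegral_scaleMixture_sq_lt_top (x₀ := x₀) hGm hCp hpush hΛ0 hΛ H hq)
  simp only [ENNReal.toReal_ofNat, ENNReal.rpow_two]
  exact pow_le_pow_left₀ zero_le (enorm_integral_le_lintegral_enorm _) 2

theorem hasDerivAt_euclidean_of_coord {g : ℝ → EuclideanSpace ℝ (Fin d)}
    {g' : Fin d → ℝ} {t : ℝ} (h : ∀ j, HasDerivAt (fun t => g t j) (g' j) t) :
    HasDerivAt g (∑ j, g' j • EuclideanSpace.single j (1 : ℝ)) t := by
  have h1 : HasDerivAt (fun t => ∑ j, g t j • EuclideanSpace.single j (1 : ℝ))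
      (∑ j, g' j • EuclideanSpace.single j (1 : ℝ)) t :=
    HasDerivAt.fun_sum fun j _ => (h j).smul_const _
  refine h1.congr_of_eventuallyEq (Eventually.of_forall fun t => ?_)
  have := (EuclideanSpace.basisFun (Fin d) ℝ).sum_repr (g t)
  simpa using this.symm

/-- The chain rule for a rescaled Schwartz function along a coordinate direction. -/
theorem hasLineDerivAt_schwartz_comp {v : EuclideanSpace ℝ (Fin s)}
    {P : Fin d → EuclideanSpace ℝ (Fin s) → ℝ} {u : EuclideanSpace ℝ (Fin s)}
    (hP : ∀ j, HasLineDerivAt ℝ (fun u => G u j) (P j u) u v)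
    (H : 𝓢(EuclideanSpace ℝ (Fin d), ℝ)) (r : ℝ) :
    HasLineDerivAt ℝ (fun u => H (r • (G u - x₀)))
      (∑ j, r * ((∂_{EuclideanSpace.single j (1 : ℝ)} H) (r • (G u - x₀)) * P j u)) u v := by
  have h1 : HasDerivAt (fun t : ℝ => G (u + t • v))
      (∑ j, P j u • EuclideanSpace.single j (1 : ℝ)) 0 := hasDerivAt_euclidean_of_coord hP
  have h2 : HasDerivAt (fun t : ℝ => r • (G (u + t • v) - x₀))
      (r • ∑ j, P j u • EuclideanSpace.single j (1 : ℝ)) 0 := (h1.sub_const x₀).const_smul r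
  have h3 : HasFDerivAt H (fderiv ℝ H (r • (G u - x₀))) (r • (G u - x₀)) :=
    (H.differentiable _).hasFDerivAt
  have h4 := HasFDerivAt.comp_hasDerivAt_of_eq (0 : ℝ) h3 h2 (by simp)
  have h5 : fderiv ℝ H (r • (G u - x₀)) (r • ∑ j, P j u • EuclideanSpace.single j (1 : ℝ)) =
      ∑ j, r * ((∂_{EuclideanSpace.single j (1 : ℝ)} H) (r • (G u - x₀)) * P j u) := by
    rw [map_smul, map_sum, smul_eq_mul, Finset.mul_sum]
    refine Finset.sum_congr rfl fun j _ => ?_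
    rw [map_smul, SchwartzMap.lineDerivOp_apply_eq_fderiv, smul_eq_mul]
    ring
  rw [h5] at h4
  exact h4

/-- The weak chain rule for scale mixtures. -/
theorem hasWeakLineDeriv_scaleMixture_comp (hU : IsOpen U)
    (hUf : volume U ≠ ∞) (hGm : Measurable G) (hCp : Cp ≠ ∞)
    (hpush : ∀ φ : EuclideanSpace ℝ (Fin d) → ℝ≥0∞, Measurable φ →
      ∫⁻ u in U, φ (G u) ≤ Cp * ∫⁻ y, φ y)
    (hΛ0 : ∀ᵐ τ ∂Λ, 0 < τ) (hΛ : ∀ p : ℝ, -(ν / 2) ≤ p → Integrable (fun τ : ℝ => τ ^ p) Λ)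
    (H : 𝓢(EuclideanSpace ℝ (Fin d), ℝ)) {q : ℕ} (hq : (q : ℝ) + 1 ≤ ν + (d : ℝ) / 2)
    {v : EuclideanSpace ℝ (Fin s)} {P : Fin d → EuclideanSpace ℝ (Fin s) → ℝ}
    (hP : ∀ j, ∀ u ∈ U, HasLineDerivAt ℝ (fun u => G u j) (P j u) u v)
    (hPb : ∀ j, ∃ C : ℝ, ∀ u ∈ U, |P j u| ≤ C)
    (hPm : ∀ j, MemLp (U.indicator (P j)) ∞ volume) :
    HasWeakLineDeriv U v (U.indicator fun u => scaleMixture Λ x₀ H q (G u))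
      (fun u => ∑ j, U.indicator
        (fun u => scaleMixture Λ x₀ (∂_{EuclideanSpace.single j (1 : ℝ)} H) (q + 1) (G u)) u *
          U.indicator (P j) u) := by
  intro ψ hψ hc hs
  have hUm := hU.measurableSet
  set e : Fin d → EuclideanSpace ℝ (Fin d) := fun j => EuclideanSpace.single j (1 : ℝ) with he
  have hdc : Continuous fun u => fderiv ℝ ψ u v := continuous_fderiv_test hψ v
  -- the weak derivative at a fixed scale
  have hfix : ∀ r : ℝ, ∫ u in U, H (r • (G u - x₀)) * fderiv ℝ ψ u v =
      -∑ j, ∫ u in U, r * (∂_{e j} H) (r • (G u - x₀)) * (U.indicator (P j) u * ψ u) := by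
    intro r
    have hb : ∀ H : 𝓢(EuclideanSpace ℝ (Fin d), ℝ), ∀ u ∈ U, |H (r • (G u - x₀))| ≤
        (SchwartzMap.seminorm ℝ 0 0) H := fun H u _ => SchwartzMap.norm_le_seminorm ℝ H _
    have hm : ∀ H : 𝓢(EuclideanSpace ℝ (Fin d), ℝ),
        Measurable (U.indicator fun u => H (r • (G u - x₀))) := by
      intro H
      have hH := H.continuous.measurable
      exact Measurable.indicator (by fun_prop) hUm
    have hd : ∀ u ∈ U, HasLineDerivAt ℝ (fun u => H (r • (G u - x₀)))
        (∑ j, r * ((∂_{e j} H) (r • (G u - x₀)) * P j u)) u v := fun u hu =>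
      hasLineDerivAt_schwartz_comp (fun j => hP j u hu) H r
    choose C hC using hPb
    have hd' : ∀ u ∈ U, |∑ j, r * ((∂_{e j} H) (r • (G u - x₀)) * P j u)| ≤
        ∑ j, |r| * ((SchwartzMap.seminorm ℝ 0 0) (∂_{e j} H) * |C j|) := by
      intro u hu
      refine (Finset.abs_sum_le_sum_abs _ _).trans (Finset.sum_le_sum fun j _ => ?_)
      rw [abs_mul, abs_mul]
      refine mul_le_mul_of_nonneg_left ?_ (abs_nonneg r)
      exact mul_le_mul (hb _ u hu) ((hC j u hu).trans (le_abs_self _)) (abs_nonneg _)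
        (apply_nonneg _ _)
    have hw := hasWeakLineDeriv_of_hasLineDerivAt hU hd
      ((memLp_top_indicator (hm H) (hb H)).locallyIntegrable le_top)
      ((memLp_top_indicator (measurable_indicator_lineDeriv hU (hm H) hd)
        hd').locallyIntegrable le_top) ψ hψ hc hs
    have e1 : ∀ (g k : EuclideanSpace ℝ (Fin s) → ℝ),
        ∫ u, U.indicator g u * k u = ∫ u in U, g u * k u := by
      intro g k
      rw [← integral_indicator hUm]
      refine integral_congr_ae (Eventually.of_forall fun u => ?_)
      by_cases hu : u ∈ U <;> simp [hu]
    rw [e1, e1] at hw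
    rw [hw]
    congr 1
    have hint : ∀ j, Integrable (fun u => r * (∂_{e j} H) (r • (G u - x₀)) *
        (U.indicator (P j) u * ψ u)) (volume.restrict U) := by
      intro j
      have h1 := integrable_mul_test ((hPm j).locallyIntegrable le_top) hψ.continuous hc
      refine (h1.restrict (s := U)).bdd_mul
        (c := |r| * (SchwartzMap.seminorm ℝ 0 0) (∂_{e j} H)) ?_
        (Eventually.of_forall fun u => ?_)
      · have hH := (∂_{e j} H).continuous.measurable
        exact Measurable.aestronglyMeasurable (by fun_prop)
      · rw [norm_mul]
        exact mul_le_mul_of_nonneg_left (SchwartzMap.norm_le_seminorm ℝ _ _) (abs_nonneg r)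
    rw [← integral_finsetSum _ fun j _ => hint j]
    refine setIntegral_congr_fun hUm fun u hu => ?_
    simp only [indicator_of_mem hu, Finset.sum_mul]
    exact Finset.sum_congr rfl fun j _ => by ring
  -- Fubini
  have hbdd : ∀ b : EuclideanSpace ℝ (Fin s) → ℝ, MemLp b ∞ volume →
      ∀ (H : 𝓢(EuclideanSpace ℝ (Fin d), ℝ)) (q : ℕ), (q : ℝ) ≤ ν + (d : ℝ) / 2 →
      Integrable (uncurry fun (u : EuclideanSpace ℝ (Fin s)) (τ : ℝ) => b u *
        (τ ^ (-(q : ℝ) / 2) * H ((√τ)⁻¹ • (G u - x₀)))) ((volume.restrict U).prod Λ) := by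
    intro b hb H q hq
    have h1 := integrable_scaleMixture_integrand (x₀ := x₀) hUf hGm hCp hpush hΛ0 hΛ H hq
    have hae : ∀ᵐ u ∂(volume.restrict U), ‖b u‖ ≤ (eLpNorm b ∞ volume).toReal :=
      ae_restrict_of_ae (ae_norm_le_of_memLp_top hb)
    refine h1.bdd_mul (f := fun p : EuclideanSpace ℝ (Fin s) × ℝ => b p.1) ?_
      (Measure.quasiMeasurePreserving_fst.ae hae)
    exact hb.1.restrict.comp_fst
  have hswap : ∀ b : EuclideanSpace ℝ (Fin s) → ℝ, MemLp b ∞ volume →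
      ∀ (H : 𝓢(EuclideanSpace ℝ (Fin d), ℝ)) (q : ℕ), (q : ℝ) ≤ ν + (d : ℝ) / 2 →
      ∫ u in U, b u * scaleMixture Λ x₀ H q (G u) =
        ∫ τ, τ ^ (-(q : ℝ) / 2) * (∫ u in U, H ((√τ)⁻¹ • (G u - x₀)) * b u) ∂Λ := by
    intro b hb H q hq
    simp only [scaleMixture, ← integral_const_mul]
    rw [integral_integral_swap (hbdd b hb H q hq)]
    refine integral_congr_ae (Eventually.of_forall fun τ => ?_)
    simp only
    refine integral_congr_ae (Eventually.of_forall fun u => ?_)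
    simp only
    ring
  have hψb : MemLp ψ ∞ volume := hψ.continuous.memLp_of_hasCompactSupport hc
  have hdb : MemLp (fun u => fderiv ℝ ψ u v) ∞ volume :=
    hdc.memLp_of_hasCompactSupport (hc.fderiv_apply ℝ v)
  have hPψ : ∀ j, MemLp (fun u => U.indicator (P j) u * ψ u) ∞ volume := fun j =>
    hψb.mul (hPm j)
  have hq0 : (q : ℝ) ≤ ν + (d : ℝ) / 2 := by linarith
  have hq1 : ((q + 1 : ℕ) : ℝ) ≤ ν + (d : ℝ) / 2 := by push_cast; exact hq
  have hL : ∫ u, (U.indicator fun u => scaleMixture Λ x₀ H q (G u)) u * fderiv ℝ ψ u v =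
      ∫ u in U, fderiv ℝ ψ u v * scaleMixture Λ x₀ H q (G u) := by
    rw [← integral_indicator hUm]
    refine integral_congr_ae (Eventually.of_forall fun u => ?_)
    by_cases hu : u ∈ U <;> simp [hu, mul_comm]
  have hinner : ∀ j, Integrable (fun τ : ℝ => τ ^ (-((q + 1 : ℕ) : ℝ) / 2) *
      ∫ u in U, (∂_{e j} H) ((√τ)⁻¹ • (G u - x₀)) * (U.indicator (P j) u * ψ u)) Λ := by
    intro j
    refine (hbdd _ (hPψ j) (∂_{e j} H) (q + 1) hq1).integral_prod_right.congr
      (Eventually.of_forall fun τ => ?_)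
    simp only [uncurry_apply_pair, ← integral_const_mul]
    refine integral_congr_ae (Eventually.of_forall fun u => ?_)
    simp only
    ring
  have hR : ∫ u, (∑ j, U.indicator
        (fun u => scaleMixture Λ x₀ (∂_{e j} H) (q + 1) (G u)) u *
          U.indicator (P j) u) * ψ u =
      ∑ j, ∫ u in U, (U.indicator (P j) u * ψ u) *
        scaleMixture Λ x₀ (∂_{e j} H) (q + 1) (G u) := by
    rw [← integral_finsetSum]
    · rw [← integral_indicator hUm]
      refine integral_congr_ae (Eventually.of_forall fun u => ?_)
      by_cases hu : u ∈ U
      · simp only [indicator_of_mem hu, Finset.sum_mul]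
        exact Finset.sum_congr rfl fun j _ => by ring
      · simp [hu]
    · intro j _
      refine (hbdd _ (hPψ j) (∂_{e j} H) (q + 1) hq1).integral_prod_left.congr
        (Eventually.of_forall fun u => ?_)
      simp only [uncurry_apply_pair, scaleMixture, ← integral_const_mul]
  rw [hL, hswap _ hdb H q hq0, hR, Finset.sum_congr rfl fun j _ =>
    hswap _ (hPψ j) (∂_{e j} H) (q + 1) hq1, ← integral_finsetSum _ fun j _ => hinner j,
    ← integral_neg]
  refine integral_congr_ae ?_
  filter_upwards [hΛ0] with τ hτ
  rw [hfix (√τ)⁻¹, mul_neg, Finset.mul_sum]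
  congr 1
  refine Finset.sum_congr rfl fun j _ => ?_
  have hτq : τ ^ (-((q + 1 : ℕ) : ℝ) / 2) = τ ^ (-(q : ℝ) / 2) * (√τ)⁻¹ := by
    rw [Real.sqrt_eq_rpow, ← Real.rpow_neg hτ.le, ← Real.rpow_add hτ]
    congr 1; push_cast; ring
  rw [hτq, mul_assoc, ← integral_const_mul (√τ)⁻¹]
  congr 1
  refine integral_congr_ae (Eventually.of_forall fun u => ?_)
  simp only
  ring

/-- A scale mixture composed with a map having bounded partial derivatives is Sobolev regular. -/
theorem sobolevOn_scaleMixture_comp (hU : IsOpen U) (hUb : Bornology.IsBounded U)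
    (hGm : Measurable G) (hCp : Cp ≠ ∞)
    (hpush : ∀ φ : EuclideanSpace ℝ (Fin d) → ℝ≥0∞, Measurable φ →
      ∫⁻ u in U, φ (G u) ≤ Cp * ∫⁻ y, φ y)
    (hΛ0 : ∀ᵐ τ ∂Λ, 0 < τ) (hΛ : ∀ p : ℝ, -(ν / 2) ≤ p → Integrable (fun τ : ℝ => τ ^ p) Λ)
    {P : Fin s → Fin d → EuclideanSpace ℝ (Fin s) → ℝ} {l : ℕ}
    (hP : ∀ i j, ∀ u ∈ U, HasLineDerivAt ℝ (fun u => G u j) (P i j u) u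
      (EuclideanSpace.single i 1))
    (hPb : ∀ i j, ∃ C : ℝ, ∀ u ∈ U, |P i j u| ≤ C)
    (hPs : ∀ i j, SobolevOn ∞ U U (l - 1) (U.indicator (P i j)))
    {m : ℕ} (hml : m ≤ l) (hm : (m : ℝ) ≤ ν + (d : ℝ) / 2) :
    ∀ (n q : ℕ), q + n ≤ m → ∀ H : 𝓢(EuclideanSpace ℝ (Fin d), ℝ),
      SobolevOn 2 U U n (U.indicator fun u => scaleMixture Λ x₀ H q (G u)) := by
  have hUf : volume U ≠ ∞ := hUb.measure_lt_top.ne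
  have hle : ∀ q : ℕ, q ≤ m → (q : ℝ) ≤ ν + (d : ℝ) / 2 := fun q hq =>
    (Nat.cast_le.2 hq).trans hm
  intro n
  induction n with
  | zero =>
    intro q hq H
    exact ⟨memLp_scaleMixture_comp hU.measurableSet hGm hCp hpush hΛ0 hΛ H (hle q (by omega)),
      support_indicator_subset⟩
  | succ n ih =>
    intro q hq H
    refine ⟨⟨memLp_scaleMixture_comp hU.measurableSet hGm hCp hpush hΛ0 hΛ H (hle q (by omega)),
      support_indicator_subset⟩, fun v => ?_⟩
    have hd : ∀ i, SobolevOn 2 U U n (fun u => ∑ j, U.indicator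
        (fun u => scaleMixture Λ x₀ (∂_{EuclideanSpace.single j (1 : ℝ)} H) (q + 1) (G u)) u *
          U.indicator (P i j) u) := fun i =>
      SobolevOn.sum one_le_two _ fun j _ => (ih (q + 1) (by omega) _).mul hU hUb
        ((hPs i j).of_le (by omega))
    have hw := (HasWeakLineDeriv.sum_dir Finset.univ (fun k => v k)
      ((memLp_scaleMixture_comp (x₀ := x₀) hU.measurableSet hGm hCp hpush hΛ0 hΛ H
        (hle q (by omega))).locallyIntegrable one_le_two)
      (fun i => (hd i).memLp.locallyIntegrable one_le_two)
      (fun i => hasWeakLineDeriv_scaleMixture_comp hU hUf hGm hCp hpush hΛ0 hΛ H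
        (by have := hle (q + 1) (by omega); push_cast at this; exact this)
        (hP i) (hPb i) (fun j => (hPs i j).memLp))).1
    have hv : ∑ i, v i • EuclideanSpace.single i (1 : ℝ) = v := by
      have := (EuclideanSpace.basisFun (Fin s) ℝ).sum_repr v
      simpa using this
    rw [hv] at hw
    exact ⟨_, hw, SobolevOn.sum one_le_two _ fun i _ => (hd i).const_mul _⟩

end ScaleMixture

section SpectralBound

open Set Function Filter
open scoped Topology ENNReal SchwartzMap FourierTransform

set_option linter.unusedSectionVars false

variable {E : Type*} [NormedAddCommGroup E] [InnerProductSpace ℝ E] [FiniteDimensional ℝ E]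
  [MeasurableSpace E] [BorelSpace E]

/-- The character `exp (2πi ⟪ξ, x⟫)`. -/
noncomputable def planeWave (ξ x : E) : ℂ :=
  Complex.exp (((2 * Real.pi * inner ℝ ξ x : ℝ) : ℂ) * Complex.I)

theorem norm_planeWave (ξ x : E) : ‖planeWave ξ x‖ = 1 := Complex.norm_exp_ofReal_mul_I _

theorem continuous_planeWave : Continuous (uncurry (planeWave (E := E))) := by
  simp only [planeWave, uncurry_def]
  fun_prop

theorem planeWave_add_smul (ξ x w : E) (t : ℝ) :
    planeWave ξ (x + t • w) = planeWave ξ x * planeWave w (t • ξ) := by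
  rw [planeWave, planeWave, planeWave, ← Complex.exp_add]
  congr 1
  rw [inner_add_right, inner_smul_right, inner_smul_right, real_inner_comm w ξ]
  push_cast
  ring

theorem SchwartzMap.eq_integral_planeWave (g : 𝓢(E, ℂ)) (x : E) :
    g x = ∫ ξ, planeWave ξ x * (𝓕 g) ξ := by
  have h : 𝓕⁻ (𝓕 g) = g := FourierTransform.fourierInv_fourier_eq g
  conv_lhs => rw [← h, SchwartzMap.fourierInv_coe, Real.fourierInv_eq']
  rfl

theorem SchwartzMap.fourierInv_eq_integral_planeWave (θ : 𝓢(E, ℂ)) (ζ : E) :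
    (𝓕⁻ θ) ζ = ∫ w, planeWave w ζ * θ w := by
  rw [SchwartzMap.fourierInv_coe, Real.fourierInv_eq']
  rfl

theorem integral_translate_mul (g θ : 𝓢(E, ℂ)) (t : ℝ) (x : E) :
    ∫ w, g (x + t • w) * θ w = ∫ ξ, planeWave ξ x * ((𝓕 g) ξ * (𝓕⁻ θ) (t • ξ)) := by
  have hint : Integrable (uncurry fun w ξ : E =>
      planeWave ξ (x + t • w) * (θ w * (𝓕 g) ξ)) (volume.prod volume) := by
    have h1 : Integrable (fun p : E × E => θ p.1 * (𝓕 g) p.2) (volume.prod volume) :=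
      θ.integrable.mul_prod (𝓕 g).integrable
    refine h1.bdd_mul (f := fun p : E × E => planeWave p.2 (x + t • p.1)) (c := 1) ?_
      (Eventually.of_forall fun p => (norm_planeWave _ _).le)
    refine Continuous.aestronglyMeasurable ?_
    exact continuous_planeWave.comp (f := fun p : E × E => (p.2, x + t • p.1)) (by fun_prop)
  have h2 : ∀ w, g (x + t • w) * θ w = ∫ ξ, planeWave ξ (x + t • w) * (θ w * (𝓕 g) ξ) := by
    intro w
    rw [g.eq_integral_planeWave, ← integral_mul_const]
    exact integral_congr_ae (Eventually.of_forall fun ξ => by simp only; ring)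
  simp only [h2]
  rw [integral_integral_swap hint]
  refine integral_congr_ae (Eventually.of_forall fun ξ => ?_)
  simp only
  rw [θ.fourierInv_eq_integral_planeWave, ← integral_const_mul, ← integral_const_mul]
  refine integral_congr_ae (Eventually.of_forall fun w => ?_)
  simp only [planeWave_add_smul]
  ring

theorem SchwartzMap.exists_norm_le_inv_pow (Θ : 𝓢(E, ℂ)) (m : ℕ) :
    ∃ C : ℝ, 0 ≤ C ∧ ∀ ξ, ‖Θ ξ‖ ≤ C * ((1 + ‖ξ‖) ^ m)⁻¹ := by
  refine ⟨2 ^ m * ((Finset.Iic (m, 0)).sup fun m => SchwartzMap.seminorm ℝ m.1 m.2) Θ,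
    by positivity, fun ξ => ?_⟩
  have h := SchwartzMap.one_add_le_sup_seminorm_apply (𝕜 := ℝ) (m := (m, 0)) (k := m) (n := 0)
    le_rfl le_rfl Θ ξ
  rw [norm_iteratedFDeriv_zero] at h
  rw [← div_eq_mul_inv, le_div_iff₀ (by positivity), mul_comm]
  exact h

theorem integral_pow_div_one_add_mul_pow (k : ℕ) {R : ℝ} (hR : 0 ≤ R) :
    ∫ t in (0 : ℝ)..1, t ^ k * ((1 + t * R) ^ (k + 2))⁻¹ =
      ((k : ℝ) + 1)⁻¹ * ((1 + R) ^ (k + 1))⁻¹ := by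
  have hpos : ∀ t ∈ uIcc (0 : ℝ) 1, 0 < 1 + t * R := by
    intro t ht
    rw [uIcc_of_le zero_le_one] at ht
    have := mul_nonneg ht.1 hR
    linarith
  have hd : ∀ t ∈ uIcc (0 : ℝ) 1, HasDerivAt
      (fun t : ℝ => ((k : ℝ) + 1)⁻¹ * (t / (1 + t * R)) ^ (k + 1))
      (t ^ k * ((1 + t * R) ^ (k + 2))⁻¹) t := by
    intro t ht
    have hp := hpos t ht
    have h1 : HasDerivAt (fun t : ℝ => 1 + t * R) R t := by
      simpa using ((hasDerivAt_id t).mul_const R).const_add 1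
    have h2 := (((hasDerivAt_id t).div h1 hp.ne').pow (k + 1)).const_mul (((k : ℝ) + 1)⁻¹)
    refine h2.congr_deriv ?_
    simp only [id, Pi.div_apply]
    push_cast
    have hk : ((k : ℝ) + 1) ≠ 0 := by positivity
    rw [div_pow]
    field_simp
    ring
  rw [intervalIntegral.integral_eq_sub_of_hasDerivAt hd]
  · simp
  · refine ContinuousOn.intervalIntegrable ?_
    refine ContinuousOn.mul (by fun_prop) (ContinuousOn.inv₀ (by fun_prop) fun t ht => ?_)
    exact (pow_pos (hpos t ht) _).ne'

theorem SchwartzMap.exists_norm_integral_pow_mul_le (Θ : 𝓢(E, ℂ)) (k : ℕ) :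
    ∃ C : ℝ, 0 ≤ C ∧ ∀ ξ, ‖∫ t in (0 : ℝ)..1, ((t ^ k : ℝ) : ℂ) * Θ (t • ξ)‖ ≤
      C * ((1 + ‖ξ‖) ^ (k + 1))⁻¹ := by
  obtain ⟨C, hC, hb⟩ := Θ.exists_norm_le_inv_pow (k + 2)
  refine ⟨C * ((k : ℝ) + 1)⁻¹, by positivity, fun ξ => ?_⟩
  rw [mul_assoc, ← integral_pow_div_one_add_mul_pow k (norm_nonneg ξ),
    ← intervalIntegral.integral_const_mul]
  refine intervalIntegral.norm_integral_le_of_norm_le zero_le_one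
    (Eventually.of_forall fun t ht => ?_) ?_
  · rw [norm_mul, Complex.norm_real, Real.norm_of_nonneg (pow_nonneg ht.1.le k)]
    have h1 := hb (t • ξ)
    rw [norm_smul, Real.norm_of_nonneg ht.1.le] at h1
    calc t ^ k * ‖Θ (t • ξ)‖ ≤ t ^ k * (C * ((1 + t * ‖ξ‖) ^ (k + 2))⁻¹) :=
          mul_le_mul_of_nonneg_left h1 (pow_nonneg ht.1.le k)
      _ = _ := by ring
  · refine ContinuousOn.intervalIntegrable ?_
    refine ContinuousOn.mul (by fun_prop) (ContinuousOn.mul (by fun_prop)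
      (ContinuousOn.inv₀ (by fun_prop) fun t ht => ?_))
    rw [uIcc_of_le zero_le_one] at ht
    have := mul_nonneg ht.1 (norm_nonneg ξ)
    exact (pow_pos (by linarith) _).ne'

theorem continuous_integral_pow_mul (Θ : 𝓢(E, ℂ)) (k : ℕ) :
    Continuous fun ξ : E => ∫ t in (0 : ℝ)..1, ((t ^ k : ℝ) : ℂ) * Θ (t • ξ) := by
  refine intervalIntegral.continuous_parametric_intervalIntegral_of_continuous' ?_ 0 1
  have := Θ.continuous
  simp only [uncurry_def]
  fun_prop

theorem integral_pow_mul_translate (g θ : 𝓢(E, ℂ)) (k : ℕ) (x : E) :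
    ∫ t in (0 : ℝ)..1, ((t ^ k : ℝ) : ℂ) * ∫ w, g (x + t • w) * θ w =
      ∫ ξ, planeWave ξ x *
        ((𝓕 g) ξ * ∫ t in (0 : ℝ)..1, ((t ^ k : ℝ) : ℂ) * (𝓕⁻ θ) (t • ξ)) := by
  simp only [integral_translate_mul, intervalIntegral.integral_of_le zero_le_one,
    ← integral_const_mul]
  generalize 𝓕⁻ θ = Θ
  generalize 𝓕 g = γ
  have hc1 := Θ.continuous
  have hc2 := γ.continuous
  have hint : Integrable (uncurry fun (t : ℝ) (ξ : E) =>
      (((t ^ k : ℝ) : ℂ) * (planeWave ξ x * Θ (t • ξ))) * γ ξ)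
      ((volume.restrict (Ioc (0 : ℝ) 1)).prod volume) := by
    have h1 : Integrable (fun p : ℝ × E => γ p.2)
        ((volume.restrict (Ioc (0 : ℝ) 1)).prod volume) :=
      γ.integrable.comp_snd _
    have h2 : Integrable (fun p : ℝ × E =>
        ((p.1 ^ k : ℝ) : ℂ) * (planeWave p.2 x * Θ (p.1 • p.2)) * γ p.2)
        ((volume.restrict (Ioc (0 : ℝ) 1)).prod volume) := by
      refine Integrable.bdd_mul (c := SchwartzMap.seminorm ℝ 0 0 Θ) h1 ?_ ?_
      · refine Continuous.aestronglyMeasurable ?_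
        have hp : Continuous fun p : ℝ × E => planeWave p.2 x :=
          continuous_planeWave.comp (f := fun p : ℝ × E => (p.2, x)) (by fun_prop)
        fun_prop
      · have h01 : ∀ᵐ t ∂(volume.restrict (Ioc (0 : ℝ) 1)), t ∈ Ioc (0 : ℝ) 1 :=
          ae_restrict_mem measurableSet_Ioc
        filter_upwards [Measure.quasiMeasurePreserving_fst.ae h01] with p hp
        rw [norm_mul, norm_mul, norm_planeWave, one_mul, Complex.norm_real,
          Real.norm_of_nonneg (pow_nonneg hp.1.le k)]
        exact (mul_le_of_le_one_left (norm_nonneg _) (pow_le_one₀ hp.1.le hp.2)).trans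
          (SchwartzMap.norm_le_seminorm ℝ _ _)
    exact h2
  have hL : ∀ t : ℝ, ∀ ξ : E, ((t ^ k : ℝ) : ℂ) * (planeWave ξ x * (γ ξ * Θ (t • ξ))) =
      (((t ^ k : ℝ) : ℂ) * (planeWave ξ x * Θ (t • ξ))) * γ ξ := fun t ξ => by ring
  simp only [hL]
  rw [integral_integral_swap hint]
  refine integral_congr_ae (Eventually.of_forall fun ξ => ?_)
  refine integral_congr_ae (Eventually.of_forall fun t => ?_)
  simp only
  ring

/-- The Fourier transform of the discrete measure with weights `a`. -/
noncomputable def trigSum (a : E →₀ ℝ) (ξ : E) : ℂ := a.sum fun u r => (r : ℂ) * planeWave ξ u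

/-- The negative order Sobolev norm of the discrete measure with weights `a`. -/
noncomputable def dualNorm (m : ℕ) (a : E →₀ ℝ) : ℝ :=
  √(∫ ξ, ‖trigSum a ξ‖ ^ 2 * ((1 + ‖ξ‖ ^ 2) ^ m)⁻¹)

theorem continuous_trigSum (a : E →₀ ℝ) : Continuous (trigSum a) := by
  unfold trigSum Finsupp.sum
  refine continuous_finsetSum _ fun u _ => continuous_const.mul ?_
  exact continuous_planeWave.comp (f := fun ξ : E => (ξ, u)) (by fun_prop)

theorem norm_trigSum_le (a : E →₀ ℝ) (ξ : E) : ‖trigSum a ξ‖ ≤ a.sum fun _ r => |r| := by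
  refine (norm_sum_le _ _).trans (Finset.sum_le_sum fun u _ => ?_)
  rw [norm_mul, norm_planeWave, mul_one, Complex.norm_real, Real.norm_eq_abs]

theorem integrable_inv_one_add_norm_sq_pow {m : ℕ} (hm : Module.finrank ℝ E < 2 * m) :
    Integrable fun ξ : E => ((1 + ‖ξ‖ ^ 2) ^ m)⁻¹ := by
  have h : ((Module.finrank ℝ E : ℕ) : ℝ) < 2 * m := by exact_mod_cast hm
  refine (integrable_rpow_neg_one_add_norm_sq (μ := volume) h).congr
    (Eventually.of_forall fun ξ => ?_)
  simp only
  rw [show (-(2 * (m : ℝ)) / 2) = -(m : ℝ) by ring, Real.rpow_neg (by positivity),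
    Real.rpow_natCast]

theorem integrable_trigSum_sq {m : ℕ} (hm : Module.finrank ℝ E < 2 * m) (a : E →₀ ℝ) :
    Integrable fun ξ => ‖trigSum a ξ‖ ^ 2 * ((1 + ‖ξ‖ ^ 2) ^ m)⁻¹ := by
  refine (integrable_inv_one_add_norm_sq_pow hm).bdd_mul (c := (a.sum fun _ r => |r|) ^ 2)
    ((continuous_trigSum a).norm.pow 2).aestronglyMeasurable (Eventually.of_forall fun ξ => ?_)
  rw [Real.norm_of_nonneg (by positivity)]
  exact pow_le_pow_left₀ (norm_nonneg _) (norm_trigSum_le a ξ) 2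

theorem abs_sum_le_of_spectral {m : ℕ} (hm : Module.finrank ℝ E < 2 * m) (g : 𝓢(E, ℂ))
    {B : E → ℂ} (hB : Continuous B) {C : ℝ} (hC : 0 ≤ C)
    (hb : ∀ ξ, ‖B ξ‖ ≤ C * ((1 + ‖ξ‖) ^ m)⁻¹) {φ : E → ℝ} {a : E →₀ ℝ}
    (hφ : ∀ u ∈ a.support, (φ u : ℂ) = ∫ ξ, planeWave ξ u * ((𝓕 g) ξ * B ξ)) :
    |a.sum fun u r => r * φ u| ≤ C * √(∫ x, ‖g x‖ ^ 2) * dualNorm m a := by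
  have hbC : ∀ ξ, ‖B ξ‖ ≤ C := fun ξ => (hb ξ).trans
    (mul_le_of_le_one_right hC (inv_le_one_of_one_le₀ (one_le_pow₀ (by
      linarith [norm_nonneg ξ]))))
  have hint : Integrable fun ξ => (𝓕 g) ξ * B ξ := by
    simpa only [mul_comm] using (𝓕 g).integrable.bdd_mul hB.aestronglyMeasurable
      (Eventually.of_forall hbC)
  have hintu : ∀ u, Integrable fun ξ => planeWave ξ u * ((𝓕 g) ξ * B ξ) := fun u =>
    hint.bdd_mul (c := 1) (continuous_planeWave.comp (f := fun ξ : E => (ξ, u))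
      (by fun_prop)).aestronglyMeasurable (Eventually.of_forall fun ξ => (norm_planeWave ξ u).le)
  have h1 : ((a.sum fun u r => r * φ u : ℝ) : ℂ) = ∫ ξ, (𝓕 g) ξ * B ξ * trigSum a ξ := by
    rw [Finsupp.sum, Complex.ofReal_sum]
    simp only [trigSum, Finsupp.sum, Finset.mul_sum]
    rw [integral_finsetSum]
    · refine Finset.sum_congr rfl fun u hu => ?_
      rw [Complex.ofReal_mul, hφ u hu, ← integral_const_mul]
      exact integral_congr_ae (Eventually.of_forall fun ξ => by simp only; ring)
    · intro u _
      refine ((hintu u).const_mul (a u : ℂ)).congr (Eventually.of_forall fun ξ => ?_)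
      simp only
      ring
  have h2 : |a.sum fun u r => r * φ u| ≤ ∫ ξ, ‖(𝓕 g) ξ‖ * (‖B ξ‖ * ‖trigSum a ξ‖) := by
    rw [← Real.norm_eq_abs, ← Complex.norm_real, h1]
    refine (norm_integral_le_integral_norm _).trans (le_of_eq ?_)
    simp only [norm_mul, mul_assoc]
  have hsq : ∀ ξ, (‖B ξ‖ * ‖trigSum a ξ‖) ^ 2 ≤
      C ^ 2 * (‖trigSum a ξ‖ ^ 2 * ((1 + ‖ξ‖ ^ 2) ^ m)⁻¹) := by
    intro ξ
    have h3 : ‖B ξ‖ ^ 2 ≤ C ^ 2 * ((1 + ‖ξ‖ ^ 2) ^ m)⁻¹ := by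
      refine (pow_le_pow_left₀ (norm_nonneg _) (hb ξ) 2).trans ?_
      rw [mul_pow, inv_pow, ← pow_mul, mul_comm m 2, pow_mul]
      refine mul_le_mul_of_nonneg_left ?_ (sq_nonneg C)
      refine inv_anti₀ (by positivity) (pow_le_pow_left₀ (by positivity) ?_ m)
      nlinarith [norm_nonneg ξ]
    rw [mul_pow]
    calc ‖B ξ‖ ^ 2 * ‖trigSum a ξ‖ ^ 2
        ≤ C ^ 2 * ((1 + ‖ξ‖ ^ 2) ^ m)⁻¹ * ‖trigSum a ξ‖ ^ 2 :=
          mul_le_mul_of_nonneg_right h3 (by positivity)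
      _ = _ := by ring
  have hBT : Continuous fun ξ => ‖B ξ‖ * ‖trigSum a ξ‖ := hB.norm.mul (continuous_trigSum a).norm
  have hi := (integrable_trigSum_sq hm a).const_mul (C ^ 2)
  have hBTi : Integrable fun ξ => (‖B ξ‖ * ‖trigSum a ξ‖) ^ 2 :=
    hi.mono' (hBT.pow 2).aestronglyMeasurable (Eventually.of_forall fun ξ => by
      rw [Real.norm_of_nonneg (by positivity)]
      exact hsq ξ)
  have hmem : MemLp (fun ξ => ‖B ξ‖ * ‖trigSum a ξ‖) 2 volume :=
    (memLp_two_iff_integrable_sq hBT.aestronglyMeasurable).2 hBTi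
  have hcs := integral_mul_le_Lp_mul_Lq_of_nonneg (μ := volume) Real.HolderConjugate.two_two
    (f := fun ξ => ‖(𝓕 g) ξ‖) (g := fun ξ => ‖B ξ‖ * ‖trigSum a ξ‖)
    (Eventually.of_forall fun ξ => norm_nonneg _)
    (Eventually.of_forall fun ξ => by positivity)
    (by simpa using ((𝓕 g).memLp 2 volume).norm) (by simpa using hmem)
  simp only [Real.rpow_two] at hcs
  rw [← Real.sqrt_eq_rpow, ← Real.sqrt_eq_rpow, SchwartzMap.integral_norm_sq_fourier] at hcs
  refine (h2.trans hcs).trans ?_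
  have h4 : √(∫ ξ, (‖B ξ‖ * ‖trigSum a ξ‖) ^ 2) ≤ C * dualNorm m a := by
    rw [dualNorm, ← Real.sqrt_sq hC, ← Real.sqrt_mul (sq_nonneg C), ← integral_const_mul]
    refine Real.sqrt_le_sqrt ?_
    exact integral_mono hBTi hi hsq
  calc _ ≤ √(∫ x, ‖g x‖ ^ 2) * (C * dualNorm m a) :=
        mul_le_mul_of_nonneg_left h4 (Real.sqrt_nonneg _)
    _ = _ := by ring

end SpectralBound

section ConeDuality

open Set Function Filter Metric
open scoped Topology SchwartzMap FourierTransform ContDiff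

set_option linter.unusedSectionVars false

variable {E : Type*} [NormedAddCommGroup E] [InnerProductSpace ℝ E] [FiniteDimensional ℝ E]
  [MeasurableSpace E] [BorelSpace E]

/-- A smooth function with compact support. -/
structure IsTestFun (f : E → ℝ) : Prop where
  contDiff : ContDiff ℝ ∞ f
  hasCompactSupport : HasCompactSupport f

/-- The average of `γ` over the rescaled directions `x + t • w` with weight `θ`. -/
noncomputable def dirAvg (θ γ : E → ℝ) (t : ℝ) (x : E) : ℝ := ∫ w, γ (x + t • w) * θ w

/-- The moment of order `k` over the scales of the directional averages. -/
noncomputable def dirMoment (k : ℕ) (θ γ : E → ℝ) (x : E) : ℝ :=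
  ∫ t in (0 : ℝ)..1, t ^ k * dirAvg θ γ t x

namespace IsTestFun

variable {f γ θ : E → ℝ}

theorem integrable (hf : IsTestFun f) : Integrable f :=
  hf.contDiff.continuous.integrable_of_hasCompactSupport hf.hasCompactSupport

theorem exists_bound (hf : IsTestFun f) : ∃ C, ∀ x, ‖f x‖ ≤ C :=
  hf.contDiff.continuous.bounded_above_of_compact_support hf.hasCompactSupport

theorem fderiv_apply (hf : IsTestFun f) (v : E) : IsTestFun fun x => fderiv ℝ f x v :=
  ⟨contDiff_fderiv_test hf.contDiff v, hf.hasCompactSupport.fderiv_apply ℝ v⟩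

theorem inner_mul (hf : IsTestFun f) (v : E) : IsTestFun fun x => inner ℝ v x * f x :=
  ⟨(contDiff_const.inner ℝ contDiff_id).mul hf.contDiff, hf.hasCompactSupport.mul_left⟩

theorem ofReal_comp (hf : IsTestFun f) :
    ∃ g : 𝓢(E, ℂ), ∀ x, g x = (f x : ℂ) :=
  ⟨(hf.hasCompactSupport.comp_left Complex.ofReal_zero).toSchwartzMap
    (Complex.ofRealCLM.contDiff.comp hf.contDiff), fun _ => rfl⟩

theorem integrable_dirAvg (hγ : IsTestFun γ) (hθ : IsTestFun θ) (t : ℝ) (x : E) :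
    Integrable fun w => γ (x + t • w) * θ w := by
  obtain ⟨C, hC⟩ := hγ.exists_bound
  have := hγ.contDiff.continuous
  exact hθ.integrable.bdd_mul (Continuous.aestronglyMeasurable (by fun_prop))
    (Eventually.of_forall fun w => hC _)

theorem continuous_dirAvg (hγ : IsTestFun γ) (hθ : IsTestFun θ) (x : E) :
    Continuous fun t => dirAvg θ γ t x := by
  obtain ⟨C, hC⟩ := hγ.exists_bound
  have := hγ.contDiff.continuous
  refine continuous_of_dominated (bound := fun w => C * ‖θ w‖)
    (fun t => (hγ.integrable_dirAvg hθ t x).1) (fun t => Eventually.of_forall fun w => ?_)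
    (hθ.integrable.norm.const_mul C) (Eventually.of_forall fun w => by fun_prop)
  rw [norm_mul]
  exact mul_le_mul_of_nonneg_right (hC _) (norm_nonneg _)

theorem hasDerivAt_dirAvg {ι : Type*} [Fintype ι] (b : OrthonormalBasis ι ℝ E)
    (hγ : IsTestFun γ) (hθ : IsTestFun θ) (x : E) (t : ℝ) :
    HasDerivAt (fun t => dirAvg θ γ t x)
      (∑ i, dirAvg (fun w => inner ℝ (b i) w * θ w) (fun y => fderiv ℝ γ y (b i)) t x) t := by
  have hsum : ∀ (t : ℝ) (w : E), ∑ i, fderiv ℝ γ (x + t • w) (b i) * (inner ℝ (b i) w * θ w) =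
      fderiv ℝ γ (x + t • w) w * θ w := by
    intro t w
    conv_rhs => rw [← b.sum_repr' w]
    rw [map_sum, Finset.sum_mul]
    refine Finset.sum_congr rfl fun i _ => ?_
    rw [map_smul, smul_eq_mul, b.sum_repr' w]
    ring
  choose C hC using fun i => (hγ.fderiv_apply (b i)).exists_bound
  have hbi : Integrable fun w => ∑ i, C i * ‖inner ℝ (b i) w * θ w‖ :=
    integrable_finsetSum _ fun i _ => ((hθ.inner_mul (b i)).integrable.norm.const_mul (C i))
  have hF'i : ∀ t, Integrable fun w =>
      ∑ i, fderiv ℝ γ (x + t • w) (b i) * (inner ℝ (b i) w * θ w) := fun t =>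
    integrable_finsetSum _ fun i _ =>
      (hγ.fderiv_apply (b i)).integrable_dirAvg (hθ.inner_mul (b i)) t x
  have h := hasDerivAt_integral_of_dominated_loc_of_deriv_le (μ := volume) (𝕜 := ℝ)
    (F := fun t w => γ (x + t • w) * θ w) (x₀ := t)
    (F' := fun t w => ∑ i, fderiv ℝ γ (x + t • w) (b i) * (inner ℝ (b i) w * θ w))
    (bound := fun w => ∑ i, C i * ‖inner ℝ (b i) w * θ w‖) (s := univ) univ_mem
    (Eventually.of_forall fun t => (hγ.integrable_dirAvg hθ t x).1)
    (hγ.integrable_dirAvg hθ t x) (hF'i t).1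
    (Eventually.of_forall fun w t _ => ?_) hbi (Eventually.of_forall fun w t _ => ?_)
  · have h2 := h.2
    rw [integral_finsetSum _ fun i _ =>
      (hγ.fderiv_apply (b i)).integrable_dirAvg (hθ.inner_mul (b i)) t x] at h2
    exact h2
  · refine (norm_sum_le _ _).trans (Finset.sum_le_sum fun i _ => ?_)
    rw [norm_mul]
    exact mul_le_mul_of_nonneg_right (hC i _) (norm_nonneg _)
  · rw [hsum]
    have h1 : HasDerivAt (fun t : ℝ => x + t • w) w t := by
      simpa using ((hasDerivAt_id t).smul_const w).const_add x
    have h2 := ((hγ.contDiff.differentiable (by simp) (x + t • w)).hasFDerivAt).comp_hasDerivAt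
      t h1
    exact h2.mul_const (θ w)

/-- Integration by parts over the scales. -/
theorem integral_pow_dirAvg {ι : Type*} [Fintype ι] (b : OrthonormalBasis ι ℝ E)
    (hγ : IsTestFun γ) (hθ : IsTestFun θ) (x : E) (j : ℕ) :
    ∑ i, dirMoment j (fun w => inner ℝ (b i) w * θ w) (fun y => fderiv ℝ γ y (b i)) x =
      dirAvg θ γ 1 x - 0 ^ j * dirAvg θ γ 0 x -
        ∫ t in (0 : ℝ)..1, (j : ℝ) * t ^ (j - 1) * dirAvg θ γ t x := by
  have hcont : ∀ i, Continuous fun t =>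
      dirAvg (fun w => inner ℝ (b i) w * θ w) (fun y => fderiv ℝ γ y (b i)) t x := fun i =>
    (hγ.fderiv_apply (b i)).continuous_dirAvg (hθ.inner_mul (b i)) x
  have h := intervalIntegral.integral_mul_deriv_eq_deriv_mul (a := 0) (b := 1)
    (u := fun t : ℝ => t ^ j) (u' := fun t : ℝ => (j : ℝ) * t ^ (j - 1))
    (fun t _ => hasDerivAt_pow j t) (fun t _ => hγ.hasDerivAt_dirAvg b hθ x t)
    (Continuous.intervalIntegrable (by fun_prop) _ _)
    (Continuous.intervalIntegrable (continuous_finsetSum _ fun i _ => hcont i) _ _)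
  rw [one_pow, one_mul] at h
  rw [← h]
  simp only [dirMoment, Finset.mul_sum]
  rw [intervalIntegral.integral_finsetSum]
  intro i _
  exact Continuous.intervalIntegrable ((continuous_pow j).mul (hcont i)) _ _

theorem exists_dirAvg_bound (hθ : IsTestFun θ) {m : ℕ} (hm : Module.finrank ℝ E < 2 * m) :
    ∃ C, 0 ≤ C ∧ ∀ (γ : E → ℝ), IsTestFun γ → ∀ a : E →₀ ℝ,
      |a.sum fun u r => r * dirAvg θ γ 1 u| ≤ C * √(∫ x, γ x ^ 2) * dualNorm m a := by
  obtain ⟨Θ, hΘ⟩ := hθ.ofReal_comp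
  obtain ⟨C, hC, hb⟩ := (𝓕⁻ Θ).exists_norm_le_inv_pow m
  refine ⟨C, hC, fun γ hγ a => ?_⟩
  obtain ⟨g, hg⟩ := hγ.ofReal_comp
  have h1 : ∫ x, γ x ^ 2 = ∫ x, ‖g x‖ ^ 2 := by
    simp [hg]
  rw [h1]
  refine abs_sum_le_of_spectral hm g (𝓕⁻ Θ).continuous hC hb fun u _ => ?_
  have h2 := integral_translate_mul g Θ 1 u
  simp only [one_smul] at h2
  rw [← h2, dirAvg, ← integral_complex_ofReal]
  simp [hg, hΘ]

theorem exists_dirMoment_bound (hθ : IsTestFun θ) {k : ℕ}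
    (hm : Module.finrank ℝ E < 2 * (k + 1)) :
    ∃ C, 0 ≤ C ∧ ∀ (γ : E → ℝ), IsTestFun γ → ∀ a : E →₀ ℝ,
      |a.sum fun u r => r * dirMoment k θ γ u| ≤ C * √(∫ x, γ x ^ 2) * dualNorm (k + 1) a := by
  obtain ⟨Θ, hΘ⟩ := hθ.ofReal_comp
  obtain ⟨C, hC, hb⟩ := (𝓕⁻ Θ).exists_norm_integral_pow_mul_le k
  refine ⟨C, hC, fun γ hγ a => ?_⟩
  obtain ⟨g, hg⟩ := hγ.ofReal_comp
  have h1 : ∫ x, γ x ^ 2 = ∫ x, ‖g x‖ ^ 2 := by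
    simp [hg]
  rw [h1]
  refine abs_sum_le_of_spectral hm g (continuous_integral_pow_mul _ k) hC hb fun u _ => ?_
  rw [← integral_pow_mul_translate, dirMoment, ← intervalIntegral.integral_ofReal]
  refine intervalIntegral.integral_congr fun t _ => ?_
  simp only [hg, hΘ, dirAvg, Complex.ofReal_mul, ← integral_complex_ofReal]

end IsTestFun

/-- A smooth averaging kernel that keeps `Ω` inside itself. -/
structure IsInwardKernel (Ω : Set E) (κ : E → ℝ) : Prop where
  isTestFun : IsTestFun κ
  nonneg : ∀ x, 0 ≤ κ x
  integral_eq_one : ∫ x, κ x = 1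
  tsupport_subset : ∀ x ∈ Ω, tsupport (fun y => κ (x - y)) ⊆ Ω

theorem integral_mollify_sq_le {κ g : E → ℝ} (hκt : IsTestFun κ) (hκ0 : ∀ x, 0 ≤ κ x)
    (hκ1 : ∫ x, κ x = 1) (hg : MemLp g 2 volume) :
    ∫ x, mollify κ g x ^ 2 ≤ ∫ x, g x ^ 2 := by
  have hκ := hκt.integrable
  have hκm := hκt.contDiff.continuous.measurable
  have hgm := hg.1.aemeasurable
  have hle : ∀ x, ‖mollify κ g x‖ₑ ^ 2 ≤
      ∫⁻ y, ENNReal.ofReal (κ (x - y)) * ‖g y‖ₑ ^ 2 := by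
    intro x
    have hk1 : ∫⁻ y, ENNReal.ofReal (κ (x - y)) = 1 := by
      rw [lintegral_sub_left_eq_self (fun y => ENNReal.ofReal (κ y)) x,
        ← ofReal_integral_eq_lintegral_ofReal hκ (Eventually.of_forall hκ0), hκ1,
        ENNReal.ofReal_one]
    have hs : ∀ y, ENNReal.ofReal (√(κ (x - y))) ^ 2 = ENNReal.ofReal (κ (x - y)) := by
      intro y
      rw [← ENNReal.ofReal_pow (Real.sqrt_nonneg _), Real.sq_sqrt (hκ0 _)]
    have hm1 : AEMeasurable (fun y => ENNReal.ofReal (√(κ (x - y)))) volume :=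
      Measurable.aemeasurable (by fun_prop)
    have h1 : ‖mollify κ g x‖ₑ ≤ ∫⁻ y, ENNReal.ofReal (√(κ (x - y))) *
        (ENNReal.ofReal (√(κ (x - y))) * ‖g y‖ₑ) := by
      refine (enorm_integral_le_lintegral_enorm _).trans (le_of_eq (lintegral_congr fun y => ?_))
      rw [enorm_mul, Real.enorm_of_nonneg (hκ0 _), ← mul_assoc, ← sq, hs]
    refine (pow_le_pow_left₀ zero_le h1 2).trans
      ((lintegral_mul_sq_le hm1 (hm1.mul hgm.enorm)).trans (le_of_eq ?_))
    simp only [Pi.mul_apply, hs, hk1, one_mul, mul_pow]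
  have hkey : ∫⁻ x, ‖mollify κ g x‖ₑ ^ 2 ≤ ∫⁻ y, ‖g y‖ₑ ^ 2 := by
    refine (lintegral_mono hle).trans (le_of_eq ?_)
    rw [lintegral_lintegral_swap]
    · refine lintegral_congr fun y => ?_
      have hm2 : Measurable fun x => ENNReal.ofReal (κ (x - y)) := by fun_prop
      rw [lintegral_mul_const _ hm2,
        lintegral_sub_right_eq_self (fun x => ENNReal.ofReal (κ x)) y,
        ← ofReal_integral_eq_lintegral_ofReal hκ (Eventually.of_forall hκ0), hκ1,
        ENNReal.ofReal_one, one_mul]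
    · refine AEMeasurable.mul ?_ ((hgm.enorm.pow_const 2).comp_snd)
      have hm3 : Measurable fun p : E × E => ENNReal.ofReal (κ (p.1 - p.2)) := by fun_prop
      exact hm3.aemeasurable
  have hsq : ∀ f : E → ℝ, AEStronglyMeasurable f volume →
      ∫ x, f x ^ 2 = (∫⁻ x, ‖f x‖ₑ ^ 2).toReal := by
    intro f hf
    rw [integral_eq_lintegral_of_nonneg_ae (Eventually.of_forall fun x => sq_nonneg _)
      (hf.pow 2)]
    congr 1
    refine lintegral_congr fun x => ?_
    rw [← sq_abs, ENNReal.ofReal_pow (abs_nonneg _), Real.enorm_eq_ofReal_abs]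
  have hfin : ∫⁻ y, ‖g y‖ₑ ^ 2 ≠ ⊤ := by
    have := (eLpNorm_lt_top_iff_lintegral_rpow_enorm_lt_top two_ne_zero ENNReal.ofNat_ne_top).1
      hg.2
    simpa using this.ne
  have hmm : AEStronglyMeasurable (mollify κ g) volume :=
    (contDiff_mollify hκt.contDiff hκt.hasCompactSupport
      (hg.locallyIntegrable one_le_two)).continuous.aestronglyMeasurable
  rw [hsq _ hmm, hsq _ hg.1]
  exact ENNReal.toReal_mono hfin hkey

theorem isTestFun_mollify {K : Set E} (hK : Bornology.IsBounded K) {κ g : E → ℝ}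
    (hκ : IsTestFun κ) (hg : MemLp g 2 volume) (hgs : support g ⊆ K) :
    IsTestFun (mollify κ g) := by
  refine ⟨contDiff_mollify hκ.contDiff hκ.hasCompactSupport (hg.locallyIntegrable one_le_two), ?_⟩
  rw [mollify_eq_convolution]
  exact hκ.hasCompactSupport.convolution _
    (HasCompactSupport.of_support_subset_isCompact hK.isCompact_closure
      (hgs.trans subset_closure))

theorem dirAvg_congr_of_eqOn {Ω : Set E} {w₀ : E} {ρ : ℝ}
    (hcone : ∀ x ∈ Ω, ∀ t : ℝ, 0 ≤ t → ∀ w ∈ ball w₀ ρ, x + t • w ∈ Ω)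
    {θ γ γ' : E → ℝ} (hθ : support θ ⊆ ball w₀ ρ) (hγ : EqOn γ γ' Ω) {x : E} (hx : x ∈ Ω)
    {t : ℝ} (ht : 0 ≤ t) : dirAvg θ γ t x = dirAvg θ γ' t x := by
  refine integral_congr_ae (Eventually.of_forall fun w => ?_)
  by_cases hw : w ∈ support θ
  · simp only [hγ (hcone x hx t ht w (hθ hw))]
  · simp only [notMem_support.1 hw, mul_zero]

theorem dirMoment_congr_of_eqOn {Ω : Set E} {w₀ : E} {ρ : ℝ}
    (hcone : ∀ x ∈ Ω, ∀ t : ℝ, 0 ≤ t → ∀ w ∈ ball w₀ ρ, x + t • w ∈ Ω)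
    {θ γ γ' : E → ℝ} (hθ : support θ ⊆ ball w₀ ρ) (hγ : EqOn γ γ' Ω) {x : E} (hx : x ∈ Ω)
    (k : ℕ) : dirMoment k θ γ x = dirMoment k θ γ' x := by
  refine intervalIntegral.integral_congr fun t ht => ?_
  rw [uIcc_of_le zero_le_one] at ht
  simp only [dirAvg_congr_of_eqOn hcone hθ hγ hx ht.1]

theorem abs_sum_sub_sum_le {ι : Type*} (s : Finset ι) (a : E →₀ ℝ) {c A C N : ℝ} {Mi : ι → ℝ}
    {φ φ₀ : E → ℝ} {φi : ι → E → ℝ} (hc : 0 ≤ c)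
    (h : ∀ u ∈ a.support, φ u = c * (φ₀ u - ∑ i ∈ s, φi i u))
    (h0 : |a.sum fun u r => r * φ₀ u| ≤ C * A * N)
    (hi : ∀ i ∈ s, |a.sum fun u r => r * φi i u| ≤ Mi i * N) :
    |a.sum fun u r => r * φ u| ≤ c * (C * A + ∑ i ∈ s, Mi i) * N := by
  have h1 : (a.sum fun u r => r * φ u) =
      c * ((a.sum fun u r => r * φ₀ u) - ∑ i ∈ s, a.sum fun u r => r * φi i u) := by
    simp only [Finsupp.sum]
    rw [Finset.sum_comm, ← Finset.sum_sub_distrib, Finset.mul_sum]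
    refine Finset.sum_congr rfl fun u hu => ?_
    rw [h u hu, ← Finset.mul_sum]
    ring
  rw [h1, abs_mul, abs_of_nonneg hc, mul_assoc]
  refine mul_le_mul_of_nonneg_left ?_ hc
  rw [add_mul, Finset.sum_mul]
  exact (abs_sub _ _).trans (add_le_add h0
    ((Finset.abs_sum_le_sum_abs _ _).trans (Finset.sum_le_sum hi)))

section Cone

variable {K Ω : Set E} {w₀ : E} {ρ : ℝ}

theorem exists_dirMoment_mollify_bound (hK : Bornology.IsBounded K)
    (hcone : ∀ x ∈ Ω, ∀ t : ℝ, 0 ≤ t → ∀ w ∈ ball w₀ ρ, x + t • w ∈ Ω)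
    {m : ℕ} (hm : Module.finrank ℝ E < 2 * m) :
    ∀ (n k : ℕ), n + (k + 1) = m → ∀ θ : E → ℝ, IsTestFun θ → support θ ⊆ ball w₀ ρ →
    ∀ g : E → ℝ, SobolevOn 2 K Ω n g → ∃ M : ℝ, ∀ κ, IsInwardKernel Ω κ →
    ∀ a : E →₀ ℝ, (∀ u ∈ a.support, u ∈ Ω) →
      |a.sum fun u r => r * dirMoment k θ (mollify κ g) u| ≤ M * dualNorm m a := by
  intro n
  induction n with
  | zero =>
    rintro k hk θ hθ - g hg
    have hk' : k + 1 = m := by omega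
    subst hk'
    obtain ⟨C, hC, hb⟩ := hθ.exists_dirMoment_bound hm
    refine ⟨C * √(∫ x, g x ^ 2), fun κ hκ a _ => (hb _ (isTestFun_mollify hK hκ.isTestFun
      hg.memLp hg.support_subset) a).trans ?_⟩
    refine mul_le_mul_of_nonneg_right (mul_le_mul_of_nonneg_left (Real.sqrt_le_sqrt ?_) hC)
      (Real.sqrt_nonneg _)
    exact integral_mollify_sq_le hκ.isTestFun hκ.nonneg hκ.integral_eq_one
      hg.memLp
  | succ n ih =>
    intro k hk θ hθ hθs g hg
    set b := stdOrthonormalBasis ℝ E with hb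
    choose h hw hs using hg.2
    obtain ⟨C, hC, hA⟩ := hθ.exists_dirAvg_bound hm
    have hsub : ∀ i, support (fun w => inner ℝ (b i) w * θ w) ⊆ ball w₀ ρ := fun i w hw =>
      hθs (right_ne_zero_of_mul hw)
    choose M hM using fun i => ih (k + 1) (by omega) _ (hθ.inner_mul (b i)) (hsub i)
      (h (b i)) (hs (b i))
    refine ⟨((k : ℝ) + 1)⁻¹ * (C * √(∫ x, g x ^ 2) + ∑ i, M i), fun κ hκ a ha => ?_⟩
    have hγ : IsTestFun (mollify κ g) :=
      isTestFun_mollify hK hκ.isTestFun hg.memLp hg.support_subset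
    have hd : ∀ i, EqOn (fun y => fderiv ℝ (mollify κ g) y (b i)) (mollify κ (h (b i))) Ω :=
      fun i x hx => fderiv_mollify hκ.isTestFun.contDiff hκ.isTestFun.hasCompactSupport
        (hg.memLp.locallyIntegrable one_le_two) (hw (b i)) (hκ.tsupport_subset x hx)
    refine abs_sum_sub_sum_le Finset.univ a (φ₀ := dirAvg θ (mollify κ g) 1)
      (φi := fun i => dirMoment (k + 1) (fun w => inner ℝ (b i) w * θ w) (mollify κ (h (b i))))
      (by positivity) (fun u hu => ?_) ((hA _ hγ a).trans ?_) (fun i _ => hM i κ hκ a ha)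
    · have h1 := hγ.integral_pow_dirAvg b hθ u (k + 1)
      rw [Finset.sum_congr rfl fun i _ =>
        dirMoment_congr_of_eqOn hcone (hsub i) (hd i) (ha u hu) (k + 1)] at h1
      rw [h1]
      have h2 : ∫ t in (0 : ℝ)..1, ((k + 1 : ℕ) : ℝ) * t ^ (k + 1 - 1) *
          dirAvg θ (mollify κ g) t u = ((k : ℝ) + 1) * dirMoment k θ (mollify κ g) u := by
        rw [dirMoment, ← intervalIntegral.integral_const_mul]
        refine intervalIntegral.integral_congr fun t _ => ?_
        simp only [Nat.add_sub_cancel]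
        push_cast
        ring
      rw [h2]
      have hk0 : (k : ℝ) + 1 ≠ 0 := by positivity
      field_simp
      ring
    · refine mul_le_mul_of_nonneg_right (mul_le_mul_of_nonneg_left (Real.sqrt_le_sqrt ?_) hC)
        (Real.sqrt_nonneg _)
      exact integral_mollify_sq_le hκ.isTestFun hκ.nonneg hκ.integral_eq_one
        hg.memLp

theorem exists_mollify_bound (hK : Bornology.IsBounded K) (hρ : 0 < ρ)
    (hcone : ∀ x ∈ Ω, ∀ t : ℝ, 0 ≤ t → ∀ w ∈ ball w₀ ρ, x + t • w ∈ Ω)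
    {m : ℕ} (hm0 : 0 < m) (hm : Module.finrank ℝ E < 2 * m) {g : E → ℝ}
    (hg : SobolevOn 2 K Ω m g) : ∃ M : ℝ, ∀ κ, IsInwardKernel Ω κ →
    ∀ a : E →₀ ℝ, (∀ u ∈ a.support, u ∈ Ω) →
      |a.sum fun u r => r * mollify κ g u| ≤ M * dualNorm m a := by
  obtain ⟨n, rfl⟩ : ∃ n, m = n + 1 := ⟨m - 1, by omega⟩
  set β : ContDiffBump w₀ := ⟨ρ / 2, ρ, by positivity, by linarith⟩ with hβ
  set θ : E → ℝ := β.normed volume with hθdef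
  have hθ : IsTestFun θ := ⟨β.contDiff_normed, β.hasCompactSupport_normed⟩
  have hθs : support θ ⊆ ball w₀ ρ := by
    rw [hθdef, β.support_normed_eq]
  set b := stdOrthonormalBasis ℝ E with hb
  choose h hw hs using hg.2
  obtain ⟨C, hC, hA⟩ := hθ.exists_dirAvg_bound hm
  have hsub : ∀ i, support (fun w => inner ℝ (b i) w * θ w) ⊆ ball w₀ ρ := fun i w hw =>
    hθs (right_ne_zero_of_mul hw)
  choose M hM using fun i => exists_dirMoment_mollify_bound hK hcone hm n 0 (by omega) _
    (hθ.inner_mul (b i)) (hsub i) (h (b i)) (hs (b i))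
  refine ⟨1 * (C * √(∫ x, g x ^ 2) + ∑ i, M i), fun κ hκ a ha => ?_⟩
  have hγ : IsTestFun (mollify κ g) :=
    isTestFun_mollify hK hκ.isTestFun hg.memLp hg.support_subset
  have hd : ∀ i, EqOn (fun y => fderiv ℝ (mollify κ g) y (b i)) (mollify κ (h (b i))) Ω :=
    fun i x hx => fderiv_mollify hκ.isTestFun.contDiff hκ.isTestFun.hasCompactSupport
      (hg.memLp.locallyIntegrable one_le_two) (hw (b i)) (hκ.tsupport_subset x hx)
  refine abs_sum_sub_sum_le Finset.univ a (φ₀ := dirAvg θ (mollify κ g) 1)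
    (φi := fun i => dirMoment 0 (fun w => inner ℝ (b i) w * θ w) (mollify κ (h (b i))))
    zero_le_one (fun u hu => ?_) ((hA _ hγ a).trans ?_) (fun i _ => hM i κ hκ a ha)
  · have h1 := hγ.integral_pow_dirAvg b hθ u 0
    rw [Finset.sum_congr rfl fun i _ =>
      dirMoment_congr_of_eqOn hcone (hsub i) (hd i) (ha u hu) 0] at h1
    rw [h1]
    have h2 : dirAvg θ (mollify κ g) 0 u = mollify κ g u := by
      simp only [dirAvg, zero_smul, add_zero]
      rw [integral_const_mul, hθdef, β.integral_normed, mul_one]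
    rw [h2]
    simp
  · refine mul_le_mul_of_nonneg_right (mul_le_mul_of_nonneg_left (Real.sqrt_le_sqrt ?_) hC)
      (Real.sqrt_nonneg _)
    exact integral_mollify_sq_le hκ.isTestFun hκ.nonneg hκ.integral_eq_one
      hg.memLp

/-- Bump functions shrinking to the origin along the direction `-w₀`. -/
noncomputable def inwardBump (w₀ : E) {ρ : ℝ} (hρ : 0 < ρ) (j : ℕ) :
    ContDiffBump (-((1 : ℝ) / (j + 1)) • w₀) :=
  ⟨ρ / 4 / (j + 1), ρ / 2 / (j + 1), by positivity, by gcongr; norm_num⟩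

theorem isInwardKernel_inwardBump (hρ : 0 < ρ)
    (hcone : ∀ x ∈ Ω, ∀ t : ℝ, 0 ≤ t → ∀ w ∈ ball w₀ ρ, x + t • w ∈ Ω) (j : ℕ) :
    IsInwardKernel Ω ((inwardBump w₀ hρ j).normed volume) := by
  refine ⟨⟨(inwardBump w₀ hρ j).contDiff_normed, (inwardBump w₀ hρ j).hasCompactSupport_normed⟩,
    fun x => (inwardBump w₀ hρ j).nonneg_normed x, (inwardBump w₀ hρ j).integral_normed,
    fun x hx => ?_⟩
  have hj : (0 : ℝ) < j + 1 := by positivity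
  have hcl : IsClosed {y : E | x - y ∈ closedBall (-((1 : ℝ) / (j + 1)) • w₀)
      (ρ / 2 / (j + 1))} := isClosed_closedBall.preimage (by fun_prop)
  refine (closure_minimal (fun y hy => ?_) hcl).trans fun y hy => ?_
  · have hy' : x - y ∈ support ((inwardBump w₀ hρ j).normed volume) := hy
    rw [(inwardBump w₀ hρ j).support_normed_eq] at hy'
    exact ball_subset_closedBall hy'
  · have hy' : x - y ∈ closedBall (-((1 : ℝ) / (j + 1)) • w₀) (ρ / 2 / (j + 1)) := hy
    rw [mem_closedBall_iff_norm] at hy'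
    have hw : ((j : ℝ) + 1) • (y - x) ∈ ball w₀ ρ := by
      rw [mem_ball_iff_norm]
      have h1 : ((j : ℝ) + 1) • (y - x) - w₀ =
          -(((j : ℝ) + 1) • (x - y - -((1 : ℝ) / (j + 1)) • w₀)) := by
        have h0 : ((j : ℝ) + 1) • ((1 : ℝ) / (j + 1)) • w₀ = w₀ := by
          rw [smul_smul, mul_one_div_cancel hj.ne', one_smul]
        rw [smul_sub, smul_sub, smul_sub, neg_smul, smul_neg, h0]
        abel
      rw [h1, norm_neg, norm_smul, Real.norm_of_nonneg hj.le]
      calc ((j : ℝ) + 1) * ‖x - y - -((1 : ℝ) / (j + 1)) • w₀‖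
          ≤ (j + 1) * (ρ / 2 / (j + 1)) := mul_le_mul_of_nonneg_left hy' hj.le
        _ = ρ / 2 := by field_simp
        _ < ρ := by linarith
    have h2 := hcone x hx ((1 : ℝ) / (j + 1)) (by positivity) _ hw
    rw [smul_smul, one_div_mul_cancel hj.ne', one_smul, add_sub_cancel] at h2
    exact h2

theorem tendsto_mollify_inwardBump (hρ : 0 < ρ) {g : E → ℝ}
    (hg : AEStronglyMeasurable g volume) {x : E} (hx : ContinuousAt g x) :
    Tendsto (fun j => mollify ((inwardBump w₀ hρ j).normed volume) g x) atTop (𝓝 (g x)) := by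
  rw [Metric.tendsto_nhds]
  intro ε hε
  obtain ⟨δ, hδ, hδε⟩ := Metric.continuousAt_iff.1 hx (ε / 2) (by positivity)
  have hlim : Tendsto (fun j : ℕ => (‖w₀‖ + ρ) * (1 / ((j : ℝ) + 1))) atTop (𝓝 0) := by
    simpa using tendsto_one_div_add_atTop_nhds_zero_nat.const_mul (‖w₀‖ + ρ)
  filter_upwards [hlim.eventually_lt_const hδ] with j hj
  have hjp : (0 : ℝ) < j + 1 := by positivity
  refine lt_of_le_of_lt ?_ (half_lt_self hε)
  rw [mollify_eq_convolution]
  refine dist_convolution_le (R := δ) (by positivity) ?_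
    (fun x => (inwardBump w₀ hρ j).nonneg_normed x) (inwardBump w₀ hρ j).integral_normed hg
    fun y hy => (hδε hy).le
  rw [(inwardBump w₀ hρ j).support_normed_eq]
  intro y hy
  rw [mem_ball_iff_norm] at hy
  rw [mem_ball_zero_iff]
  refine lt_trans ?_ hj
  have h1 : ‖-((1 : ℝ) / (j + 1)) • w₀‖ = ‖w₀‖ * (1 / ((j : ℝ) + 1)) := by
    rw [norm_smul, norm_neg, Real.norm_of_nonneg (by positivity), mul_comm]
  have h2 : ‖y‖ ≤ ‖y - -((1 : ℝ) / (j + 1)) • w₀‖ + ‖-((1 : ℝ) / (j + 1)) • w₀‖ := by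
    have := norm_add_le (y - -((1 : ℝ) / (j + 1)) • w₀) (-((1 : ℝ) / (j + 1)) • w₀)
    rwa [sub_add_cancel] at this
  have h3 : (inwardBump w₀ hρ j).rOut = ρ / 2 * (1 / ((j : ℝ) + 1)) := by
    simp only [inwardBump]
    ring
  rw [h3] at hy
  have h4 : ρ / 2 * (1 / ((j : ℝ) + 1)) < ρ * (1 / ((j : ℝ) + 1)) :=
    mul_lt_mul_of_pos_right (by linarith) (by positivity)
  rw [h1] at h2
  linarith

/-- A continuous function with square integrable weak derivatives up to order `m` on a domain
stable under an open cone of directions is dominated by the dual Sobolev norm. -/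
theorem exists_dualNorm_bound (hK : Bornology.IsBounded K) (hΩ : IsOpen Ω) (hρ : 0 < ρ)
    (hcone : ∀ x ∈ Ω, ∀ t : ℝ, 0 ≤ t → ∀ w ∈ ball w₀ ρ, x + t • w ∈ Ω)
    {m : ℕ} (hm0 : 0 < m) (hm : Module.finrank ℝ E < 2 * m) {g : E → ℝ}
    (hg : SobolevOn 2 K Ω m g) (hgc : ContinuousOn g Ω) :
    ∃ M : ℝ, ∀ a : E →₀ ℝ, (∀ u ∈ a.support, u ∈ Ω) →
      |a.sum fun u r => r * g u| ≤ M * dualNorm m a := by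
  obtain ⟨M, hM⟩ := exists_mollify_bound hK hρ hcone hm0 hm hg
  refine ⟨M, fun a ha => ?_⟩
  have hlim : Tendsto (fun j => |a.sum fun u r =>
      r * mollify ((inwardBump w₀ hρ j).normed volume) g u|) atTop
      (𝓝 |a.sum fun u r => r * g u|) := by
    refine Tendsto.abs (tendsto_finsetSum _ fun u hu => Tendsto.const_mul _ ?_)
    exact tendsto_mollify_inwardBump hρ hg.memLp.1
      ((hgc u (ha u hu)).continuousAt (hΩ.mem_nhds (ha u hu)))
  exact le_of_tendsto hlim (Eventually.of_forall fun j =>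
    hM _ (isInwardKernel_inwardBump hρ hcone j) a ha)

end Cone

end ConeDuality

section Localisation

open Set Function Filter Metric
open scoped Topology ENNReal ContDiff

set_option linter.unusedSectionVars false

variable {E : Type*} [NormedAddCommGroup E] [InnerProductSpace ℝ E] [FiniteDimensional ℝ E]
  [MeasurableSpace E] [BorelSpace E]

/-- A cut-off supported away from the rest of the boundary extends a Sobolev function to a larger
domain. -/
theorem SobolevOn.cutoff_mul {p : ℝ≥0∞} (hp : 1 ≤ p) {K U Ω : Set E} : ∀ {n : ℕ} {f χ : E → ℝ},
    IsTestFun χ → tsupport χ ∩ Ω ⊆ U → SobolevOn p K U n f →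
      SobolevOn p K Ω n fun x => χ x * f x := by
  have hzero : ∀ {f χ : E → ℝ}, IsTestFun χ → MemLp f p volume ∧ support f ⊆ K →
      MemLp (fun x => χ x * f x) p volume ∧ support (fun x => χ x * f x) ⊆ K := by
    intro f χ hχ hf
    obtain ⟨C, hC⟩ := hχ.exists_bound
    refine ⟨?_, fun x hx => hf.2 (right_ne_zero_of_mul hx)⟩
    refine (hf.1.const_mul C).mono (hχ.contDiff.continuous.aestronglyMeasurable.mul hf.1.1)
      (Eventually.of_forall fun x => ?_)
    rw [norm_mul, norm_mul]
    exact mul_le_mul_of_nonneg_right ((hC x).trans (le_abs_self C)) (norm_nonneg _)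
  intro n
  induction n with
  | zero => exact fun hχ _ hf => hzero hχ hf
  | succ n ih =>
    intro f χ hχ hχU hf
    refine ⟨hzero hχ hf.1, fun v => ?_⟩
    obtain ⟨h, hw, hh⟩ := hf.2 v
    have hfl := hf.memLp.locallyIntegrable hp
    have hhl := hh.memLp.locallyIntegrable hp
    have hχ' := hχ.fderiv_apply v
    have hsupp : tsupport (fun x => fderiv ℝ χ x v) ∩ Ω ⊆ U :=
      (inter_subset_inter_left _ (tsupport_fderiv_apply_subset' v)).trans hχU
    refine ⟨fun x => fderiv ℝ χ x v * f x + χ x * h x, ?_,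
      (ih hχ' hsupp hf.of_succ).add hp (ih hχ hχU hh)⟩
    intro ψ hψ hψc hψs
    have hsub : tsupport (fun x => χ x * ψ x) ⊆ U := fun x hx =>
      hχU ⟨tsupport_mul_subset_left hx, hψs (tsupport_mul_subset_right hx)⟩
    have key := hw (fun x => χ x * ψ x) (hχ.contDiff.mul hψ) hψc.mul_left hsub
    have hd : ∀ x, fderiv ℝ (fun x => χ x * ψ x) x v =
        χ x * fderiv ℝ ψ x v + fderiv ℝ χ x v * ψ x := by
      intro x
      rw [fderiv_fun_mul (hχ.contDiff.differentiable (by simp) x)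
        (hψ.differentiable (by simp) x)]
      simp [mul_comm]
    have hi1 : Integrable fun x => f x * (χ x * fderiv ℝ ψ x v) :=
      integrable_mul_test hfl (hχ.contDiff.continuous.mul (continuous_fderiv_test hψ v))
        (hψc.fderiv_apply ℝ v).mul_left
    have hi2 : Integrable fun x => f x * (fderiv ℝ χ x v * ψ x) :=
      integrable_mul_test hfl (hχ'.contDiff.continuous.mul hψ.continuous) hψc.mul_left
    have hi3 : Integrable fun x => h x * (χ x * ψ x) :=
      integrable_mul_test hhl (hχ.contDiff.continuous.mul hψ.continuous) hψc.mul_left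
    simp only [hd, mul_add] at key
    rw [integral_add hi1 hi2] at key
    have e1 : ∫ x, χ x * f x * fderiv ℝ ψ x v = ∫ x, f x * (χ x * fderiv ℝ ψ x v) :=
      integral_congr_ae (Eventually.of_forall fun x => by ring)
    have e2 : ∫ x, (fderiv ℝ χ x v * f x + χ x * h x) * ψ x =
        (∫ x, f x * (fderiv ℝ χ x v * ψ x)) + ∫ x, h x * (χ x * ψ x) := by
      rw [← integral_add hi2 hi3]
      exact integral_congr_ae (Eventually.of_forall fun x => by ring)
    rw [e1, e2]
    linarith

/-- The smallest superset of `U` stable under the cone of directions `ball w₀ ρ`. -/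
def coneHull (U : Set E) (w₀ : E) (ρ : ℝ) : Set E :=
  {q | ∃ x ∈ U, ∃ t : ℝ, 0 ≤ t ∧ ∃ w ∈ ball w₀ ρ, x + t • w = q}

theorem isOpen_coneHull {U : Set E} (hU : IsOpen U) (w₀ : E) (ρ : ℝ) :
    IsOpen (coneHull U w₀ ρ) := by
  have : coneHull U w₀ ρ = ⋃ p : {p : ℝ × E // 0 ≤ p.1 ∧ p.2 ∈ ball w₀ ρ},
      (fun x => x + p.1.1 • p.1.2) '' U := by
    ext q
    simp only [coneHull, mem_ofPred_eq, mem_iUnion, mem_image]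
    constructor
    · rintro ⟨x, hx, t, ht, w, hw, h⟩
      exact ⟨⟨(t, w), ht, hw⟩, x, hx, h⟩
    · rintro ⟨⟨⟨t, w⟩, ht, hw⟩, x, hx, h⟩
      exact ⟨x, hx, t, ht, w, hw, h⟩
  rw [this]
  exact isOpen_iUnion fun p => isOpenMap_add_right _ U hU

theorem subset_coneHull {U : Set E} {w₀ : E} {ρ : ℝ} (hρ : 0 < ρ) : U ⊆ coneHull U w₀ ρ :=
  fun x hx => ⟨x, hx, 0, le_rfl, w₀, mem_ball_self hρ, by simp⟩

theorem add_smul_mem_coneHull {U : Set E} {w₀ : E} {ρ : ℝ} {x : E} (hx : x ∈ coneHull U w₀ ρ)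
    {t : ℝ} (ht : 0 ≤ t) {w : E} (hw : w ∈ ball w₀ ρ) : x + t • w ∈ coneHull U w₀ ρ := by
  obtain ⟨y, hy, t', ht', w', hw', rfl⟩ := hx
  obtain ⟨z, hz, hzw⟩ := (convex_ball w₀ ρ).exists_mem_add_smul_eq hw' hw ht' ht
  exact ⟨y, hy, t' + t, by positivity, z, hz, by rw [hzw, add_assoc]⟩

theorem coneHull_inter_ball_subset {U : Set E} (hU : Convex ℝ U) {z₀ p : E} {r : ℝ}
    (hz : ball z₀ r ⊆ U) : coneHull U (z₀ - p) (r / 2) ∩ ball p (r / 2) ⊆ U := by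
  rintro q ⟨⟨x, hx, t, ht, w, hw, hq⟩, hqp⟩
  have hwq : w + q ∈ U := by
    refine hz ?_
    rw [mem_ball_iff_norm] at hw hqp ⊢
    calc ‖w + q - z₀‖ = ‖(w - (z₀ - p)) + (q - p)‖ := by congr 1; abel
      _ ≤ ‖w - (z₀ - p)‖ + ‖q - p‖ := norm_add_le _ _
      _ < r := by linarith
  have h1 : (1 + t)⁻¹ • x + (t * (1 + t)⁻¹) • (w + q) = q := by
    have : x = q - t • w := by rw [← hq]; abel
    rw [this, smul_sub, smul_add, smul_smul]
    have h2 : (1 + t)⁻¹ • q + (t * (1 + t)⁻¹) • q = q := by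
      rw [← add_smul, show (1 + t)⁻¹ + t * (1 + t)⁻¹ = 1 by field_simp, one_smul]
    rw [mul_comm (1 + t)⁻¹ t]
    calc _ = (1 + t)⁻¹ • q + (t * (1 + t)⁻¹) • q := by abel
      _ = q := h2
  rw [← h1]
  exact hU hx hwq (by positivity) (by positivity) (by field_simp)

theorem dualNorm_nonneg (m : ℕ) (a : E →₀ ℝ) : 0 ≤ dualNorm m a := Real.sqrt_nonneg _

variable {U : Set E}

theorem exists_dualNorm_bound_of_cutoff (hUb : Bornology.IsBounded U) (hUo : IsOpen U)
    (hUc : Convex ℝ U) {z₀ p : E} {r : ℝ} (hr : 0 < r) (hz : ball z₀ r ⊆ U)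
    {m : ℕ} (hm0 : 0 < m) (hm : Module.finrank ℝ E < 2 * m) {f χ : E → ℝ}
    (hf : SobolevOn 2 U U m f) (hfc : ContinuousOn f U) (hχ : IsTestFun χ)
    (hχp : tsupport χ ⊆ ball p (r / 2)) :
    ∃ M : ℝ, ∀ a : E →₀ ℝ, (∀ u ∈ a.support, u ∈ U) →
      |a.sum fun u r => r * (χ u * f u)| ≤ M * dualNorm m a := by
  have hsub : tsupport χ ∩ coneHull U (z₀ - p) (r / 2) ⊆ U := fun x hx =>
    coneHull_inter_ball_subset hUc hz ⟨hx.2, hχp hx.1⟩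
  have hcont : ContinuousOn (fun x => χ x * f x) (coneHull U (z₀ - p) (r / 2)) := by
    intro x hx
    refine ContinuousAt.continuousWithinAt ?_
    by_cases hxχ : x ∈ tsupport χ
    · exact hχ.contDiff.continuous.continuousAt.mul (hfc.continuousAt (hUo.mem_nhds (hsub ⟨hxχ, hx⟩)))
    · refine (continuousAt_const (y := (0 : ℝ))).congr ?_
      filter_upwards [(isClosed_tsupport χ).isOpen_compl.mem_nhds hxχ] with y hy
      rw [image_eq_zero_of_notMem_tsupport hy, zero_mul]
  obtain ⟨M, hM⟩ := exists_dualNorm_bound hUb (isOpen_coneHull hUo (z₀ - p) (r / 2))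
    (half_pos hr) (fun x hx t ht w hw => add_smul_mem_coneHull hx ht hw) hm0 hm
    (SobolevOn.cutoff_mul one_le_two hχ hsub hf) hcont
  exact ⟨M, fun a ha => hM a fun u hu => subset_coneHull (half_pos hr) (ha u hu)⟩

/-- On a bounded convex domain, a continuous function with square integrable weak derivatives up to
order `m` is dominated by the dual Sobolev norm. -/
theorem exists_dualNorm_bound_of_convex (hUb : Bornology.IsBounded U) (hUo : IsOpen U)
    (hUc : Convex ℝ U) (hUne : U.Nonempty) {m : ℕ} (hm0 : 0 < m)
    (hm : Module.finrank ℝ E < 2 * m) {f : E → ℝ} (hf : SobolevOn 2 U U m f)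
    (hfc : ContinuousOn f U) :
    ∃ M : ℝ, ∀ a : E →₀ ℝ, (∀ u ∈ a.support, u ∈ U) →
      |a.sum fun u r => r * f u| ≤ M * dualNorm m a := by
  obtain ⟨z₀, hz₀⟩ := hUne
  obtain ⟨r, hr, hz⟩ := Metric.isOpen_iff.1 hUo z₀ hz₀
  have hind : ∀ (T : Finset E) (φ : E → ℝ), ContDiff ℝ ∞ φ →
      (∀ u ∈ U, (∀ p ∈ T, u ∉ ball p (r / 8)) → φ u = 0) →
      ∃ M : ℝ, ∀ a : E →₀ ℝ, (∀ u ∈ a.support, u ∈ U) →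
        |a.sum fun u r => r * (φ u * f u)| ≤ M * dualNorm m a := by
    intro T
    induction T using Finset.cons_induction with
    | empty =>
      intro φ _ h0
      refine ⟨0, fun a ha => ?_⟩
      rw [Finsupp.sum, Finset.sum_eq_zero fun u hu => by rw [h0 u (ha u hu) (by simp)]; ring]
      simp
    | cons p T _ ih =>
      intro φ hφ h0
      let ψ : ContDiffBump p := ⟨r / 8, r / 4, by positivity, by linarith⟩
      have hψ : IsTestFun fun x => φ x * ψ x := ⟨hφ.mul ψ.contDiff, ψ.hasCompactSupport.mul_left⟩
      obtain ⟨M₁, hM₁⟩ := exists_dualNorm_bound_of_cutoff (p := p) hUb hUo hUc hr hz hm0 hm hf hfc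
        hψ (tsupport_mul_subset_right.trans (by
          rw [ψ.tsupport_eq]
          exact closedBall_subset_ball (by change r / 4 < r / 2; linarith)))
      obtain ⟨M₂, hM₂⟩ := ih (fun x => φ x * (1 - ψ x))
        (hφ.mul (contDiff_const.sub ψ.contDiff)) (by
          intro u hu hT
          by_cases hup : u ∈ ball p (r / 8)
          · simp only [ψ.one_of_mem_closedBall (ball_subset_closedBall hup), sub_self, mul_zero]
          · rw [h0 u hu, zero_mul]
            intro q hq
            rcases Finset.mem_cons.1 hq with rfl | hq
            · exact hup
            · exact hT q hq)
      refine ⟨M₁ + M₂, fun a ha => ?_⟩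
      have : (a.sum fun u r => r * (φ u * f u)) = (a.sum fun u r => r * (φ u * ψ u * f u)) +
          a.sum fun u r => r * (φ u * (1 - ψ u) * f u) := by
        rw [← Finsupp.sum_add]
        exact Finset.sum_congr rfl fun u _ => by ring
      rw [this, add_mul]
      exact (abs_add_le _ _).trans (add_le_add (hM₁ a ha) (hM₂ a ha))
  obtain ⟨T, -, hT⟩ := hUb.isCompact_closure.elim_nhds_subcover (fun p => ball p (r / 8))
    fun p _ => ball_mem_nhds p (by positivity)
  obtain ⟨M, hM⟩ := hind T (fun _ => 1) contDiff_const fun u hu h => by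
    obtain ⟨p, hp, hup⟩ := mem_iUnion₂.1 (hT (subset_closure hu))
    exact absurd hup (h p hp)
  exact ⟨M, by simpa using hM⟩

end Localisation

section MaternFeature

open Set Function Filter
open scoped Topology ENNReal

variable {s : ℕ}

theorem inv_one_add_pow_le_rpow {b t σ : ℝ} {m : ℕ} (hb : 0 < b) (ht : 0 ≤ t) (hσ : 0 ≤ σ)
    (hσm : σ ≤ m) : ((1 + t) ^ m)⁻¹ ≤ (1 + b) ^ σ * (1 + b * t) ^ (-σ) := by
  have h1 : (1 + b * t) ^ σ ≤ (1 + b) ^ σ * (1 + t) ^ m := by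
    calc (1 + b * t) ^ σ ≤ ((1 + b) * (1 + t)) ^ σ :=
          Real.rpow_le_rpow (by positivity) (by nlinarith) hσ
      _ = (1 + b) ^ σ * (1 + t) ^ σ := Real.mul_rpow (by positivity) (by positivity)
      _ ≤ (1 + b) ^ σ * (1 + t) ^ (m : ℝ) := by
          gcongr
          linarith
      _ = _ := by rw [Real.rpow_natCast]
  have h0 : 0 < (1 + b * t) ^ σ := by positivity
  rw [Real.rpow_neg (by positivity), ← div_eq_mul_inv, le_div_iff₀ h0, inv_mul_le_iff₀ (by positivity)]
  linarith

/-- A function dominated by the dual Sobolev norm of order `m` lies in the reproducing kernel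
Hilbert space of every Matérn kernel whose Sobolev order is at most `m`. -/
theorem memRKHS_maternKernel_of_dualNorm_bound {U : Set (EuclideanSpace ℝ (Fin s))} {m : ℕ}
    (hm : s < 2 * m) {ν η ℓ : ℝ} (hν : 0 < ν) (hη : 0 < η) (hℓ : 0 < ℓ)
    (hνm : ν + (s : ℝ) / 2 ≤ m) {f : EuclideanSpace ℝ (Fin s) → ℝ} {M : ℝ}
    (hM : ∀ a : EuclideanSpace ℝ (Fin s) →₀ ℝ, (∀ u ∈ a.support, u ∈ U) →
      |a.sum fun u r => r * f u| ≤ M * dualNorm m a) :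
    MemRKHS (fun u v : U => maternKernel ν η ℓ (u : EuclideanSpace ℝ (Fin s)) v)
      (fun u : U => f u) := by
  obtain ⟨A, b, hA, hb, hWi, hspec⟩ := maternKernel_eq_integral_spectral s hν hη hℓ
  set σ : ℝ := ν + (s : ℝ) / 2
  have hσ : 0 ≤ σ := by positivity
  set W : EuclideanSpace ℝ (Fin s) → ℝ := fun ξ => A * (1 + b * ‖ξ‖ ^ 2) ^ (-σ) with hW
  have hW0 : ∀ ξ, 0 ≤ W ξ := fun ξ => by simp only [hW]; positivity
  have hWint : Integrable W := hWi.const_mul A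
  have hWc : Continuous W := by
    refine continuous_const.mul (Continuous.rpow_const (by fun_prop) fun ξ => Or.inl ?_)
    positivity
  have hpc : ∀ u : EuclideanSpace ℝ (Fin s), Continuous fun ξ => planeWave ξ u := fun u =>
    continuous_planeWave.comp (f := fun ξ => (ξ, u)) (by fun_prop)
  have hmem : ∀ g : EuclideanSpace ℝ (Fin s) → ℂ, Continuous g → (∃ C, ∀ ξ, ‖g ξ‖ ≤ C) →
      MemLp (fun ξ => g ξ * (√(W ξ) : ℂ)) 2 volume := by
    rintro g hg ⟨C, hC⟩
    have hc : Continuous fun ξ => g ξ * (√(W ξ) : ℂ) :=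
      hg.mul (Complex.continuous_ofReal.comp hWc.sqrt)
    rw [memLp_two_iff_integrable_sq_norm hc.aestronglyMeasurable]
    refine (hWint.const_mul (C ^ 2)).mono' (hc.norm.pow 2).aestronglyMeasurable
      (Eventually.of_forall fun ξ => ?_)
    rw [Real.norm_of_nonneg (by positivity), norm_mul, mul_pow, Complex.norm_real,
      Real.norm_of_nonneg (Real.sqrt_nonneg _), Real.sq_sqrt (hW0 ξ)]
    exact mul_le_mul_of_nonneg_right (pow_le_pow_left₀ (norm_nonneg _) (hC ξ) 2) (hW0 ξ)
  have hpm := fun u : EuclideanSpace ℝ (Fin s) =>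
    hmem (fun ξ => planeWave ξ u) (hpc u) ⟨1, fun ξ => (norm_planeWave ξ u).le⟩
  let Φ : U → Lp ℂ 2 (volume : Measure (EuclideanSpace ℝ (Fin s))) := fun u => (hpm u).toLp _
  have hsq : ∀ ξ, ((√(W ξ) : ℝ) : ℂ) * (√(W ξ) : ℂ) = (W ξ : ℂ) := fun ξ => by
    rw [← Complex.ofReal_mul, Real.mul_self_sqrt (hW0 ξ)]
  have hsum : ∀ a : U →₀ ℝ, (a.sum fun x r => r • Φ x : Lp ℂ 2 volume) =ᵐ[volume] fun ξ =>
      trigSum (a.embDomain (Embedding.subtype _)) ξ * (√(W ξ) : ℂ) := by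
    intro a
    have h1 : ∀ u : U, (⇑(a u • Φ u) : EuclideanSpace ℝ (Fin s) → ℂ) =ᵐ[volume] fun ξ =>
        (a u : ℂ) * planeWave ξ u * (√(W ξ) : ℂ) := by
      intro u
      filter_upwards [Lp.coeFn_smul (a u) (Φ u), (hpm u).coeFn_toLp] with ξ h1 h2
      rw [h1, Pi.smul_apply, h2, Complex.real_smul, mul_assoc]
    have h2 : ∀ᵐ ξ, ∀ u ∈ a.support, (a u • Φ u : Lp ℂ 2 volume) ξ =
        (a u : ℂ) * planeWave ξ u * (√(W ξ) : ℂ) :=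
      (ae_ball_iff a.support.countable_toSet).2 fun u _ => h1 u
    filter_upwards [Lp.coeFn_finsetSum a.support fun u => a u • Φ u, h2] with ξ h3 h4
    simp only [Finsupp.sum]
    rw [h3, Finset.sum_apply, trigSum, Finsupp.sum_embDomain, Finsupp.sum, Finset.sum_mul]
    exact Finset.sum_congr rfl fun u hu => h4 u hu
  have hnorm : ∀ a : U →₀ ℝ, ‖a.sum fun x r => r • Φ x‖ ^ 2 =
      ∫ ξ, ‖trigSum (a.embDomain (Embedding.subtype _)) ξ‖ ^ 2 * W ξ := by
    intro a
    rw [← real_inner_self_eq_norm_sq, L2.inner_def]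
    refine integral_congr_ae ?_
    filter_upwards [hsum a] with ξ hξ
    rw [hξ, real_inner_self_eq_norm_sq, norm_mul, mul_pow, Complex.norm_real,
      Real.norm_of_nonneg (Real.sqrt_nonneg _), Real.sq_sqrt (hW0 ξ)]
  have hint : ∀ a : EuclideanSpace ℝ (Fin s) →₀ ℝ, Integrable fun ξ => ‖trigSum a ξ‖ ^ 2 * W ξ := by
    intro a
    refine hWint.bdd_mul (c := (a.sum fun _ r => |r|) ^ 2)
      ((continuous_trigSum a).norm.pow 2).aestronglyMeasurable (Eventually.of_forall fun ξ => ?_)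
    rw [Real.norm_of_nonneg (by positivity)]
    exact pow_le_pow_left₀ (norm_nonneg _) (norm_trigSum_le a ξ) 2
  have hfr : Module.finrank ℝ (EuclideanSpace ℝ (Fin s)) < 2 * m := by simpa using hm
  have hdual : ∀ a : EuclideanSpace ℝ (Fin s) →₀ ℝ, dualNorm m a ≤
      √((1 + b) ^ σ / A) * √(∫ ξ, ‖trigSum a ξ‖ ^ 2 * W ξ) := by
    intro a
    rw [← Real.sqrt_mul (by positivity), dualNorm, ← integral_const_mul]
    refine Real.sqrt_le_sqrt (integral_mono (integrable_trigSum_sq hfr a)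
      ((hint a).const_mul _) fun ξ => ?_)
    have h1 := inv_one_add_pow_le_rpow hb (sq_nonneg ‖ξ‖) hσ hνm
    calc ‖trigSum a ξ‖ ^ 2 * ((1 + ‖ξ‖ ^ 2) ^ m)⁻¹
        ≤ ‖trigSum a ξ‖ ^ 2 * ((1 + b) ^ σ * (1 + b * ‖ξ‖ ^ 2) ^ (-σ)) := by gcongr
      _ = (1 + b) ^ σ / A * (‖trigSum a ξ‖ ^ 2 * W ξ) := by
        simp only [hW]
        field_simp
  refine memRKHS_of_feature Φ _ (fun x y => ?_) _ (|M| * √((1 + b) ^ σ / A)) fun a => ?_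
  · have h1 : inner ℝ (Φ x) (Φ y) = ∫ ξ, (Complex.exp (↑(-2 * Real.pi *
        inner ℝ ξ ((x : EuclideanSpace ℝ (Fin s)) - y)) * Complex.I) * (W ξ : ℂ)).re := by
      rw [L2.inner_def]
      refine integral_congr_ae ?_
      filter_upwards [(hpm x).coeFn_toLp, (hpm y).coeFn_toLp] with ξ h1 h2
      rw [h1, h2, Complex.inner, map_mul, Complex.conj_ofReal]
      congr 1
      rw [mul_mul_mul_comm, hsq, planeWave, planeWave, ← Complex.exp_conj, ← Complex.exp_add]
      congr 2
      rw [map_mul, Complex.conj_ofReal, Complex.conj_I, inner_sub_right]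
      push_cast
      ring
    rw [h1]
    have hi : Integrable fun ξ => Complex.exp (↑(-2 * Real.pi *
        inner ℝ ξ ((x : EuclideanSpace ℝ (Fin s)) - y)) * Complex.I) * (W ξ : ℂ) := by
      refine hWint.ofReal.bdd_mul (c := 1) (Continuous.aestronglyMeasurable (by fun_prop))
        (Eventually.of_forall fun ξ => (Complex.norm_exp_ofReal_mul_I _).le)
    have h2 := integral_re hi
    have h3 := hspec x y
    refine Eq.trans ?_ h2.symm
    change _ = Complex.re _
    rw [← h3, Complex.ofReal_re]
  · have h1 := hM (a.embDomain (Embedding.subtype _)) fun u hu => by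
      rw [Finsupp.support_embDomain] at hu
      obtain ⟨v, -, rfl⟩ := Finset.mem_map.1 hu
      exact v.2
    rw [Finsupp.sum_embDomain] at h1
    have h2 : ‖a.sum fun x r => r • Φ x‖ =
        √(∫ ξ, ‖trigSum (a.embDomain (Embedding.subtype _)) ξ‖ ^ 2 * W ξ) := by
      rw [← hnorm, Real.sqrt_sq (norm_nonneg _)]
    refine h1.trans ?_
    rw [h2, mul_assoc]
    exact (mul_le_mul_of_nonneg_right (le_abs_self M) (dualNorm_nonneg m _)).trans
      (mul_le_mul_of_nonneg_left (hdual _) (abs_nonneg M))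

end MaternFeature

section Kernels

open Set Function Filter
open scoped Topology ENNReal SchwartzMap ContDiff

theorem one_add_pow_mul_exp_neg_mul_sq_le {c r : ℝ} (hc : 0 < c) (hr : 0 ≤ r) (N : ℕ) :
    (1 + r) ^ N * Real.exp (-(c * r ^ 2)) ≤ 2 ^ N * N.factorial / c ^ N * Real.exp c := by
  have h1 : (1 + r) ^ N ≤ 2 ^ N * (1 + r ^ 2) ^ N := by
    rw [← mul_pow]
    exact pow_le_pow_left₀ (by positivity) (by nlinarith [sq_nonneg (r - 1)]) N
  have h2 := Real.pow_div_factorial_le_exp (x := c * (1 + r ^ 2)) (by positivity) N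
  rw [div_le_iff₀ (by positivity), mul_pow] at h2
  have h3 : (1 + r ^ 2) ^ N ≤ N.factorial / c ^ N * Real.exp (c * (1 + r ^ 2)) := by
    rw [div_mul_eq_mul_div, le_div_iff₀ (by positivity)]
    linarith
  have h4 : Real.exp (c * (1 + r ^ 2)) * Real.exp (-(c * r ^ 2)) = Real.exp c := by
    rw [← Real.exp_add]
    ring_nf
  calc (1 + r) ^ N * Real.exp (-(c * r ^ 2))
      ≤ 2 ^ N * (N.factorial / c ^ N * Real.exp (c * (1 + r ^ 2))) * Real.exp (-(c * r ^ 2)) := by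
        gcongr
        exact h1.trans (by gcongr)
    _ = 2 ^ N * N.factorial / c ^ N *
          (Real.exp (c * (1 + r ^ 2)) * Real.exp (-(c * r ^ 2))) := by ring
    _ = _ := by rw [h4]

/-- Gaussians are Schwartz functions. -/
theorem exists_schwartzMap_gaussian {F : Type*} [NormedAddCommGroup F] [InnerProductSpace ℝ F]
    {c : ℝ} (hc : 0 < c) : ∃ H : 𝓢(F, ℝ), ∀ y, H y = Real.exp (-(c * ‖y‖ ^ 2)) := by
  have hq : (fun y : F => -(c * ‖y‖ ^ 2)).HasTemperateGrowth := by fun_prop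
  have hsm : ContDiff ℝ ∞ fun y : F => -(c * ‖y‖ ^ 2) := hq.1
  refine ⟨⟨fun y => Real.exp (-(c * ‖y‖ ^ 2)), Real.contDiff_exp.comp hsm, fun k n => ?_⟩,
    fun y => rfl⟩
  obtain ⟨j, C, hC, hb⟩ := hq.norm_iteratedFDeriv_le_uniform n
  refine ⟨n.factorial * (C + 1) ^ n *
    (2 ^ (k + j * n) * (k + j * n).factorial / c ^ (k + j * n) * Real.exp c), fun y => ?_⟩
  have hy : 1 ≤ 1 + ‖y‖ := by linarith [norm_nonneg y]
  have h1y : 1 ≤ (1 + ‖y‖) ^ j := one_le_pow₀ hy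
  have h := norm_iteratedFDeriv_comp_le (n := n) (N := ∞) (g := Real.exp)
    (f := fun y : F => -(c * ‖y‖ ^ 2)) Real.contDiff_exp hsm (by exact_mod_cast le_top) y
    (C := Real.exp (-(c * ‖y‖ ^ 2))) (D := (C + 1) * (1 + ‖y‖) ^ j)
    (fun i _ => by
      rw [norm_iteratedFDeriv_eq_norm_iteratedDeriv, iteratedDeriv_eq_iterate,
        Real.iter_deriv_exp, Real.norm_of_nonneg (Real.exp_nonneg _)])
    (fun i hi hin => by
      refine ((hb i hin y).trans ?_).trans (le_self_pow₀ ?_ (by omega))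
      · gcongr
        linarith
      · nlinarith)
  calc ‖y‖ ^ k * ‖iteratedFDeriv ℝ n (fun y => Real.exp (-(c * ‖y‖ ^ 2))) y‖
      ≤ (1 + ‖y‖) ^ k * (n.factorial * Real.exp (-(c * ‖y‖ ^ 2)) *
          ((C + 1) * (1 + ‖y‖) ^ j) ^ n) := by
        gcongr
        · linarith
        · exact h
    _ = n.factorial * (C + 1) ^ n *
          ((1 + ‖y‖) ^ (k + j * n) * Real.exp (-(c * ‖y‖ ^ 2))) := by
        rw [mul_pow, pow_add, pow_mul]
        ring
    _ ≤ _ := mul_le_mul_of_nonneg_left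
        (one_add_pow_mul_exp_neg_mul_sq_le hc (norm_nonneg y) _) (by positivity)

/-- The Gamma distribution up to normalisation. -/
noncomputable def gammaWeight (ν : ℝ) : Measure ℝ :=
  (volume.restrict (Ioi 0)).withDensity fun τ => ENNReal.ofReal (τ ^ (ν - 1) * Real.exp (-τ))

instance (ν : ℝ) : SFinite (gammaWeight ν) := by
  unfold gammaWeight
  infer_instance

theorem ae_gammaWeight_pos (ν : ℝ) : ∀ᵐ τ ∂gammaWeight ν, 0 < τ :=
  (withDensity_absolutelyContinuous _ _).ae_le (ae_restrict_mem measurableSet_Ioi)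

theorem integrable_rpow_gammaWeight {ν p : ℝ} (hp : 0 < p + ν) :
    Integrable (fun τ : ℝ => τ ^ p) (gammaWeight ν) := by
  rw [gammaWeight, integrable_withDensity_iff (by fun_prop)
    (Eventually.of_forall fun _ => ENNReal.ofReal_lt_top)]
  refine (Real.GammaIntegral_convergent hp).congr ?_
  filter_upwards [ae_restrict_mem measurableSet_Ioi] with τ hτ
  have hτ' : (0 : ℝ) < τ := hτ
  rw [ENNReal.toReal_ofReal (by positivity), ← mul_assoc, ← Real.rpow_add hτ', mul_comm]
  ring_nf

theorem exists_scaleMixture_eq_maternKernel (d : ℕ) {ν η ℓ : ℝ} (hν : 0 < ν) (hℓ : 0 < ℓ) :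
    ∃ H : 𝓢(EuclideanSpace ℝ (Fin d), ℝ), ∀ x y,
      maternKernel ν η ℓ x y = scaleMixture (gammaWeight ν) x H 0 y := by
  obtain ⟨H, hH⟩ := exists_schwartzMap_gaussian (F := EuclideanSpace ℝ (Fin d))
    (c := ν / (2 * ℓ ^ 2)) (by positivity)
  refine ⟨(η / Real.Gamma ν) • H, fun x y => ?_⟩
  rw [maternKernel_eq_integral hν hℓ, scaleMixture, gammaWeight,
    integral_withDensity_eq_integral_toReal_smul (by fun_prop)
      (Eventually.of_forall fun _ => ENNReal.ofReal_lt_top), ← integral_const_mul]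
  refine setIntegral_congr_fun measurableSet_Ioi fun τ hτ => ?_
  have hτ' : (0 : ℝ) < τ := hτ
  simp only [Nat.cast_zero, neg_zero, zero_div, Real.rpow_zero, one_mul, smul_apply,
    smul_eq_mul, hH]
  rw [ENNReal.toReal_ofReal (by positivity), norm_smul, mul_pow, norm_inv, inv_pow,
    Real.norm_of_nonneg (Real.sqrt_nonneg _), Real.sq_sqrt hτ'.le, norm_sub_rev y x,
    show ν / (2 * ℓ ^ 2) * (τ⁻¹ * ‖x - y‖ ^ 2) = ν / (2 * ℓ ^ 2) * ‖x - y‖ ^ 2 / τ by ring]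
  ring

theorem exists_scaleMixture_eq_seKernel (d : ℕ) {η ℓ : ℝ} (hℓ : 0 < ℓ) :
    ∃ H : 𝓢(EuclideanSpace ℝ (Fin d), ℝ), ∀ x y,
      seKernel η ℓ x y = scaleMixture (Measure.dirac 1) x H 0 y := by
  obtain ⟨H, hH⟩ := exists_schwartzMap_gaussian (F := EuclideanSpace ℝ (Fin d))
    (c := 1 / ℓ ^ 2) (by positivity)
  refine ⟨η • H, fun x y => ?_⟩
  rw [seKernel, scaleMixture, integral_dirac]
  simp only [Nat.cast_zero, neg_zero, zero_div, Real.rpow_zero, one_mul, smul_apply,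
    smul_eq_mul, hH, Real.sqrt_one, inv_one, one_smul]
  rw [norm_sub_rev y x]
  congr 2
  ring

theorem continuous_scaleMixture_zero {F : Type*} [NormedAddCommGroup F] [InnerProductSpace ℝ F]
    [MeasurableSpace F] [BorelSpace F] (Λ : Measure ℝ) [IsFiniteMeasure Λ] (x : F) (H : 𝓢(F, ℝ)) :
    Continuous (scaleMixture Λ x H 0) := by
  obtain ⟨C, hC⟩ := H.decay 0 0
  have hC' : ∀ y, ‖H y‖ ≤ C := fun y => by simpa using hC.2 y
  unfold scaleMixture
  simp only [Nat.cast_zero, neg_zero, zero_div, Real.rpow_zero, one_mul]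
  refine continuous_of_dominated (bound := fun _ => C) (fun y => ?_)
    (fun y => Eventually.of_forall fun τ => hC' _) (integrable_const C)
    (Eventually.of_forall fun τ => H.continuous.comp (by fun_prop))
  have hm : Measurable fun τ : ℝ => (√τ)⁻¹ := by fun_prop
  exact ((H.continuous.comp (f := fun t : ℝ => t • (y - x)) (by fun_prop)).measurable.comp
    hm).aestronglyMeasurable

end Kernels

section Pullback

open Set Function Filter
open scoped Topology ENNReal SchwartzMap

variable {s d : ℕ} {U : Set (EuclideanSpace ℝ (Fin s))}
  {G : EuclideanSpace ℝ (Fin s) → EuclideanSpace ℝ (Fin d)}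

theorem continuousOn_euclidean_of_coord {S : Set (EuclideanSpace ℝ (Fin s))}
    (h : ∀ j, ContinuousOn (fun u => G u j) S) : ContinuousOn G S := by
  have h1 : ContinuousOn (fun u => (G u).ofLp) S := continuousOn_pi.2 h
  exact (PiLp.continuous_toLp 2 _).comp_continuousOn h1

theorem measurable_indicator_of_continuousOn (hU : IsOpen U) (hG : ContinuousOn G U) :
    Measurable (U.indicator G) := by
  classical
  rw [← piecewise_eq_indicator]
  exact hG.measurable_piecewise continuousOn_const hU.measurableSet

/-- A lower bound on the density of the base measure and an upper bound on the density of its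
pushforward control Lebesgue integrals of compositions. -/
theorem lintegral_comp_le_of_density {X : Set (EuclideanSpace ℝ (Fin d))} (hU : MeasurableSet U)
    (hX : MeasurableSet X) {𝕌 : Measure (EuclideanSpace ℝ (Fin s))}
    {f𝕌 : EuclideanSpace ℝ (Fin s) → ℝ} (hf𝕌_meas : Measurable f𝕌) {C𝕌 : ℝ} (hC𝕌 : 0 < C𝕌)
    (hf𝕌 : ∀ u ∈ U, C𝕌 ≤ f𝕌 u)
    (h𝕌 : 𝕌 = (volume.restrict U).withDensity fun u => ENNReal.ofReal (f𝕌 u))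
    (hG : Measurable (U.indicator G)) {fP : EuclideanSpace ℝ (Fin d) → ℝ}
    (hfP_meas : Measurable fP) {CP : ℝ} (hfP : ∀ x ∈ X, fP x ≤ CP)
    (hP : Measure.map G 𝕌 = (volume.restrict X).withDensity fun x => ENNReal.ofReal (fP x))
    {φ : EuclideanSpace ℝ (Fin d) → ℝ≥0∞} (hφ : Measurable φ) :
    ∫⁻ u in U, φ (U.indicator G u) ≤
      (ENNReal.ofReal C𝕌)⁻¹ * ENNReal.ofReal CP * ∫⁻ y, φ y := by
  have hC0 : ENNReal.ofReal C𝕌 ≠ 0 := (ENNReal.ofReal_pos.2 hC𝕌).ne'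
  have hae : U.indicator G =ᵐ[𝕌] G := by
    have : ∀ᵐ u ∂𝕌, u ∈ U := by
      rw [h𝕌]
      exact (withDensity_absolutelyContinuous _ _).ae_le (ae_restrict_mem hU)
    filter_upwards [this] with u hu
    exact indicator_of_mem hu G
  have h1 : ∫⁻ u, φ (U.indicator G u) ∂𝕌 = ∫⁻ y in X, ENNReal.ofReal (fP y) * φ y := by
    rw [← lintegral_map hφ hG, Measure.map_congr hae, hP,
      lintegral_withDensity_eq_lintegral_mul _ (by fun_prop) hφ]
    rfl
  have h2 : ∫⁻ y in X, ENNReal.ofReal (fP y) * φ y ≤ ENNReal.ofReal CP * ∫⁻ y, φ y := by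
    rw [← lintegral_const_mul _ hφ]
    refine (setLIntegral_mono' hX fun y hy => ?_).trans (setLIntegral_le_lintegral X _)
    gcongr
    exact hfP y hy
  have h3 : ENNReal.ofReal C𝕌 * ∫⁻ u in U, φ (U.indicator G u) ≤
      ∫⁻ u, φ (U.indicator G u) ∂𝕌 := by
    have hφG : Measurable fun u => φ (U.indicator G u) := hφ.comp hG
    rw [h𝕌, lintegral_withDensity_eq_lintegral_mul _ (by fun_prop) hφG,
      ← lintegral_const_mul _ hφG]
    refine setLIntegral_mono' hU fun u hu => ?_
    simp only [Pi.mul_apply]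
    gcongr
    exact hf𝕌 u hu
  rw [mul_assoc, ← ENNReal.mul_le_iff_le_inv hC0 ENNReal.ofReal_ne_top]
  exact h3.trans (h1.trans_le h2)

/-- A scale mixture composed with a map having bounded partial derivatives lies in the reproducing
kernel Hilbert space of a Matérn kernel of low enough order. -/
theorem memRKHS_scaleMixture_comp (hUb : Bornology.IsBounded U) (hUo : IsOpen U)
    (hUc : Convex ℝ U) (hUne : U.Nonempty) {l : ℕ} (hl : 1 ≤ l)
    (hG : ∀ j : Fin d, HasBoundedPartials U l fun u => G u j) {Cp : ℝ≥0∞} (hCp : Cp ≠ ∞)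
    (hpush : ∀ φ : EuclideanSpace ℝ (Fin d) → ℝ≥0∞, Measurable φ →
      ∫⁻ u in U, φ (U.indicator G u) ≤ Cp * ∫⁻ y, φ y)
    {Λ : Measure ℝ} [SFinite Λ] {ν : ℝ} (hν : 0 ≤ ν) (hΛ0 : ∀ᵐ τ ∂Λ, 0 < τ)
    (hΛ : ∀ p : ℝ, -(ν / 2) ≤ p → Integrable (fun τ : ℝ => τ ^ p) Λ)
    {m : ℕ} (hml : m ≤ l) (hm : (m : ℝ) ≤ ν + (d : ℝ) / 2) (hsm : s < 2 * m)
    {νc ηc ℓc : ℝ} (hνc : 0 < νc) (hηc : 0 < ηc) (hℓc : 0 < ℓc) (hνm : νc + (s : ℝ) / 2 ≤ m)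
    (x : EuclideanSpace ℝ (Fin d)) (H : 𝓢(EuclideanSpace ℝ (Fin d), ℝ)) :
    MemRKHS (fun u v : U => maternKernel νc ηc ℓc (u : EuclideanSpace ℝ (Fin s)) v)
      (fun u : U => scaleMixture Λ x H 0 (G u)) := by
  have hpart := fun j => (hG j).exists_partials hUo hl
  have hGc : ContinuousOn G U := continuousOn_euclidean_of_coord fun j => (hpart j).1
  choose P hP using fun j => (hpart j).2
  have hfin : IsFiniteMeasure Λ := by
    have h0 := hΛ 0 (by linarith)
    simp only [Real.rpow_zero] at h0
    exact (integrable_const_iff_isFiniteMeasure one_ne_zero).1 h0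
  have heq : ∀ j, EqOn (fun u => G u j) (fun u => U.indicator G u j) U := fun j u hu => by
    simp only [indicator_of_mem hu]
  have hsob := sobolevOn_scaleMixture_comp (x₀ := x) (P := fun i j => P j i) hUo hUb
    (measurable_indicator_of_continuousOn hUo hGc) hCp hpush hΛ0 hΛ
    (fun i j u hu => ((hP j i).1 u hu).congr_of_eqOn hUo (heq j) hu)
    (fun i j => (hP j i).2.1) (fun i j => (hP j i).2.2) hml hm m 0 (by omega) H
  have hcont : ContinuousOn (U.indicator fun u => scaleMixture Λ x H 0 (U.indicator G u)) U := by
    refine ((continuous_scaleMixture_zero Λ x H).comp_continuousOn hGc).congr fun u hu => ?_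
    simp only [indicator_of_mem hu, comp_apply]
  obtain ⟨M, hM⟩ := exists_dualNorm_bound_of_convex hUb hUo hUc hUne (by omega)
    (by simpa using hsm) hsob hcont
  have := memRKHS_maternKernel_of_dualNorm_bound hsm hνc hηc hℓc hνm hM
  convert this using 2 with u
  simp only [indicator_of_mem u.2]

end Pullback

theorem pullback_kernel_mem_rkhs
    {s d : ℕ}
    (U : Set (EuclideanSpace ℝ (Fin s))) (X : Set (EuclideanSpace ℝ (Fin d)))
    (hU : Bornology.IsBounded U ∧ IsOpen U ∧ Convex ℝ U)
    (hX : X = Set.univ ∨ (Bornology.IsBounded X ∧ IsOpen X ∧ Convex ℝ X))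
    (𝕌 : Measure (EuclideanSpace ℝ (Fin s))) [IsProbabilityMeasure 𝕌]
    (f𝕌 : EuclideanSpace ℝ (Fin s) → ℝ) (hf𝕌_meas : Measurable f𝕌)
    (C𝕌 C𝕌' : ℝ) (hC𝕌 : 0 < C𝕌) (hC𝕌' : 0 < C𝕌')
    (hf𝕌 : ∀ u ∈ U, f𝕌 u ∈ Set.Icc C𝕌 C𝕌')
    (h𝕌 : 𝕌 = (volume.restrict U).withDensity fun u => ENNReal.ofReal (f𝕌 u))
    (G : EuclideanSpace ℝ (Fin s) → EuclideanSpace ℝ (Fin d))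
    (hG_meas : AEMeasurable G 𝕌) (hG_maps : Set.MapsTo G U X)
    (fP : EuclideanSpace ℝ (Fin d) → ℝ) (hfP_meas : Measurable fP)
    (CP : ℝ) (hfP : ∀ x ∈ X, fP x ≤ CP)
    (hP : Measure.map G 𝕌 = (volume.restrict X).withDensity fun x => ENNReal.ofReal (fP x))
    (l : ℕ) (hl : (s : ℝ) / 2 < l)
    (hG : ∀ j : Fin d, HasBoundedPartials U l fun u => G u j)
    (νc ηc ℓc : ℝ) (hνc : 0 < νc) (hηc : 0 < ηc) (hℓc : 0 < ℓc)
    (k : EuclideanSpace ℝ (Fin d) → EuclideanSpace ℝ (Fin d) → ℝ)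
    (hk : (∃ νk ηk ℓk : ℝ, 0 < νk ∧ 0 < ηk ∧ 0 < ℓk ∧ k = maternKernel νk ηk ℓk ∧
            (s : ℝ) / 2 < (⌊νk + (d : ℝ) / 2⌋₊ : ℝ) ∧
            νc ≤ min (⌊νk + (d : ℝ) / 2⌋₊ : ℝ) (l : ℝ) - (s : ℝ) / 2) ∨
          (∃ ηk ℓk : ℝ, 0 < ηk ∧ 0 < ℓk ∧ k = seKernel ηk ℓk ∧
            νc ≤ (l : ℝ) - (s : ℝ) / 2)) :
    ∀ x ∈ X, MemRKHS (fun u v : U => maternKernel νc ηc ℓc (u : EuclideanSpace ℝ (Fin s)) v)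
      (fun u : U => k x (G u)) := by
  obtain ⟨hUb, hUo, hUc⟩ := hU
  have hUne : U.Nonempty := by
    rw [Set.nonempty_iff_ne_empty]
    rintro rfl
    refine IsProbabilityMeasure.ne_zero 𝕌 ?_
    rw [h𝕌, Measure.restrict_empty, withDensity_zero_left]
  have hXm : MeasurableSet X := by
    rcases hX with rfl | hX
    · exact MeasurableSet.univ
    · exact hX.2.1.measurableSet
  have hl1 : 1 ≤ l := by
    have : (0 : ℝ) < l := lt_of_le_of_lt (by positivity) hl
    exact_mod_cast this
  have hGc : ContinuousOn G U :=
    continuousOn_euclidean_of_coord fun j => ((hG j).exists_partials hUo hl1).1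
  have hpush := fun φ hφ => lintegral_comp_le_of_density (φ := φ) hUo.measurableSet hXm hf𝕌_meas
    hC𝕌 (fun u hu => (hf𝕌 u hu).1) h𝕌 (measurable_indicator_of_continuousOn hUo hGc) hfP_meas hfP
    hP hφ
  have hCp : (ENNReal.ofReal C𝕌)⁻¹ * ENNReal.ofReal CP ≠ ⊤ :=
    ENNReal.mul_ne_top (ENNReal.inv_ne_top.2 (ENNReal.ofReal_pos.2 hC𝕌).ne')
      ENNReal.ofReal_ne_top
  intro x _
  rcases hk with ⟨ν, η, ℓ, hν, -, hℓ, rfl, hsν, hνc'⟩ | ⟨η, ℓ, -, hℓ, rfl, hνc'⟩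
  · obtain ⟨H, hH⟩ := exists_scaleMixture_eq_maternKernel d (η := η) hν hℓ
    simp only [hH x]
    refine memRKHS_scaleMixture_comp (m := min ⌊ν + (d : ℝ) / 2⌋₊ l) hUb hUo hUc hUne hl1 hG hCp
      hpush hν.le (ae_gammaWeight_pos ν) (fun p hp => integrable_rpow_gammaWeight (by linarith))
      (min_le_right _ _) ?_ ?_ hνc hηc hℓc ?_ x H
    · exact (Nat.cast_le.2 (min_le_left _ _)).trans (Nat.floor_le (by positivity))
    · have h1 : (s : ℝ) < 2 * (⌊ν + (d : ℝ) / 2⌋₊ : ℝ) := by linarith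
      have h2 : (s : ℝ) < 2 * (l : ℝ) := by linarith
      have h1' : s < 2 * ⌊ν + (d : ℝ) / 2⌋₊ := by exact_mod_cast h1
      have h2' : s < 2 * l := by exact_mod_cast h2
      omega
    · rw [Nat.cast_min]
      linarith
  · obtain ⟨H, hH⟩ := exists_scaleMixture_eq_seKernel d (η := η) hℓ
    simp only [hH x]
    refine memRKHS_scaleMixture_comp (m := l) (ν := l) hUb hUo hUc hUne hl1 hG hCp hpush
      (by positivity) ?_ ?_ le_rfl ?_ ?_ hνc hηc hℓc (by linarith) x H
    · rw [ae_dirac_eq]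
      exact zero_lt_one (α := ℝ)
    · intro p _
      exact integrable_dirac (by simp)
    · have : (0 : ℝ) ≤ (d : ℝ) / 2 := by positivity
      linarith
    · have h2 : (s : ℝ) < 2 * (l : ℝ) := by linarith
      exact_mod_cast h2
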